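/- For any prime p, there exists a field K such that: (a) there are infinitely many pairwise nonisomorphic central division K-algebras of degree p; and (b) every field extension of K of degree p splits every central division K-algebra of degree p. Consequently any two central division K-algebras of degree p have the same (infinite) genus. -/

import Mathlib

open scoped TensorProduct
universe u

/-- A finite-dimensional `F`-algebra is *split* if it is a matrix algebra over `F`. -/
def IsSplit (F : Type u) [Field F] (A : Type u) [Ring A] [Algebra F A] : Prop :=
  ∃ n : ℕ, 0 < n ∧ Nonempty (A ≃ₐ[F] Matrix (Fin n) (Fin n) F)

/-- Brauer equivalence of two `F`-algebras. -/
def BrauerEquiv (F : Type u) [Field F] (A B : Type u) [Ring A] [Algebra F A]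
    [Ring B] [Algebra F B] : Prop :=
  ∃ n m : ℕ, 0 < n ∧ 0 < m ∧ Nonempty (Matrix (Fin n) (Fin n) A ≃ₐ[F] Matrix (Fin m) (Fin m) B)

/-- `A` is a finite-dimensional central simple `F`-algebra. -/
def IsCSA (F A : Type u) [Field F] [Ring A] [Algebra F A] : Prop :=
  Algebra.IsCentral F A ∧ IsSimpleRing A ∧ FiniteDimensional F A

/-- The `n`-fold tensor power of an `F`-algebra. -/
abbrev tpow (F : Type u) [Field F] (A : Type u) [Ring A] [Algebra F A] (n : ℕ) : Type u :=
  ⨂[F] _ : Fin n, A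

/-- The Brauer class of `A` is killed by `p`: its `p`-th tensor power is split. -/
def IsPTorsion (F : Type u) [Field F] (A : Type u) [Ring A] [Algebra F A] (p : ℕ) : Prop :=
  IsSplit F (tpow F A p)

/-- The restriction map `Br(F)[p] → Br(E)[p]` along `f : F →+* E` is injective:
two `p`-torsion Brauer classes that agree after scalar extension agree already over `F`. -/
def ResInjP (p : ℕ) (F E : Type u) [Field F] [Field E] (f : F →+* E) : Prop :=
  letI : Algebra F E := f.toAlgebra
  ∀ (A B : Type u) [Ring A] [Algebra F A] [Ring B] [Algebra F B],
    IsCSA F A → IsCSA F B → IsPTorsion F A p → IsPTorsion F B p →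
    BrauerEquiv E (E ⊗[F] A) (E ⊗[F] B) → BrauerEquiv F A B

/-- The restriction map `Br(F) → Br(E)` along `f : F →+* E` is injective. -/
def ResInj (F E : Type u) [Field F] [Field E] (f : F →+* E) : Prop :=
  letI : Algebra F E := f.toAlgebra
  ∀ (A B : Type u) [Ring A] [Algebra F A] [Ring B] [Algebra F B],
    IsCSA F A → IsCSA F B →
    BrauerEquiv E (E ⊗[F] A) (E ⊗[F] B) → BrauerEquiv F A B

/-- `D` is a central division algebra of degree `p` over `K`. -/
def IsCentralDivisionOfDeg (K D : Type u) [Field K] [DivisionRing D] [Algebra K D]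
    (p : ℕ) : Prop :=
  Algebra.IsCentral K D ∧ FiniteDimensional K D ∧ Module.finrank K D = p ^ 2

/-- Witness for STATEMENT 12: a field `K` with infinitely many pairwise nonisomorphic
central division `K`-algebras of degree `p`, such that every degree-`p` field extension of
`K` splits every central division `K`-algebra of degree `p`; consequently any two such
algebras have the same (infinite) genus. -/
structure CommonGenusWitness (p : ℕ) : Type (u + 1) where
  K : Type u
  [fieldK : Field K]
  /-- infinitely many pairwise nonisomorphic central division algebras of degree `p` -/
  D : ℕ → Type u
  [divD : ∀ n, DivisionRing (D n)]
  [algD : ∀ n, Algebra K (D n)]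
  hD : ∀ n, IsCentralDivisionOfDeg K (D n) p
  noniso : ∀ n m, n ≠ m → IsEmpty (D n ≃ₐ[K] D m)
  /-- every degree-`p` extension splits every central division algebra of degree `p` -/
  allSplit : ∀ (L : Type u) [Field L] [Algebra K L], Module.finrank K L = p →
    ∀ (B : Type u) [DivisionRing B] [Algebra K B], IsCentralDivisionOfDeg K B p →
      IsSplit L (L ⊗[K] B)
  /-- consequently, any two central division `K`-algebras of degree `p` have the same
  maximal subfields, i.e. the same genus -/
  sameGenus : ∀ (B B' : Type u) [DivisionRing B] [Algebra K B] [DivisionRing B']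
      [Algebra K B'], IsCentralDivisionOfDeg K B p → IsCentralDivisionOfDeg K B' p →
    ∀ (L : Type u) [Field L] [Algebra K L], Module.finrank K L = p →
      (Nonempty (L →ₐ[K] B) ↔ Nonempty (L →ₐ[K] B'))

section Part1
set_option linter.all false
open Polynomial Finset
open scoped TensorProduct

section SymAlg
variable {K : Type*} [Field K]

/-- `c` is a norm from `K[X]/(X^p - ℓ)`. -/
def IsN (p : ℕ) (ζ ℓ c : K) : Prop :=
  ∃ q : K[X], (X ^ p - C ℓ) ∣ (∏ i ∈ range p, q.comp (C (ζ ^ i) * X)) - C c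

/-- symbol relations -/
structure SymRel {A : Type*} [Ring A] [Algebra K A] (p : ℕ) (ζ ℓ c : K) (x y : A) : Prop where
  hx : x ^ p = algebraMap K A ℓ
  hy : y ^ p = algebraMap K A c
  hxy : y * x = ζ • (x * y)

lemma geom_zero {p : ℕ} {ζ : K} (hζ : IsPrimitiveRoot ζ p) (j : ℕ) :
    ∑ k ∈ range p, ζ ^ (j * k) = if p ∣ j then (p : K) else 0 := by
  split_ifs with h
  · obtain ⟨m, rfl⟩ := h
    have : ∀ k ∈ range p, ζ ^ (p * m * k) = 1 := fun k _ => by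
      rw [mul_assoc, pow_mul, hζ.pow_eq_one, one_pow]
    rw [sum_congr rfl this]; simp
  · have h1 : ζ ^ j ≠ 1 := fun h' => h ((hζ.pow_eq_one_iff_dvd j).1 h')
    have h2 : (∑ k ∈ range p, (ζ ^ j) ^ k) * (ζ ^ j - 1) = 0 := by
      rw [geom_sum_mul, ← pow_mul, mul_comm, pow_mul, hζ.pow_eq_one, one_pow, sub_self]
    have h3 := (mul_eq_zero.1 h2).resolve_right (sub_ne_zero.2 h1)
    simpa [pow_mul] using h3

variable {A : Type*} [Ring A] [Algebra K A] {p : ℕ} {ζ ℓ c : K} {x y : A}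

lemma comm_pow1 (h : y * x = ζ • (x * y)) (i : ℕ) : y * x ^ i = ζ ^ i • (x ^ i * y) := by
  induction i with
  | zero => simp
  | succ i ih =>
    rw [pow_succ, ← mul_assoc, ih, smul_mul_assoc, mul_assoc, h, mul_smul_comm, smul_smul,
      ← mul_assoc, pow_succ]

lemma comm_pow (h : y * x = ζ • (x * y)) (i j : ℕ) :
    y ^ j * x ^ i = ζ ^ (i * j) • (x ^ i * y ^ j) := by
  induction j with
  | zero => simp
  | succ j ih =>
    rw [pow_succ, mul_assoc, comm_pow1 h, mul_smul_comm, ← mul_assoc, ih, smul_mul_assoc,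
      smul_smul, mul_assoc, ← pow_add]
    congr 2; ring

lemma comm_aeval (h : y * x = ζ • (x * y)) (q : K[X]) :
    y * aeval x q = aeval x (q.comp (C ζ * X)) * y := by
  induction q using Polynomial.induction_on' with
  | add a b ha hb => simp only [map_add, mul_add, add_comp, add_mul, ha, hb]
  | monomial n a =>
    rw [← C_mul_X_pow_eq_monomial]
    simp only [mul_comp, C_comp, X_pow_comp, map_mul, aeval_C, map_pow, aeval_X]
    rw [← mul_assoc, ← Algebra.commutes a y, mul_assoc, comm_pow1 h, mul_assoc]
    congr 1
    rw [Commute.mul_pow (show Commute (algebraMap K A ζ) x from Algebra.commutes ζ x), ← map_pow, Algebra.smul_def, mul_assoc]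

lemma twist_pow (h : y * x = ζ • (x * y)) (q : K[X]) (n : ℕ) :
    (aeval x q * y) ^ n = aeval x (∏ i ∈ range n, q.comp (C (ζ ^ i) * X)) * y ^ n := by
  induction n with
  | zero => simp
  | succ n ih =>
    have key : ∀ m : ℕ, y ^ m * aeval x q = aeval x (q.comp (C (ζ ^ m) * X)) * y ^ m := by
      intro m
      have := comm_aeval (y := y ^ m) (x := x) (ζ := ζ ^ m) (by simpa using comm_pow h 1 m) q
      exact this
    rw [pow_succ, ih, prod_range_succ, map_mul, mul_assoc, ← mul_assoc (y ^ n), key, pow_succ]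
    simp only [mul_assoc]

/-- averaging over conjugation by `x` -/
lemma avg_x (hζ : IsPrimitiveRoot ζ p) (hx : x ^ p = algebraMap K A ℓ)
    (h : y * x = ζ • (x * y)) (i j : ℕ) :
    ∑ k ∈ range p, x ^ (p - k) * (x ^ i * y ^ j) * x ^ k =
      if p ∣ j then ((p : K) * ℓ) • (x ^ i * y ^ j) else 0 := by
  have : ∀ k ∈ range p, x ^ (p - k) * (x ^ i * y ^ j) * x ^ k =
      (ζ ^ (j * k) * ℓ) • (x ^ i * y ^ j) := by
    intro k hk
    have hk' := (mem_range.1 hk).le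
    rw [mul_assoc, mul_assoc, comm_pow h, mul_smul_comm, mul_smul_comm, ← mul_assoc (x ^ i),
      ← pow_add, ← mul_assoc, ← pow_add, show p - k + (i + k) = p + i by omega, pow_add, hx,
      mul_assoc, ← Algebra.smul_def, smul_smul, mul_comm k]
  rw [sum_congr rfl this, ← sum_smul, ← sum_mul, geom_zero hζ]
  split_ifs <;> simp

lemma avg_y (hζ : IsPrimitiveRoot ζ p) (hy : y ^ p = algebraMap K A c)
    (h : y * x = ζ • (x * y)) (i j : ℕ) :
    ∑ k ∈ range p, y ^ k * (x ^ i * y ^ j) * y ^ (p - k) =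
      if p ∣ i then ((p : K) * c) • (x ^ i * y ^ j) else 0 := by
  have : ∀ k ∈ range p, y ^ k * (x ^ i * y ^ j) * y ^ (p - k) =
      (ζ ^ (i * k) * c) • (x ^ i * y ^ j) := by
    intro k hk
    have hk' := (mem_range.1 hk).le
    rw [← mul_assoc, comm_pow h, smul_mul_assoc, smul_mul_assoc, mul_assoc, mul_assoc,
      ← pow_add, ← pow_add, show k + (j + (p - k)) = j + p by omega, pow_add, hy,
      ← Algebra.commutes, ← Algebra.smul_def, mul_smul_comm, smul_smul]
  rw [sum_congr rfl this, ← sum_smul, ← sum_mul, geom_zero hζ]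
  split_ifs <;> simp

/-- The double averaging operator. -/
def Psi (p : ℕ) (x y w : A) : A :=
  ∑ l ∈ range p, y ^ l * (∑ k ∈ range p, x ^ (p - k) * w * x ^ k) * y ^ (p - l)

lemma Psi_sum {ι : Type*} (s : Finset ι) (f : ι → A) (a : ι → K) :
    Psi p x y (∑ t ∈ s, a t • f t) = ∑ t ∈ s, a t • Psi p x y (f t) := by
  unfold Psi
  simp only [mul_sum, sum_mul, smul_sum, mul_smul_comm, smul_mul_assoc]
  rw [sum_congr rfl (fun l _ => sum_comm), sum_comm]

lemma Psi_mono (hζ : IsPrimitiveRoot ζ p) (h : SymRel p ζ ℓ c x y) (i j : ℕ) :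
    Psi p x y (x ^ i * y ^ j) =
      if p ∣ i ∧ p ∣ j then ((p : K) ^ 2 * ℓ * c) • (x ^ i * y ^ j) else 0 := by
  unfold Psi
  rw [avg_x hζ h.hx h.hxy]
  by_cases hj : p ∣ j
  · simp only [hj, if_true, and_true, mul_smul_comm, smul_mul_assoc, ← smul_sum]
    rw [avg_y hζ h.hy h.hxy]
    split_ifs
    · rw [smul_smul]; congr 1; ring
    · simp
  · simp [hj]

lemma Psi_extract (hp : p.Prime) (hζ : IsPrimitiveRoot ζ p) (h : SymRel p ζ ℓ c x y)
    (a : Fin p × Fin p → K) (t : Fin p × Fin p) :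
    Psi p x y (x ^ (p - t.1.1) * (∑ s, a s • (x ^ s.1.1 * y ^ s.2.1)) * y ^ (p - t.2.1)) =
      algebraMap K A (((p : K) * ℓ * c) ^ 2 * a t) := by
  have e : x ^ (p - t.1.1) * (∑ s, a s • (x ^ s.1.1 * y ^ s.2.1)) * y ^ (p - t.2.1) =
      ∑ s, a s • (x ^ (p - t.1.1 + s.1.1) * y ^ (s.2.1 + (p - t.2.1))) := by
    rw [mul_sum, sum_mul]
    refine sum_congr rfl fun s _ => ?_
    rw [mul_smul_comm, smul_mul_assoc, pow_add, pow_add]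
    simp only [mul_assoc]
  rw [e, Psi_sum, Finset.sum_eq_single t]
  · have h1 : p - t.1.1 + t.1.1 = p := by omega
    have h2 : t.2.1 + (p - t.2.1) = p := by omega
    rw [Psi_mono hζ h, h1, h2, if_pos ⟨dvd_rfl, dvd_rfl⟩, h.hx, h.hy, ← map_mul, smul_smul,
      Algebra.smul_def, ← map_mul]
    congr 1; ring
  · intro s _ hst
    rw [Psi_mono hζ h, if_neg, smul_zero]
    rintro ⟨h1, h2⟩
    apply hst
    have key : ∀ u v : Fin p, p ∣ p - u.1 + v.1 → v = u := by
      intro u v ⟨m, hm⟩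
      have := u.2; have := v.2
      have hm1 : 0 < m := by
        rcases Nat.eq_zero_or_pos m with h0 | h0
        · subst h0; omega
        · exact h0
      have hm2 : m < 2 := by
        by_contra hcon
        have : p * 2 ≤ p * m := Nat.mul_le_mul_left _ (by omega)
        omega
      have : m = 1 := by omega
      subst this
      ext; omega
    exact Prod.ext (key _ _ h1) (key _ _ (by rwa [add_comm] at h2))
  · simp

lemma SymRel.linInd [Nontrivial A] [CharZero K] (hp : p.Prime) (hζ : IsPrimitiveRoot ζ p)
    (h : SymRel p ζ ℓ c x y) (hℓ : ℓ ≠ 0) (hc : c ≠ 0) :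
    LinearIndependent K (fun s : Fin p × Fin p => x ^ s.1.1 * y ^ s.2.1) := by
  rw [Fintype.linearIndependent_iff]
  intro a ha t
  have := Psi_extract hp hζ h a t
  rw [ha, mul_zero, zero_mul] at this
  have h0 : Psi p x y (0 : A) = 0 := by simp [Psi]
  rw [h0] at this
  have h2 : ((p : K) * ℓ * c) ^ 2 * a t = 0 :=
    (algebraMap K A).injective (by rw [← this, map_zero])
  have hp0 : (p : K) ≠ 0 := by exact_mod_cast hp.ne_zero
  simpa [hp0, hℓ, hc] using h2

/-- Spanning by the monomials. -/
def Spans (K : Type*) [Field K] {A : Type*} [Ring A] [Algebra K A] (p : ℕ) (x y : A) : Prop :=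
  ∀ w : A, ∃ a : Fin p × Fin p → K, w = ∑ s, a s • (x ^ s.1.1 * y ^ s.2.1)

lemma SymRel.central [Nontrivial A] [CharZero K] (hp : p.Prime) (hζ : IsPrimitiveRoot ζ p)
    (h : SymRel p ζ ℓ c x y) (hℓ : ℓ ≠ 0) (hc : c ≠ 0) (hs : Spans K p x y) :
    Algebra.IsCentral K A := by
  constructor
  intro w hw
  have hw' : ∀ v, w * v = v * w := fun v => ((Subalgebra.mem_center_iff.1 hw v)).symm
  have hp0 : (p : K) ≠ 0 := by exact_mod_cast hp.ne_zero
  have e1 : Psi p x y w = ((p : K) ^ 2 * ℓ * c) • w := by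
    unfold Psi
    have : ∀ k ∈ range p, x ^ (p - k) * w * x ^ k = ℓ • w := by
      intro k hk
      rw [mul_assoc, hw', ← mul_assoc, ← pow_add, Nat.sub_add_cancel (mem_range.1 hk).le, h.hx,
        ← Algebra.smul_def]
    rw [sum_congr rfl this, sum_const, card_range]
    have : ∀ l ∈ range p, y ^ l * (p • ℓ • w) * y ^ (p - l) = (p * ℓ * c) • w := by
      intro k hk
      rw [mul_smul_comm, mul_smul_comm, smul_mul_assoc, smul_mul_assoc, mul_assoc, hw', ← mul_assoc,
        ← pow_add, Nat.add_sub_cancel' (mem_range.1 hk).le, h.hy, ← Algebra.smul_def,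
        ← Nat.cast_smul_eq_nsmul K, smul_smul, smul_smul, mul_assoc]
    rw [sum_congr rfl this, sum_const, card_range, ← Nat.cast_smul_eq_nsmul K, smul_smul]
    congr 1; ring
  obtain ⟨a, ha⟩ := hs w
  have e2 : Psi p x y w = ((p : K) ^ 2 * ℓ * c) •
      ∑ s : Fin p × Fin p, (if p ∣ s.1.1 ∧ p ∣ s.2.1 then a s • (1 : A) else 0) := by
    conv_lhs => rw [ha]
    rw [Psi_sum, smul_sum]
    refine sum_congr rfl fun s _ => ?_
    rw [Psi_mono hζ h]
    split_ifs with hh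
    · have h1 : s.1.1 = 0 := Nat.eq_zero_of_dvd_of_lt hh.1 s.1.2
      have h2 : s.2.1 = 0 := Nat.eq_zero_of_dvd_of_lt hh.2 s.2.2
      rw [h1, h2]; simp only [pow_zero, mul_one]; rw [smul_comm]
    · simp
  have e3 := e1.symm.trans e2
  have hne : ((p : K) ^ 2 * ℓ * c) ≠ 0 := by simp [hp0, hℓ, hc]
  have e4 := smul_right_injective A hne e3
  rw [Algebra.mem_bot, e4]
  refine ⟨∑ s : Fin p × Fin p, (if p ∣ s.1.1 ∧ p ∣ s.2.1 then a s else 0), ?_⟩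
  rw [map_sum]
  refine sum_congr rfl fun s _ => ?_
  split_ifs <;> simp [Algebra.algebraMap_eq_smul_one]

lemma SymRel.simple [Nontrivial A] [CharZero K] (hp : p.Prime) (hζ : IsPrimitiveRoot ζ p)
    (h : SymRel p ζ ℓ c x y) (hℓ : ℓ ≠ 0) (hc : c ≠ 0) (hs : Spans K p x y) :
    IsSimpleRing A := by
  have hp0 : (p : K) ≠ 0 := by exact_mod_cast hp.ne_zero
  refine ⟨⟨fun I => ?_⟩⟩
  by_cases hI : I = ⊥
  · exact Or.inl hI
  · right
    obtain ⟨w, hw, hw0⟩ : ∃ w ∈ I, w ≠ 0 := by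
      by_contra hcon
      push Not at hcon
      apply hI
      ext w
      simp only [TwoSidedIdeal.mem_bot]
      exact ⟨fun h => hcon w h, fun h => h ▸ I.zero_mem⟩
    obtain ⟨a, ha⟩ := hs w
    obtain ⟨t, ht⟩ : ∃ t, a t ≠ 0 := by
      by_contra hcon
      push Not at hcon
      exact hw0 (by rw [ha]; simp [hcon])
    have hmem : ∀ v ∈ I, Psi p x y v ∈ I := by
      intro v hv
      unfold Psi
      refine I.finsetSum_mem _ _ fun l _ => I.mul_mem_right _ _ (I.mul_mem_left _ _ ?_)
      exact I.finsetSum_mem _ _ fun k _ => I.mul_mem_right _ _ (I.mul_mem_left _ _ hv)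
    have h1 := hmem _ (I.mul_mem_right _ (y ^ (p - t.2.1)) (I.mul_mem_left (x ^ (p - t.1.1)) _ hw))
    rw [ha, Psi_extract hp hζ h] at h1
    have hne : (((p : K) * ℓ * c) ^ 2 * a t) ≠ 0 := by simp [hp0, hℓ, hc, ht]
    have h2 := I.mul_mem_left (algebraMap K A (((p : K) * ℓ * c) ^ 2 * a t)⁻¹) _ h1
    rw [← map_mul, inv_mul_cancel₀ hne, map_one] at h2
    rw [eq_top_iff]
    intro z _
    have := I.mul_mem_left z _ h2
    rwa [mul_one] at this

end SymAlg

end Part1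

section Part2
set_option linter.all false
open Polynomial Finset
open scoped TensorProduct

section Eig
variable {K : Type*} [Field K] {A : Type*} [Ring A] [Algebra K A] {p : ℕ} {ζ ℓ c : K} {x y x' : A}

/-- eigen-components -/
def Eig (p : ℕ) (ζ : K) (x x' β : A) (i : ℕ) : A :=
  ∑ k ∈ range p, ζ ^ (i * k) • (x' ^ k * β * x ^ (p - k))

lemma Eig_comm (hζ : ζ ^ p = 1) (hx : x ^ p = algebraMap K A ℓ) (hx' : x' ^ p = algebraMap K A ℓ)
    (β : A) (i : ℕ) : Eig p ζ x x' β i * x = ζ ^ i • (x' * Eig p ζ x x' β i) := by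
  have e1 : Eig p ζ x x' β i * x = ∑ k ∈ range p, ζ ^ (i * k) • (x' ^ k * β * x ^ (p + 1 - k)) := by
    unfold Eig
    rw [sum_mul]
    refine sum_congr rfl fun k hk => ?_
    have := mem_range.1 hk
    rw [smul_mul_assoc, mul_assoc, ← pow_succ, show p - k + 1 = p + 1 - k by omega]
  have e2 : ζ ^ i • (x' * Eig p ζ x x' β i) =
      ∑ k ∈ range p, ζ ^ (i * (k + 1)) • (x' ^ (k + 1) * β * x ^ (p + 1 - (k + 1))) := by
    unfold Eig
    rw [mul_sum, smul_sum]
    refine sum_congr rfl fun k hk => ?_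
    rw [mul_smul_comm, smul_smul, ← pow_add, ← mul_assoc, ← mul_assoc, ← pow_succ']
    congr 2
    · ring
    · congr 1; omega
  rw [e1, e2]
  have h1 := Finset.sum_range_succ' (fun k => ζ ^ (i * k) • (x' ^ k * β * x ^ (p + 1 - k))) p
  rw [Finset.sum_range_succ] at h1
  have h2 : ζ ^ (i * p) • (x' ^ p * β * x ^ (p + 1 - p)) =
      ζ ^ (i * 0) • (x' ^ 0 * β * x ^ (p + 1 - 0)) := by
    rw [mul_comm i p, pow_mul, hζ, one_pow, hx', show p + 1 - p = 1 by omega]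
    simp only [mul_zero, pow_zero, one_smul, one_mul, pow_one, Nat.sub_zero]
    rw [pow_succ, hx, ← mul_assoc, Algebra.commutes]
  rw [h2] at h1
  exact add_right_cancel h1

lemma Eig_sum (hζ : IsPrimitiveRoot ζ p) (hp : 0 < p) (hx : x ^ p = algebraMap K A ℓ) (β : A) :
    ∑ i ∈ range p, Eig p ζ x x' β i = ((p : K) * ℓ) • β := by
  unfold Eig
  rw [sum_comm]
  have : ∀ k ∈ range p, ∑ i ∈ range p, ζ ^ (i * k) • (x' ^ k * β * x ^ (p - k)) =
      if k = 0 then ((p : K) * ℓ) • β else 0 := by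
    intro k hk
    rw [← sum_smul]
    simp_rw [mul_comm _ k]
    rw [geom_zero hζ]
    split_ifs with h1 h2 h2
    · subst h2
      simp only [pow_zero, one_mul, Nat.sub_zero]
      rw [hx, ← Algebra.commutes, ← Algebra.smul_def, smul_smul]
    · exact absurd (Nat.eq_zero_of_dvd_of_lt h1 (mem_range.1 hk)) h2
    · subst h2; simp at h1
    · simp
  rw [sum_congr rfl this]
  simp [hp.ne']

end Eig

section Div
variable {K : Type*} [Field K] {p : ℕ} {ζ ℓ c : K}

lemma not_pow_of_div {B : Type*} [DivisionRing B] [Algebra K B] (hp : p.Prime)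
    (hζ : IsPrimitiveRoot ζ p) {x : B} (hx : x ^ p = algebraMap K B ℓ)
    (hxK : ∀ r : K, x ≠ algebraMap K B r) (r : K) : r ^ p ≠ ℓ := by
  rintro rfl
  have hinteg : IsIntegral K x := ⟨X ^ p - C (r ^ p), monic_X_pow_sub_C _ hp.ne_zero, by
    simp [hx]⟩
  have h1 : minpoly K x ∣ X ^ p - C (r ^ p) := minpoly.dvd _ _ (by simp [hx])
  rw [X_pow_sub_C_eq_prod hζ hp.pos rfl] at h1
  obtain ⟨i, hi, h2⟩ := (minpoly.prime hinteg).exists_mem_finset_dvd h1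
  have h3 : minpoly K x = X - C (ζ ^ i * r) :=
    eq_of_monic_of_associated (minpoly.monic hinteg) (monic_X_sub_C _)
      ((minpoly.irreducible hinteg).associated_of_dvd (irreducible_X_sub_C _) h2)
  have := minpoly.aeval K x
  rw [h3] at this
  simp only [map_sub, aeval_X, aeval_C, sub_eq_zero] at this
  exact hxK _ this

lemma minpoly_eq_of_not_pow {B : Type*} [Ring B] [Nontrivial B] [Algebra K B] (hp : p.Prime)
    {x : B} (hx : x ^ p = algebraMap K B ℓ) (hℓ : ∀ r : K, r ^ p ≠ ℓ) :
    minpoly K x = X ^ p - C ℓ :=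
  ((minpoly.eq_of_irreducible_of_monic (X_pow_sub_C_irreducible_of_prime hp hℓ)
    (by simp [hx]) (monic_X_pow_sub_C _ hp.ne_zero))).symm

lemma SymRel.spans {A : Type*} [Ring A] [Nontrivial A] [Algebra K A] [CharZero K] (hp : p.Prime)
    (hζ : IsPrimitiveRoot ζ p) {x y : A}
    (h : SymRel p ζ ℓ c x y) (hℓ : ℓ ≠ 0) (hc : c ≠ 0) (hf : Module.finrank K A = p ^ 2) :
    Spans K p x y := by
  haveI : Nonempty (Fin p × Fin p) := ⟨⟨⟨0, hp.pos⟩, ⟨0, hp.pos⟩⟩⟩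
  let b := basisOfLinearIndependentOfCardEqFinrank (h.linInd hp hζ hℓ hc)
    (by rw [hf]; simp [sq])
  intro w
  refine ⟨fun s => b.repr w s, ?_⟩
  conv_lhs => rw [← b.sum_repr w]
  simp [b]

lemma Spans.finrank {A : Type*} [Ring A] [Nontrivial A] [Algebra K A] [CharZero K] (hp : p.Prime)
    (hζ : IsPrimitiveRoot ζ p) {x y : A}
    (h : SymRel p ζ ℓ c x y) (hℓ : ℓ ≠ 0) (hc : c ≠ 0) (hs : Spans K p x y) :
    Module.finrank K A = p ^ 2 := by
  have b := Module.Basis.mk (h.linInd hp hζ hℓ hc) (by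
    intro w _
    obtain ⟨a, rfl⟩ := hs w
    exact Submodule.sum_mem _ fun s _ => Submodule.smul_mem _ _ (Submodule.subset_span ⟨s, rfl⟩))
  rw [Module.finrank_eq_card_basis b]; simp [sq]

/-- B2 -/
lemma exists_symbol {B : Type*} [DivisionRing B] [Algebra K B] [CharZero K] (hp : p.Prime)
    (hζ : IsPrimitiveRoot ζ p) [Algebra.IsCentral K B] (hf : Module.finrank K B = p ^ 2)
    {x : B} (hx : x ^ p = algebraMap K B ℓ)
    (hxK : ∀ r : K, x ≠ algebraMap K B r) :
    ∃ (y : B) (c : K), c ≠ 0 ∧ SymRel p ζ ℓ c x y := by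
  have hp0 : (p : K) ≠ 0 := by exact_mod_cast hp.ne_zero
  have hx0 : x ≠ 0 := fun h => hxK 0 (by simp [h])
  have hℓ : ℓ ≠ 0 := by
    rintro rfl
    rw [map_zero] at hx
    exact hx0 (pow_eq_zero_iff hp.ne_zero |>.1 hx)
  have hcen : ∀ w : B, (∀ v, v * w = w * v) → ∃ r : K, w = algebraMap K B r := by
    intro w hw
    have h1 : w ∈ Subalgebra.center K B := Subalgebra.mem_center_iff.2 hw
    rw [Algebra.IsCentral.center_eq_bot, Algebra.mem_bot] at h1
    obtain ⟨r, hr⟩ := h1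
    exact ⟨r, hr.symm⟩
  obtain ⟨β, hβ⟩ : ∃ β : B, β * x ≠ x * β := by
    by_contra hcon
    push Not at hcon
    obtain ⟨r, hr⟩ := hcen x hcon
    exact hxK r hr
  obtain ⟨i, hi0, hip, hi⟩ : ∃ i, i ≠ 0 ∧ i < p ∧ Eig p ζ x x β i ≠ 0 := by
    by_contra hcon
    push Not at hcon
    have h1 := Eig_sum (x' := x) hζ hp.pos hx β
    rw [Finset.sum_eq_single 0 (fun i hi h0 => hcon i h0 (mem_range.1 hi))
      (fun h => absurd (mem_range.2 hp.pos) h)] at h1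
    have h2 := Eig_comm hζ.pow_eq_one hx hx β 0
    rw [h1, pow_zero, one_smul, smul_mul_assoc, mul_smul_comm] at h2
    exact hβ (smul_right_injective B (mul_ne_zero hp0 hℓ) h2)
  obtain ⟨m, hm⟩ : ∃ m : ℕ, ζ ^ (i * m) = ζ := by
    have hcop : Nat.Coprime i p :=
      ((Nat.Prime.coprime_iff_not_dvd hp).2 fun h =>
        hi0 (Nat.eq_zero_of_dvd_of_lt h hip)).symm
    obtain ⟨m, hm⟩ := Nat.exists_mul_mod_eq_one_of_coprime hcop hp.one_lt
    refine ⟨m, ?_⟩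
    rw [← Nat.mod_add_div (i * m) p, hm.2, pow_add, pow_mul, hζ.pow_eq_one, one_pow, pow_one, mul_one]
  set y : B := Eig p ζ x x β i ^ m with hy
  have hy0 : y ≠ 0 := pow_ne_zero _ hi
  have hyx : y * x = ζ • (x * y) := by
    have := comm_pow (Eig_comm hζ.pow_eq_one hx hx β i) 1 m
    rwa [one_mul, ← pow_mul, hm, pow_one, ← hy] at this
  have hmin := minpoly_eq_of_not_pow hp hx (not_pow_of_div hp hζ hx hxK)
  -- independence
  have hli : LinearIndependent K (fun s : Fin p × Fin p => x ^ s.1.1 * y ^ s.2.1) := by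
    rw [Fintype.linearIndependent_iff]
    intro a ha t
    have h1 : ∑ k ∈ range p, x ^ (p - k) *
        ((∑ s : Fin p × Fin p, a s • (x ^ s.1.1 * y ^ s.2.1)) * y ^ (p - t.2.1)) * x ^ k =
        ∑ s : Fin p × Fin p, a s • (if p ∣ s.2.1 + (p - t.2.1) then
          ((p : K) * ℓ) • (x ^ s.1.1 * y ^ (s.2.1 + (p - t.2.1))) else 0) := by
      simp_rw [← avg_x hζ hx hyx, sum_mul, mul_sum, sum_mul, smul_sum]
      rw [sum_comm]
      refine sum_congr rfl fun s _ => sum_congr rfl fun k _ => ?_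
      rw [pow_add]
      simp only [smul_mul_assoc, mul_smul_comm, mul_assoc]
    have hdvd : ∀ s : Fin p × Fin p, p ∣ s.2.1 + (p - t.2.1) ↔ s.2 = t.2 := by
      intro s
      have h1 := s.2.2; have h2 := t.2.2
      constructor
      · rintro ⟨m, hm⟩
        have hm1 : 0 < m := by
          rcases Nat.eq_zero_or_pos m with h0 | h0
          · subst h0; omega
          · exact h0
        have hm2 : m < 2 := by
          by_contra hcon
          have : p * 2 ≤ p * m := Nat.mul_le_mul_left _ (by omega)
          omega
        have : m = 1 := by omega
        subst this
        ext; omega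
      · rintro h; rw [h]; exact ⟨1, by omega⟩
    rw [ha] at h1
    simp only [zero_mul, mul_zero, sum_const_zero, hdvd] at h1
    rw [Fintype.sum_prod_type] at h1
    simp only [smul_ite, smul_zero, Finset.sum_ite_eq', Finset.sum_ite_eq, mem_univ, if_true] at h1
    rw [show t.2.1 + (p - t.2.1) = p by omega] at h1
    have h2 : (∑ i : Fin p, a (i, t.2) • x ^ i.1) * (((p : K) * ℓ) • y ^ p) = 0 := by
      rw [h1, sum_mul]
      refine sum_congr rfl fun i _ => ?_
      rw [smul_mul_assoc, mul_smul_comm]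
    have h3 := (mul_eq_zero.1 h2).resolve_right (by
      rw [Algebra.smul_def]
      exact mul_ne_zero (by rw [Ne, map_eq_zero]; exact mul_ne_zero hp0 hℓ) (pow_ne_zero _ hy0))
    have h4 := linearIndependent_pow (K := K) x
    rw [Fintype.linearIndependent_iff] at h4
    have hdeg : (minpoly K x).natDegree = p := by rw [hmin, natDegree_X_pow_sub_C]
    have h5 := h4 (fun i => a (Fin.cast hdeg i, t.2)) (by
      rw [← h3]
      exact Fintype.sum_equiv (finCongr hdeg) _ _ (fun i => by simp))
    simpa using h5 (Fin.cast hdeg.symm t.1)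
  haveI : Nonempty (Fin p × Fin p) := ⟨⟨⟨0, hp.pos⟩, ⟨0, hp.pos⟩⟩⟩
  let b := basisOfLinearIndependentOfCardEqFinrank hli (by rw [hf]; simp [sq])
  have hcomm : ∀ w, w * y ^ p = y ^ p * w := by
    intro w
    rw [← b.sum_repr w, sum_mul, mul_sum]
    refine sum_congr rfl fun s _ => ?_
    simp only [b, coe_basisOfLinearIndependentOfCardEqFinrank]
    rw [smul_mul_assoc, mul_smul_comm, ← mul_assoc, comm_pow hyx, mul_comm s.1.1, pow_mul,
      hζ.pow_eq_one, one_pow, one_smul, mul_assoc, mul_assoc, ← pow_add, ← pow_add, add_comm p]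
  obtain ⟨c, hc⟩ := hcen _ hcomm
  refine ⟨y, c, ?_, hx, hc, hyx⟩
  rintro rfl
  rw [map_zero] at hc
  exact hy0 (pow_eq_zero_iff hp.ne_zero |>.1 hc)

/-- B3 -/
lemma SymRel.hom {A : Type*} [Ring A] [Nontrivial A] [Algebra K A] [CharZero K] (hp : p.Prime)
    (hζ : IsPrimitiveRoot ζ p) {x y : A}
    (h : SymRel p ζ ℓ c x y) (hℓ : ℓ ≠ 0) (hc : c ≠ 0) (hs : Spans K p x y)
    {A' : Type*} [Ring A'] [Algebra K A'] {x' y' : A'} (h' : SymRel p ζ ℓ c x' y') :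
    ∃ f : A →ₐ[K] A', f x = x' ∧ f y = y' := by
  let b := Module.Basis.mk (h.linInd hp hζ hℓ hc) (by
    intro w _
    obtain ⟨a, rfl⟩ := hs w
    exact Submodule.sum_mem _ fun s _ => Submodule.smul_mem _ _ (Submodule.subset_span ⟨s, rfl⟩))
  have hb : ∀ s, b s = x ^ s.1.1 * y ^ s.2.1 := fun s => by simp [b]
  let f := b.constr K (fun s => x' ^ s.1.1 * y' ^ s.2.1)
  have hf0 : ∀ s : Fin p × Fin p, f (x ^ s.1.1 * y ^ s.2.1) = x' ^ s.1.1 * y' ^ s.2.1 := by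
    intro s
    rw [← hb]; simp [f]
  have red : ∀ {R : Type _} [Ring R] [Algebra K R] {u v : R}, SymRel p ζ ℓ c u v → ∀ n m : ℕ,
      u ^ n * v ^ m = (ℓ ^ (n / p) * c ^ (m / p)) • (u ^ (n % p) * v ^ (m % p)) := by
    intro R _ _ u v hh n m
    conv_lhs => rw [← Nat.mod_add_div n p, ← Nat.div_add_mod m p, pow_add, pow_add, pow_mul, pow_mul, hh.hx, hh.hy]
    rw [← map_pow, ← map_pow, ← Algebra.commutes, mul_assoc, ← Algebra.smul_def, ← mul_assoc (u ^ _),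
      ← Algebra.commutes, mul_assoc, ← Algebra.smul_def, smul_smul]
  have red' : ∀ n m : ℕ,
      x' ^ n * y' ^ m = (ℓ ^ (n / p) * c ^ (m / p)) • (x' ^ (n % p) * y' ^ (m % p)) := by
    intro n m
    conv_lhs => rw [← Nat.mod_add_div n p, ← Nat.div_add_mod m p, pow_add, pow_add, pow_mul, pow_mul, h'.hx, h'.hy]
    rw [← map_pow, ← map_pow, ← Algebra.commutes, mul_assoc, ← Algebra.smul_def, ← mul_assoc (x' ^ _),
      ← Algebra.commutes, mul_assoc, ← Algebra.smul_def, smul_smul]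
  have hf : ∀ n m : ℕ, f (x ^ n * y ^ m) = x' ^ n * y' ^ m := by
    intro n m
    rw [red h, map_smul, red' n m]
    congr 1
    exact hf0 (⟨n % p, Nat.mod_lt _ hp.pos⟩, ⟨m % p, Nat.mod_lt _ hp.pos⟩)
  have hmul : ∀ u v, f (u * v) = f u * f v := by
    have : (LinearMap.mul K A).compr₂ f = (LinearMap.mul K A').compl₁₂ f f := by
      refine b.ext fun s => b.ext fun t => ?_
      simp only [LinearMap.compr₂_apply, LinearMap.mul_apply', LinearMap.compl₁₂_apply, hb, hf]
      have e : ∀ {R : Type _} [Ring R] [Algebra K R] {u v : R}, SymRel p ζ ℓ c u v →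
          u ^ s.1.1 * v ^ s.2.1 * (u ^ t.1.1 * v ^ t.2.1) =
          ζ ^ (t.1.1 * s.2.1) • (u ^ (s.1.1 + t.1.1) * v ^ (s.2.1 + t.2.1)) := by
        intro R _ _ u v hh
        rw [mul_assoc, ← mul_assoc (v ^ _), comm_pow hh.hxy, smul_mul_assoc, mul_smul_comm, pow_add,
          pow_add]
        simp only [mul_assoc]
      have e' : x' ^ s.1.1 * y' ^ s.2.1 * (x' ^ t.1.1 * y' ^ t.2.1) =
          ζ ^ (t.1.1 * s.2.1) • (x' ^ (s.1.1 + t.1.1) * y' ^ (s.2.1 + t.2.1)) := by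
        rw [mul_assoc, ← mul_assoc (y' ^ _), comm_pow h'.hxy, smul_mul_assoc, mul_smul_comm, pow_add,
          pow_add]
        simp only [mul_assoc]
      rw [e h, map_smul, hf, e']
    intro u v
    have := congrArg (fun g => g u v) this
    simpa using this
  refine ⟨AlgHom.ofLinearMap f ?_ hmul, ?_, ?_⟩
  · simpa using hf 0 0
  · simpa using hf 1 0
  · simpa using hf 0 1

/-- Lemma S -/
lemma isN_of_module {V : Type*} [AddCommGroup V] [Module K V] (hp : p.Prime)
    (hV : Module.finrank K V = p) {P Q : Module.End K V} {d : K} (hℓ : ∀ r : K, r ^ p ≠ ℓ)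
    (h : SymRel p ζ ℓ d P Q) : IsN p ζ ℓ d := by
  have hirr := X_pow_sub_C_irreducible_of_prime hp hℓ
  haveI : Nontrivial V := Module.nontrivial_of_finrank_pos (R := K) (by rw [hV]; exact hp.pos)
  haveI : FiniteDimensional K V := Module.finite_of_finrank_pos (by rw [hV]; exact hp.pos)
  obtain ⟨v, hv⟩ := exists_ne (0 : V)
  have hker : ∀ q : K[X], aeval P q v = 0 → (X ^ p - C ℓ) ∣ q := by
    intro q hq
    by_contra hcon
    obtain ⟨a, b, hab⟩ := (EuclideanDomain.dvd_or_coprime _ q hirr).resolve_left hcon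
    have h1 : aeval P (a * (X ^ p - C ℓ) + b * q) v = v := by rw [hab]; simp
    rw [map_add, map_mul, map_mul] at h1
    simp [h.hx, hq] at h1
    exact hv h1.symm
  let φ : K[X] →ₗ[K] V := (LinearMap.applyₗ v).comp (aeval P).toLinearMap
  have hφ : ∀ q, φ q = aeval P q v := fun q => rfl
  have hsurj : ∃ q : K[X], aeval P q v = Q v := by
    have hinj : Function.Injective (φ.comp (degreeLT K p).subtype) := by
      rw [← LinearMap.ker_eq_bot, LinearMap.ker_eq_bot']
      intro q hq
      have h1 := hker q.1 hq
      have h2 : q.1.degree < p := mem_degreeLT.1 q.2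
      ext1
      refine eq_zero_of_dvd_of_degree_lt h1 ?_
      rwa [degree_X_pow_sub_C hp.pos]
    have hfr : Module.finrank K (degreeLT K p) = Module.finrank K V := by
      rw [hV, (degreeLTEquiv K p).finrank_eq]; simp
    haveI : FiniteDimensional K (degreeLT K p) := (degreeLTEquiv K p).symm.finiteDimensional
    have := (LinearMap.injective_iff_surjective_of_finrank_eq_finrank hfr).1 hinj
    obtain ⟨q, hq⟩ := this (Q v)
    exact ⟨q.1, hq⟩
  obtain ⟨q, hq⟩ := hsurj
  refine ⟨q, hker _ ?_⟩
  have key : ∀ n : ℕ, (Q ^ n) v = aeval P (∏ i ∈ range n, q.comp (C (ζ ^ i) * X)) v := by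
    intro n
    induction n with
    | zero => simp
    | succ n ih =>
      have h1 := comm_aeval (y := Q ^ n) (x := P) (ζ := ζ ^ n) (by simpa using comm_pow h.hxy 1 n) q
      rw [pow_succ, Module.End.mul_apply, ← hq, ← Module.End.mul_apply, h1, Module.End.mul_apply,
        ih, ← Module.End.mul_apply, ← map_mul, prod_range_succ, mul_comm]
  rw [map_sub, LinearMap.sub_apply, ← key, h.hy]
  simp

end Div

end Part2

section Part3
set_option linter.all false
open Polynomial Finset
open scoped TensorProduct

section Tw
variable {p : ℕ}

lemma twist_exists {F : Type*} [Field F] (hp : p.Prime) (c ω : F) (hω : ω ^ p = 1) :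
    ∃ P T : Matrix (Fin p) (Fin p) F, P ^ p = algebraMap F _ c ∧ T ^ p = 1 ∧
      T * P = ω • (P * T) := by
  set f : F[X] := X ^ p - C c with hf
  have hmon : f.Monic := monic_X_pow_sub_C _ hp.ne_zero
  have hroot : (AdjoinRoot.root f) ^ p = algebraMap F _ c := by
    have := AdjoinRoot.eval₂_root f
    rw [hf] at this
    simp only [eval₂_sub, eval₂_X_pow, eval₂_C, sub_eq_zero] at this
    exact this
  let P0 : Module.End F (AdjoinRoot f) := Algebra.lmul F _ (AdjoinRoot.root f)
  let t : AdjoinRoot f →ₐ[F] AdjoinRoot f := AdjoinRoot.liftAlgHom f (Algebra.ofId F _)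
    (ω • AdjoinRoot.root f) (by
      rw [hf]
      simp only [eval₂_sub, eval₂_X_pow, eval₂_C, sub_eq_zero]
      rw [_root_.smul_pow, hω, one_smul]; exact hroot)
  have ht : t (AdjoinRoot.root f) = ω • AdjoinRoot.root f := by simp [t]
  let T0 : Module.End F (AdjoinRoot f) := t.toLinearMap
  have hT0 : ∀ n : ℕ, T0 ^ n = (t ^ n).toLinearMap := by
    intro n
    induction n with
    | zero => rfl
    | succ n ih => rw [pow_succ, ih, pow_succ]; rfl
  have htn : ∀ n : ℕ, (t ^ n) (AdjoinRoot.root f) = ω ^ n • AdjoinRoot.root f := by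
    intro n
    induction n with
    | zero => simp
    | succ n ih => rw [pow_succ, AlgHom.mul_apply, ht, map_smul, ih, smul_smul, ← pow_succ']
  have htp : t ^ p = 1 := by
    apply AdjoinRoot.algHom_ext
    rw [htn, hω, one_smul]; rfl
  have hTp : T0 ^ p = 1 := by rw [hT0, htp]; rfl
  have hPp : P0 ^ p = algebraMap F _ c := by
    simp only [P0]
    rw [← map_pow, hroot, AlgHom.commutes]
  have hTP : T0 * P0 = ω • (P0 * T0) := by
    ext w
    simp [T0, P0, ht]
  let b := (AdjoinRoot.powerBasis' hmon).basis
  have hd : (AdjoinRoot.powerBasis' hmon).dim = p := by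
    rw [AdjoinRoot.powerBasis'_dim, hf, natDegree_X_pow_sub_C]
  let b' := b.reindex (finCongr hd)
  let e := LinearMap.toMatrixAlgEquiv b'
  refine ⟨e P0, e T0, ?_, ?_, ?_⟩
  · rw [← map_pow, hPp, AlgEquiv.commutes]
  · rw [← map_pow, hTp, map_one]
  · rw [← map_mul, hTP, map_smul, map_mul]

variable {K : Type u} [Field K] {ζ : K}

lemma isN_of_matrix {ℓ d : K} (hp : p.Prime) (hℓ : ∀ r : K, r ^ p ≠ ℓ)
    {P Q : Matrix (Fin p) (Fin p) K} (h : SymRel p ζ ℓ d P Q) : IsN p ζ ℓ d := by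
  refine isN_of_module (V := Fin p → K) hp (by simp) (P := Matrix.toLinAlgEquiv' P)
    (Q := Matrix.toLinAlgEquiv' Q) hℓ ⟨?_, ?_, ?_⟩
  · rw [← map_pow, h.hx, AlgEquiv.commutes]
  · rw [← map_pow, h.hy, AlgEquiv.commutes]
  · rw [← map_mul, h.hxy, map_smul, map_mul]

lemma isN_swap {ℓ d : K} (hp : p.Prime) (hζ : ζ ^ p = 1) (hℓ : ℓ ≠ 0)
    (hd : ∀ r : K, r ^ p ≠ d) (h : IsN p ζ ℓ d) : IsN p ζ d ℓ⁻¹ := by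
  obtain ⟨q, hq⟩ := h
  obtain ⟨P, T, hP, hT, hTP⟩ := twist_exists hp ℓ ζ hζ
  have hQp : (aeval P q * T) ^ p = algebraMap K _ d := by
    rw [twist_pow hTP, hT, mul_one]
    obtain ⟨g, hg⟩ := hq
    have : ∏ i ∈ range p, q.comp (C (ζ ^ i) * X) = (X ^ p - C ℓ) * g + C d := by rw [← hg]; ring
    rw [this]
    simp [hP]
  set Q := aeval P q * T with hQ
  have hQP : Q * P = ζ • (P * Q) := by
    have hc : aeval P q * P = P * aeval P q := by
      have := (Polynomial.aeval_X (R := K) P)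
      conv_lhs => rw [← this]
      conv_rhs => rw [← this]
      simp only [aeval_X]
      rw [show aeval P q * P = aeval P (q * X) by simp, show P * aeval P q = aeval P (X * q) by simp,
        mul_comm]
    rw [hQ, mul_assoc, hTP, mul_smul_comm, ← mul_assoc, hc, mul_assoc]
  refine isN_of_matrix hp hd (P := Q) (Q := ℓ⁻¹ • P ^ (p - 1)) ⟨hQp, ?_, ?_⟩
  · rw [_root_.smul_pow, ← pow_mul, mul_comm, pow_mul, hP, ← map_pow, Algebra.smul_def, ← map_mul]
    congr 1
    rw [← pow_sub_one_mul hp.ne_zero ℓ⁻¹, inv_pow]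
    field_simp
  · have := comm_pow1 hQP (p - 1)
    rw [smul_mul_assoc, mul_smul_comm, this, smul_comm ζ, smul_smul ζ, ← pow_succ',
      Nat.sub_add_cancel hp.one_le, hζ, one_smul]

/-- splitting -/
lemma split_of_root [CharZero K] (hp : p.Prime) (hζ : IsPrimitiveRoot ζ p)
    {B : Type u} [DivisionRing B] [Algebra K B] [Algebra.IsCentral K B]
    (hf : Module.finrank K B = p ^ 2) {l : K} {x : B} (hx : x ^ p = algebraMap K B l)
    (hxK : ∀ r : K, x ≠ algebraMap K B r) (L : Type u) [Field L] [Algebra K L] {θ : L}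
    (hθ : θ ^ p = algebraMap K L l) : IsSplit L (L ⊗[K] B) := by
  obtain ⟨y, c, hc, hs⟩ := exists_symbol hp hζ hf hx hxK
  haveI : CharZero L := charZero_of_injective_algebraMap (algebraMap K L).injective
  have hx0 : x ≠ 0 := fun h => hxK 0 (by simp [h])
  have hl : l ≠ 0 := by
    rintro rfl
    rw [map_zero] at hx
    exact hx0 (pow_eq_zero_iff hp.ne_zero |>.1 hx)
  have hζL : IsPrimitiveRoot (algebraMap K L ζ) p := hζ.map_of_injective (algebraMap K L).injective
  obtain ⟨P, T, hP, hT, hTP⟩ := twist_exists hp (algebraMap K L c) (algebraMap K L ζ)⁻¹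
    (by rw [inv_pow, hζL.pow_eq_one, inv_one])
  have hL : SymRel p (algebraMap K L ζ) (algebraMap K L l) (algebraMap K L c) (θ • T) P := by
    refine ⟨?_, hP, ?_⟩
    · rw [_root_.smul_pow, hT, hθ, Algebra.algebraMap_eq_smul_one (A := Matrix (Fin p) (Fin p) L)]
    · rw [smul_mul_assoc, hTP, mul_smul_comm, smul_comm θ, smul_smul, mul_inv_cancel₀, one_smul]
      exact hζL.ne_zero hp.ne_zero
  have hK : SymRel p ζ l c (θ • T) P := by
    refine ⟨hL.hx.trans ?_, hL.hy.trans ?_, ?_⟩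
    · rw [← IsScalarTower.algebraMap_apply]
    · rw [← IsScalarTower.algebraMap_apply]
    · rw [hL.hxy, algebraMap_smul]
  haveI : Nonempty (Fin p) := ⟨⟨0, hp.pos⟩⟩
  have hfM : Module.finrank L (Matrix (Fin p) (Fin p) L) = p ^ 2 := by
    rw [Module.finrank_matrix]; simp [sq]
  have hspan := hL.spans hp hζL (by simpa using hl) (by simpa using hc) hfM
  obtain ⟨f, hfx, hfy⟩ := hs.hom hp hζ hl hc (hs.spans hp hζ hl hc hf) hK
  let g : L ⊗[K] B →ₐ[L] Matrix (Fin p) (Fin p) L :=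
    Algebra.TensorProduct.lift (Algebra.ofId L _) f (fun a b => Algebra.commutes _ _)
  have hg : ∀ b, g (1 ⊗ₜ b) = f b := fun b => by
    refine (Algebra.TensorProduct.lift_tmul _ _ _ _ _).trans ?_
    rw [map_one, one_mul]
  have hsurj : Function.Surjective g := by
    intro w
    obtain ⟨a, rfl⟩ := hspan w
    refine ⟨∑ s, a s • (1 ⊗ₜ (x ^ s.1.1 * y ^ s.2.1)), ?_⟩
    rw [map_sum]
    refine sum_congr rfl fun s _ => ?_
    rw [map_smul, hg, map_mul, map_pow, map_pow, hfx, hfy]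
  have hfin : FiniteDimensional K B :=
    Module.finite_of_finrank_pos (by rw [hf]; exact pow_pos hp.pos 2)
  have hinj : Function.Injective g := by
    have := (LinearMap.injective_iff_surjective_of_finrank_eq_finrank (f := g.toLinearMap)
      (by rw [hfM, Module.finrank_baseChange, hf])).2 hsurj
    exact this
  exact ⟨p, hp.pos, ⟨AlgEquiv.ofBijective g ⟨hinj, hsurj⟩⟩⟩

/-- comparison of symbol presentations -/
lemma isN_div [CharZero K] (hp : p.Prime) (hζ : IsPrimitiveRoot ζ p)
    {B : Type u} [DivisionRing B] [Algebra K B]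
    (hf : Module.finrank K B = p ^ 2) {α b b' : K} (hα : ∀ r : K, r ^ p ≠ α) (hb : b ≠ 0)
    (hb' : b' ≠ 0)
    {x y x' y' : B} (h : SymRel p ζ α b x y) (h' : SymRel p ζ α b' x' y') :
    IsN p ζ α (b' / b) := by
  have hp0 : (p : K) ≠ 0 := by exact_mod_cast hp.ne_zero
  have hα0 : α ≠ 0 := fun h0 => hα 0 (by rw [h0, zero_pow hp.ne_zero])
  have hx0 : x ≠ 0 := by
    rintro rfl
    have := h.hx
    rw [zero_pow hp.ne_zero] at this
    exact hα0 (by simpa using this.symm)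
  have hy0 : y ≠ 0 := by
    rintro rfl
    have := h.hy
    rw [zero_pow hp.ne_zero] at this
    exact hb (by simpa using this.symm)
  obtain ⟨i, hip, hi⟩ : ∃ i, i < p ∧ Eig p ζ x x' 1 i ≠ 0 := by
    by_contra hcon
    push Not at hcon
    have h1 := Eig_sum (x' := x') hζ hp.pos h.hx 1
    rw [Finset.sum_eq_zero (fun i hi => hcon i (mem_range.1 hi))] at h1
    rw [Algebra.smul_def, mul_one, eq_comm, map_eq_zero] at h1
    exact mul_ne_zero hp0 hα0 h1
  set ε := Eig p ζ x x' 1 i with hε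
  have hεx : ε * x = ζ ^ i • (x' * ε) := Eig_comm hζ.pow_eq_one h.hx h'.hx 1 i
  set β := ε * y ^ (p - i) with hβ
  have hβ0 : β ≠ 0 := mul_ne_zero hi (pow_ne_zero _ hy0)
  have hβx : β * x = x' * β := by
    have h1 := comm_pow h.hxy 1 (p - i)
    rw [pow_one, one_mul] at h1
    rw [hβ, mul_assoc, h1, mul_smul_comm, ← mul_assoc, hεx, smul_mul_assoc, smul_smul, ← pow_add,
      Nat.sub_add_cancel hip.le, hζ.pow_eq_one, one_smul, mul_assoc]
  clear_value β
  set Y := β⁻¹ * y' * β with hY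
  have hxβ : x * β⁻¹ = β⁻¹ * x' := by
    rw [mul_inv_eq_iff_eq_mul₀ hβ0, mul_assoc, ← hβx, ← mul_assoc, inv_mul_cancel₀ hβ0, one_mul]
  have hYx : Y * x = ζ • (x * Y) := by
    rw [hY, mul_assoc, hβx, ← mul_assoc, mul_assoc β⁻¹, h'.hxy, mul_smul_comm, smul_mul_assoc,
      ← mul_assoc β⁻¹ x' y', ← hxβ]
    simp only [mul_assoc]
  have hYp : Y ^ p = algebraMap K B b' := by
    have : ∀ n : ℕ, Y ^ n = β⁻¹ * y' ^ n * β := by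
      intro n
      induction n with
      | zero => simp [hβ0]
      | succ n ih =>
        rw [pow_succ, ih, hY, pow_succ]
        simp only [mul_assoc]
        rw [mul_inv_cancel_left₀ hβ0]
    rw [this, h'.hy, ← Algebra.commutes, mul_assoc, inv_mul_cancel₀ hβ0, mul_one]
  set w := Y * y⁻¹ with hw
  have hζ0 : ζ ≠ 0 := hζ.ne_zero hp.ne_zero
  have hyx : y⁻¹ * x = ζ⁻¹ • (x * y⁻¹) := by
    rw [inv_mul_eq_iff_eq_mul₀ hy0, mul_smul_comm, ← mul_assoc, h.hxy, smul_mul_assoc, smul_smul,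
      inv_mul_cancel₀ hζ0, one_smul, mul_assoc, mul_inv_cancel₀ hy0, mul_one]
  have hwx : w * x = x * w := by
    rw [hw, mul_assoc, hyx, mul_smul_comm, ← mul_assoc, hYx, smul_mul_assoc, smul_smul,
      inv_mul_cancel₀ hζ0, one_smul, mul_assoc]
  obtain ⟨q, hq⟩ : ∃ q : K[X], w = aeval x q := by
    obtain ⟨a, ha⟩ := h.spans hp hζ hα0 hb hf w
    have e1 : ∑ k ∈ range p, x ^ (p - k) * w * x ^ k = ((p : K) * α) • w := by
      have : ∀ k ∈ range p, x ^ (p - k) * w * x ^ k = α • w := by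
        intro k hk
        have hc : Commute w x := hwx
        rw [mul_assoc, (hc.pow_right k).eq, ← mul_assoc, ← pow_add,
          Nat.sub_add_cancel (mem_range.1 hk).le, h.hx, ← Algebra.smul_def]
      rw [sum_congr rfl this, sum_const, card_range, ← Nat.cast_smul_eq_nsmul K, smul_smul]
    have e2 : ∑ k ∈ range p, x ^ (p - k) * w * x ^ k = ∑ s : Fin p × Fin p,
        a s • (if p ∣ s.2.1 then ((p : K) * α) • (x ^ s.1.1 * y ^ s.2.1) else 0) := by
      simp_rw [← avg_x hζ h.hx h.hxy]
      rw [ha]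
      simp_rw [mul_sum, sum_mul, smul_sum]
      rw [sum_comm]
      simp only [smul_mul_assoc, mul_smul_comm]
    refine ⟨C ((p : K) * α)⁻¹ * ∑ s : Fin p × Fin p,
      (if p ∣ s.2.1 then C (a s * ((p : K) * α)) * X ^ s.1.1 else 0), ?_⟩
    rw [map_mul, aeval_C, ← Algebra.smul_def, eq_inv_smul_iff₀ (mul_ne_zero hp0 hα0), ← e1, e2,
      map_sum]
    refine sum_congr rfl fun s _ => ?_
    split_ifs with hh
    · rw [Nat.eq_zero_of_dvd_of_lt hh s.2.2]
      simp only [map_mul, aeval_C, map_pow, aeval_X, pow_zero, mul_one, Algebra.smul_def, mul_assoc]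
    · simp
  have hYq : Y = aeval x q * y := by rw [← hq, hw, mul_assoc, inv_mul_cancel₀ hy0, mul_one]
  refine ⟨q, ?_⟩
  rw [← minpoly_eq_of_not_pow hp h.hx hα]
  apply minpoly.dvd
  have h1 := twist_pow h.hxy q p
  rw [← hYq, hYp, h.hy] at h1
  rw [map_sub, aeval_C, map_div₀, h1, mul_div_assoc, div_self, mul_one, sub_self]
  simpa using hb


/-- one by one matrices -/
def mat1 (K D : Type u) [Field K] [DivisionRing D] [Algebra K D] :
    Matrix (Fin 1) (Fin 1) D ≃ₐ[K] D where
  toFun M := M 0 0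
  invFun d := Matrix.of fun _ _ => d
  left_inv M := by
    ext i j
    rw [Subsingleton.elim i 0, Subsingleton.elim j 0]; rfl
  right_inv d := rfl
  map_mul' M N := by simp [Matrix.mul_apply]
  map_add' M N := rfl
  commutes' r := by simp [Matrix.algebraMap_matrix_apply]

lemma exists_div [CharZero K] (hp : p.Prime) (hζ : IsPrimitiveRoot ζ p) {α b : K}
    (hα : ∀ r : K, r ^ p ≠ α) (hb : b ≠ 0) (hN : ¬ IsN p ζ α b) :
    ∃ (D : Type u) (_ : DivisionRing D) (_ : Algebra K D), Algebra.IsCentral K D ∧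
      FiniteDimensional K D ∧ Module.finrank K D = p ^ 2 ∧ ∃ x y : D, SymRel p ζ α b x y := by
  have hα0 : α ≠ 0 := fun h0 => hα 0 (by rw [h0, zero_pow hp.ne_zero])
  haveI : Fact (Irreducible (X ^ p - C α)) := ⟨X_pow_sub_C_irreducible_of_prime hp hα⟩
  let L := AdjoinRoot (X ^ p - C α)
  let θ : L := AdjoinRoot.root (X ^ p - C α)
  have hθ : θ ^ p = algebraMap K L α := by
    have := AdjoinRoot.eval₂_root (X ^ p - C α)
    simp only [eval₂_sub, eval₂_X_pow, eval₂_C, sub_eq_zero] at this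
    exact this
  have hζL : IsPrimitiveRoot (algebraMap K L ζ) p := hζ.map_of_injective (algebraMap K L).injective
  obtain ⟨P, T, hP, hT, hTP⟩ := twist_exists hp (algebraMap K L b) (algebraMap K L ζ)⁻¹
    (by rw [inv_pow, hζL.pow_eq_one, inv_one])
  have hL : SymRel p (algebraMap K L ζ) (algebraMap K L α) (algebraMap K L b) (θ • T) P := by
    refine ⟨?_, hP, ?_⟩
    · rw [_root_.smul_pow, hT, hθ, Algebra.algebraMap_eq_smul_one (A := Matrix (Fin p) (Fin p) L)]
    · rw [smul_mul_assoc, hTP, mul_smul_comm, smul_comm θ, smul_smul, mul_inv_cancel₀, one_smul]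
      exact hζL.ne_zero hp.ne_zero
  have hK : SymRel p ζ α b (θ • T) P := by
    refine ⟨hL.hx.trans ?_, hL.hy.trans ?_, ?_⟩
    · rw [← IsScalarTower.algebraMap_apply]
    · rw [← IsScalarTower.algebraMap_apply]
    · rw [hL.hxy, algebraMap_smul]
  haveI : Nonempty (Fin p) := ⟨⟨0, hp.pos⟩⟩
  generalize θ • T = x at hK
  clear hL hTP hT hP T
  let M := Matrix (Fin p) (Fin p) L
  let A : Subalgebra K M := Algebra.adjoin K {x, P}
  let x₁ : A := ⟨x, Algebra.subset_adjoin (by simp)⟩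
  let y₁ : A := ⟨P, Algebra.subset_adjoin (by simp)⟩
  have h1 : SymRel p ζ α b x₁ y₁ :=
    ⟨Subtype.ext hK.hx, Subtype.ext hK.hy, Subtype.ext hK.hxy⟩
  have hspan : Spans K p x₁ y₁ := by
    have hred : ∀ n m : ℕ, x ^ n * P ^ m ∈ Submodule.span K
        (Set.range fun s : Fin p × Fin p => x ^ s.1.1 * P ^ s.2.1) := by
      intro n m
      have : x ^ n * P ^ m =
          (α ^ (n / p) * b ^ (m / p)) • (x ^ (n % p) * P ^ (m % p)) := by
        conv_lhs => rw [← Nat.mod_add_div n p, ← Nat.div_add_mod m p, pow_add, pow_add, pow_mul, pow_mul, hK.hx, hK.hy]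
        rw [← map_pow, ← map_pow, ← Algebra.commutes, mul_assoc, ← Algebra.smul_def, ← mul_assoc (x ^ _),
          ← Algebra.commutes, mul_assoc, ← Algebra.smul_def, smul_smul]
      rw [this]
      refine Submodule.smul_mem _ _ (Submodule.subset_span
        ⟨(⟨n % p, Nat.mod_lt _ hp.pos⟩, ⟨m % p, Nat.mod_lt _ hp.pos⟩), rfl⟩)
    have hmul : Submodule.span K (Set.range fun s : Fin p × Fin p => x ^ s.1.1 * P ^ s.2.1) *
        Submodule.span K (Set.range fun s : Fin p × Fin p => x ^ s.1.1 * P ^ s.2.1) ≤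
        Submodule.span K (Set.range fun s : Fin p × Fin p => x ^ s.1.1 * P ^ s.2.1) := by
      rw [Submodule.span_mul_span, Submodule.span_le]
      rintro _ ⟨_, ⟨s, rfl⟩, _, ⟨t, rfl⟩, rfl⟩
      simp only [SetLike.mem_coe]
      rw [mul_assoc, ← mul_assoc (P ^ _), comm_pow hK.hxy, smul_mul_assoc, mul_smul_comm,
        mul_assoc, ← pow_add, ← mul_assoc, ← pow_add]
      exact Submodule.smul_mem _ _ (hred _ _)
    rintro ⟨w, hw⟩
    have hw' : w ∈ Submodule.span K (Set.range fun s : Fin p × Fin p => x ^ s.1.1 * P ^ s.2.1) := by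
      induction hw using Algebra.adjoin_induction with
      | mem z hz =>
        rcases hz with rfl | rfl
        · simpa using hred 1 0
        · simpa using hred 0 1
      | algebraMap r =>
        rw [Algebra.algebraMap_eq_smul_one]
        exact Submodule.smul_mem _ _ (by simpa using hred 0 0)
      | add u v _ _ hu hv => exact Submodule.add_mem _ hu hv
      | mul u v _ _ hu hv => exact hmul (Submodule.mul_mem_mul hu hv)
    obtain ⟨a, ha⟩ := (Submodule.mem_span_range_iff_exists_fun K).1 hw'
    refine ⟨a, Subtype.ext ?_⟩
    refine ha.symm.trans ?_
    simp [x₁, y₁]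
  haveI hcen := h1.central hp hζ hα0 hb hspan
  haveI hsim := h1.simple hp hζ hα0 hb hspan
  have hfr := Spans.finrank hp hζ h1 hα0 hb hspan
  haveI : FiniteDimensional K A :=
    Module.finite_of_finrank_pos (by rw [hfr]; exact pow_pos hp.pos 2)
  haveI : IsArtinianRing A := IsArtinianRing.of_finite K A
  obtain ⟨n, hn, D, hD, hDK, hDf, ⟨e⟩⟩ :=
    IsSimpleRing.exists_algEquiv_matrix_divisionRing_finite K A
  have hnn : n * n * Module.finrank K D = p ^ 2 := by
    rw [← hfr, e.toLinearEquiv.finrank_eq, Module.finrank_matrix]; simp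
  have hnp : n ∣ p := by
    rw [← Nat.pow_dvd_pow_iff (n := 2) two_ne_zero, ← hnn, sq]
    exact dvd_mul_right _ _
  rcases (Nat.dvd_prime hp).1 hnp with rfl | rfl
  · let e' : A ≃ₐ[K] D := e.trans (mat1 K D)
    refine ⟨D, hD, hDK, ?_, hDf, by simpa using hnn, e' x₁, e' y₁, ?_, ?_, ?_⟩
    · exact Algebra.IsCentral.of_algEquiv K A D e'
    · rw [← map_pow, h1.hx, AlgEquiv.commutes]
    · rw [← map_pow, h1.hy, AlgEquiv.commutes]
    · rw [← map_mul, h1.hxy, map_smul, map_mul]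
  · exfalso
    apply hN
    have hD1 : Module.finrank K D = 1 := by
      have : n * n * Module.finrank K D = n * n * 1 := by rw [hnn]; ring
      exact Nat.eq_of_mul_eq_mul_left (Nat.mul_pos hp.pos hp.pos) this
    have hbij : Function.Bijective (Algebra.ofId K D) := by
      refine ⟨(algebraMap K D).injective, ?_⟩
      intro d
      obtain ⟨r, hr⟩ := (finrank_eq_one_iff_of_nonzero' (1 : D) one_ne_zero).1 hD1 d
      exact ⟨r, by rw [← hr, Algebra.ofId_apply, Algebra.algebraMap_eq_smul_one]⟩
    let e' : A ≃ₐ[K] Matrix (Fin n) (Fin n) K :=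
      e.trans (AlgEquiv.mapMatrix (AlgEquiv.ofBijective _ hbij).symm)
    refine isN_of_matrix hp hα (P := e' x₁) (Q := e' y₁) ⟨?_, ?_, ?_⟩
    · rw [← map_pow, h1.hx, AlgEquiv.commutes]
    · rw [← map_pow, h1.hy, AlgEquiv.commutes]
    · rw [← map_mul, h1.hxy, map_smul, map_mul]
end Tw

end Part3

section Part4
set_option linter.all false
open Polynomial Finset
open scoped TensorProduct

/-- The properties of the base field that are used. -/
structure GoodK (p : ℕ) (K : Type u) [Field K] where
  cz : CharZero K
  ζ : K
  hζ : IsPrimitiveRoot ζ p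
  α : K
  b : ℕ → K
  hb : ∀ n, b n ≠ 0
  hb0 : b 0 = 1
  hα : ∀ r : K, r ^ p ≠ α
  hN : ∀ n m, n ≠ m → ¬ IsN p ζ α (b n / b m)
  K1 : ∀ (L : Type u) [Field L] [Algebra K L], Module.finrank K L = p →
    ∃ (θ : L) (l : K), θ ^ p = algebraMap K L l ∧ ∀ r : K, θ ≠ algebraMap K L r
  K2 : ∀ ℓ c : K, (∀ r : K, r ^ p ≠ ℓ) → c ≠ 0 → IsN p ζ ℓ c ∨
    (∃ r : K[X], X ^ p - C ℓ ∣ r ^ p - C α) ∨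
    (∃ (N : Type u) (_ : Field N) (_ : Algebra K N) (μ lam z : N) (τ : N →ₐ[K] N),
      Module.finrank K N = p ^ 2 ∧ μ ^ p = algebraMap K N α ∧ lam ^ p = algebraMap K N ℓ ∧
      τ μ = μ ∧ τ lam = ζ • lam ∧ (∀ v, (τ ^ p) v = v) ∧ ∏ i ∈ range p, (τ ^ i) z = algebraMap K N c)
  K3 : ∀ l b : K, (∀ r : K, r ^ p ≠ l) → b ≠ 0 → (∃ r : K[X], X ^ p - C α ∣ r ^ p - C l) ∨
    ∃ t : K, IsN p ζ (l / α) (b * (t ^ p - α))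

section
variable {p : ℕ} {K : Type u} [Field K]

lemma prod_sub_root {ζ : K} (hζ : IsPrimitiveRoot ζ p) (hp : 0 < p) (t : K) :
    ∏ i ∈ range p, (C t - X : K[X]).comp (C (ζ ^ i) * X) = C (t ^ p) - X ^ p := by
  have h1 : IsPrimitiveRoot (C ζ : K[X]) p := hζ.map_of_injective C_injective
  have h2 := X_pow_sub_C_eq_prod h1 hp (a := (X : K[X]) ^ p) (α := X) rfl
  have h3 := congrArg (eval (C t)) h2
  rw [eval_prod] at h3
  simp only [eval_sub, eval_pow, eval_X, eval_C] at h3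
  rw [C_pow, h3]
  refine prod_congr rfl fun i _ => ?_
  simp

lemma ne_zero_of_not_pow (hp : p.Prime) {l : K} (h : ∀ r : K, r ^ p ≠ l) : l ≠ 0 :=
  fun h0 => h 0 (by rw [h0, zero_pow hp.ne_zero])

variable {B : Type u} [DivisionRing B] [Algebra K B]

lemma not_scalar_of_comm {ζ : K} (hp : p.Prime) (hζ : IsPrimitiveRoot ζ p) {x y : B} (hx : x ≠ 0)
    (hy : y ≠ 0) (h : y * x = ζ • (x * y)) (r : K) : y ≠ algebraMap K B r := by
  intro hr
  have h1 : y * x = x * y := by rw [hr, Algebra.commutes]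
  rw [h1] at h
  have h2 : (ζ - 1) • (x * y) = 0 := by rw [sub_smul, ← h, one_smul, sub_self]
  rcases smul_eq_zero.1 h2 with h3 | h3
  · exact hζ.ne_one hp.one_lt (sub_eq_zero.1 h3)
  · exact mul_ne_zero hx hy h3

lemma exists_deg_p_sub (hp : p.Prime) [Algebra.IsCentral K B] (hf : Module.finrank K B = p ^ 2) :
    ∃ (L : Type u) (_ : Field L) (_ : Algebra K L) (f : L →ₐ[K] B), Module.finrank K L = p := by
  haveI hfin : FiniteDimensional K B :=
    Module.finite_of_finrank_pos (by rw [hf]; exact pow_pos hp.pos 2)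
  have hp2 : p ^ 2 ≠ 1 := by
    have := hp.one_lt
    nlinarith
  obtain ⟨x, hx⟩ : ∃ x : B, ∀ r, x ≠ algebraMap K B r := by
    by_contra hcon
    push Not at hcon
    apply hp2
    rw [← hf]
    refine finrank_eq_one (1 : B) one_ne_zero fun w => ?_
    obtain ⟨r, hr⟩ := hcon w
    exact ⟨r, by rw [hr, Algebra.algebraMap_eq_smul_one]⟩
  have hinteg : IsIntegral K x := Algebra.IsIntegral.isIntegral x
  have hirr := minpoly.irreducible hinteg
  let I := Ideal.span {minpoly K x}
  haveI hmax : I.IsMaximal := PrincipalIdealRing.isMaximal_of_irreducible hirr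
  letI : Field (K[X] ⧸ I) := Ideal.Quotient.field I
  let f : (K[X] ⧸ I) →ₐ[K] B := Ideal.Quotient.liftₐ I (aeval x) (by
    intro a ha
    obtain ⟨g, rfl⟩ := Ideal.mem_span_singleton.1 ha
    simp)
  have hfx : f (Ideal.Quotient.mk I X) = x := by
    exact (Ideal.Quotient.lift_mk I _ _).trans (aeval_X x)
  refine ⟨K[X] ⧸ I, inferInstance, inferInstance, f, ?_⟩
  letI : Module (K[X] ⧸ I) B := Module.compHom B f.toRingHom
  haveI : IsScalarTower K (K[X] ⧸ I) B := ⟨fun a b c => by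
    change f (a • b) * c = a • (f b * c)
    rw [map_smul, smul_mul_assoc]⟩
  have hmul := Module.finrank_mul_finrank K (K[X] ⧸ I) B
  rw [hf] at hmul
  have hdvd : Module.finrank K (K[X] ⧸ I) ∣ p ^ 2 := ⟨_, hmul.symm⟩
  obtain ⟨k, hk, hk'⟩ := (Nat.dvd_prime_pow hp).1 hdvd
  haveI : FiniteDimensional K (K[X] ⧸ I) :=
    Module.finite_of_finrank_pos (by rw [hk']; exact pow_pos hp.pos _)
  interval_cases k
  · exfalso
    rw [pow_zero] at hk'
    obtain ⟨r, hr⟩ := (finrank_eq_one_iff_of_nonzero' (1 : K[X] ⧸ I) one_ne_zero).1 hk'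
      (Ideal.Quotient.mk I X)
    apply hx r
    rw [← hfx, ← hr, map_smul, map_one, Algebra.algebraMap_eq_smul_one]
  · simpa using hk'
  · exfalso
    have hsurj : Function.Surjective f :=
      (LinearMap.injective_iff_surjective_of_finrank_eq_finrank (f := f.toLinearMap)
        (by rw [hk', hf])).1 f.toRingHom.injective
    have hcen : x ∈ Subalgebra.center K B := by
      rw [Subalgebra.mem_center_iff]
      intro w
      obtain ⟨v, rfl⟩ := hsurj w
      rw [← hfx, ← map_mul, mul_comm, map_mul]
    rw [Algebra.IsCentral.center_eq_bot, Algebra.mem_bot] at hcen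
    obtain ⟨r, hr⟩ := hcen
    exact hx r hr.symm

lemma GoodK.root_alpha (G : GoodK p K) (hp : p.Prime) [Algebra.IsCentral K B]
    (hf : Module.finrank K B = p ^ 2) : ∃ x : B, x ^ p = algebraMap K B G.α := by
  haveI := G.cz
  obtain ⟨L, _, _, f, hL⟩ := exists_deg_p_sub hp hf
  obtain ⟨θ, ℓ, hθ, hθK⟩ := G.K1 L hL
  obtain ⟨x, hx, hxK⟩ : ∃ x : B, x ^ p = algebraMap K B ℓ ∧ ∀ r, x ≠ algebraMap K B r := by
    refine ⟨f θ, by rw [← map_pow, hθ, AlgHom.commutes], fun r hr => hθK r ?_⟩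
    apply f.toRingHom.injective
    change f θ = f _
    rw [hr, AlgHom.commutes]
  have hℓ := not_pow_of_div hp G.hζ hx hxK
  have hℓ0 := ne_zero_of_not_pow hp hℓ
  obtain ⟨y, c, hc, h⟩ := exists_symbol hp G.hζ hf hx hxK
  have hx0 : x ≠ 0 := fun h => hxK 0 (by simp [h])
  have hy0 : y ≠ 0 := by
    rintro rfl
    have := h.hy
    rw [zero_pow hp.ne_zero] at this
    exact hc (by simpa using this.symm)
  have hae : ∀ q r : K[X], (X ^ p - C ℓ) ∣ q - r → aeval x q = aeval x r := by
    rintro q r ⟨g, hg⟩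
    rw [← sub_eq_zero, ← map_sub, hg, map_mul]
    simp [hx]
  rcases G.K2 ℓ c hℓ hc with ⟨q, hq⟩ | ⟨r, hr⟩ | ⟨N, _, _, μ, lam, z, τ, hN, hμ, hlam, hτμ, hτlam, hτp, hz⟩
  · exfalso
    have h1 := hae _ _ hq
    rw [aeval_C] at h1
    have hg0 : aeval x q ≠ 0 := by
      intro h0
      rw [prod_range_eq_mul_Ico _ hp.pos] at h1
      simp only [pow_zero, map_one, one_mul, comp_X, map_mul, h0, zero_mul] at h1
      exact hc (by simpa using h1.symm)
    set g := aeval x q with hg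
    have hgx : Commute g x := by
      have : g * x = x * g := by
        rw [hg, show aeval x q * x = aeval x (q * X) by simp,
          show x * aeval x q = aeval x (X * q) by simp, mul_comm]
      exact this
    have hgx' : g⁻¹ * x = x * g⁻¹ := (hgx.inv_left₀).eq
    set W := g⁻¹ * y with hW
    have hWx : W * x = G.ζ • (x * W) := by
      rw [hW, mul_assoc, h.hxy, mul_smul_comm, ← mul_assoc, hgx', mul_assoc]
    have hW0 : W ≠ 0 := mul_ne_zero (inv_ne_zero hg0) hy0
    have h2 := twist_pow hWx q p
    rw [h1, ← hg, hW, mul_inv_cancel_left₀ hg0, h.hy, ← hW] at h2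
    have h3 : W ^ p = algebraMap K B 1 := by
      have hc' : algebraMap K B c ≠ 0 := by simpa using hc
      rw [map_one]
      exact mul_left_cancel₀ hc' (by rw [← h2, mul_one])
    exact not_pow_of_div hp G.hζ h3 (not_scalar_of_comm hp G.hζ hx0 hW0 hWx) 1 (one_pow p)
  · refine ⟨aeval x r, ?_⟩
    have := hae _ _ hr
    rw [map_pow, aeval_C] at this
    exact this
  · let P : Module.End K N := Algebra.lmul K N lam
    let T : Module.End K N := Algebra.lmul K N z * τ.toLinearMap
    have hP : P ^ p = algebraMap K _ ℓ := by
      simp only [P]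
      rw [← map_pow, hlam, AlgHom.commutes]
    have hTv : ∀ v, T v = z * τ v := fun v => rfl
    have hTn : ∀ (n : ℕ) v, (T ^ n) v = (∏ i ∈ range n, (τ ^ i) z) * (τ ^ n) v := by
      intro n
      induction n with
      | zero => intro v; simp
      | succ n ih =>
        intro v
        rw [pow_succ, Module.End.mul_apply, hTv, ih, map_mul, prod_range_succ, pow_succ,
          AlgHom.mul_apply, mul_assoc]
    have hT : T ^ p = algebraMap K _ c := by
      ext v
      rw [hTn, hz, hτp, Module.algebraMap_end_apply, Algebra.smul_def]
    have hTP : T * P = G.ζ • (P * T) := by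
      ext v
      simp only [Module.End.mul_apply, LinearMap.smul_apply, hTv]
      simp only [P, Algebra.coe_lmul_eq_mul, LinearMap.mul_apply', map_mul, hτlam]
      simp only [smul_mul_assoc, mul_smul_comm]
      congr 1; ring
    have hspan := h.spans hp G.hζ hℓ0 hc hf
    obtain ⟨ρ, hρx, hρy⟩ := h.hom hp G.hζ hℓ0 hc hspan (⟨hP, hT, hTP⟩ : SymRel p G.ζ ℓ c P T)
    have hcomm : ∀ (w : B) (v : N), ρ w (μ * v) = μ * ρ w v := by
      intro w v
      obtain ⟨a, rfl⟩ := hspan w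
      have hTn' : ∀ (n : ℕ) v, (T ^ n) (μ * v) = μ * (T ^ n) v := by
        intro n
        induction n with
        | zero => intro v; simp
        | succ n ih =>
          intro v
          rw [pow_succ, Module.End.mul_apply (T ^ n) T, Module.End.mul_apply (T ^ n) T, hTv, map_mul τ,
            hτμ, hTv, mul_left_comm, ih]
      have hPn' : ∀ (n : ℕ) v, (P ^ n) (μ * v) = μ * (P ^ n) v := by
        intro n
        induction n with
        | zero => intro v; simp
        | succ n ih =>
          intro v
          rw [pow_succ, Module.End.mul_apply, Module.End.mul_apply]
          simp only [P, Algebra.coe_lmul_eq_mul, LinearMap.mul_apply']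
          rw [mul_left_comm]
          exact ih _
      simp only [map_sum, map_smul, map_mul, map_pow, hρx, hρy, LinearMap.sum_apply,
        LinearMap.smul_apply, Module.End.mul_apply, hTn', hPn', mul_sum, mul_smul_comm]
    let φ : B →ₗ[K] N := (LinearMap.applyₗ (1 : N)).comp ρ.toLinearMap
    have hφ : ∀ w, φ w = ρ w 1 := fun _ => rfl
    have hinj : Function.Injective φ := by
      rw [← LinearMap.ker_eq_bot, LinearMap.ker_eq_bot']
      intro w hw
      by_contra hw0
      have : ρ (w⁻¹ * w) 1 = 0 := by
        rw [map_mul, Module.End.mul_apply, ← hφ, hw, map_zero]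
      rw [inv_mul_cancel₀ hw0, map_one ρ] at this
      exact one_ne_zero this
    haveI : FiniteDimensional K B :=
      Module.finite_of_finrank_pos (by rw [hf]; exact pow_pos hp.pos 2)
    haveI : FiniteDimensional K N :=
      Module.finite_of_finrank_pos (by rw [hN]; exact pow_pos hp.pos 2)
    have hsurj := (LinearMap.injective_iff_surjective_of_finrank_eq_finrank
      (by rw [hf, hN])).1 hinj
    obtain ⟨w, hw⟩ := hsurj μ
    refine ⟨w, hinj ?_⟩
    have hpow : ∀ n : ℕ, φ (w ^ n) = μ ^ n := by
      intro n
      induction n with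
      | zero => rw [pow_zero, pow_zero, hφ, map_one ρ]; rfl
      | succ n ih =>
        rw [pow_succ, hφ, map_mul, Module.End.mul_apply, ← hφ w, hw]
        conv_lhs => rw [← mul_one μ, hcomm, ← hφ, ih, ← pow_succ']
    rw [hpow, hμ, hφ, AlgHom.commutes, Module.algebraMap_end_apply, Algebra.algebraMap_eq_smul_one]

lemma GoodK.root_all (G : GoodK p K) (hp : p.Prime) [Algebra.IsCentral K B]
    (hf : Module.finrank K B = p ^ 2) (l : K) (hl : ∀ r : K, r ^ p ≠ l) :
    ∃ x : B, x ^ p = algebraMap K B l := by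
  haveI := G.cz
  obtain ⟨x, hx⟩ := G.root_alpha (B := B) hp hf
  have hxK : ∀ r, x ≠ algebraMap K B r := by
    rintro r rfl
    rw [← map_pow] at hx
    exact G.hα r ((algebraMap K B).injective hx)
  have hα0 := ne_zero_of_not_pow hp G.hα
  have hl0 := ne_zero_of_not_pow hp hl
  obtain ⟨y, b, hb, h⟩ := exists_symbol hp G.hζ hf hx hxK
  have hx0 : x ≠ 0 := fun h => hxK 0 (by simp [h])
  have hy0 : y ≠ 0 := by
    rintro rfl
    have := h.hy
    rw [zero_pow hp.ne_zero] at this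
    exact hb (by simpa using this.symm)
  rcases G.K3 l b hl hb with ⟨r, g, hg⟩ | ⟨t, ht⟩
  · refine ⟨aeval x r, ?_⟩
    have := congrArg (aeval x) hg
    simp only [map_sub, map_mul, map_pow, aeval_X, aeval_C, hx, sub_self, zero_mul] at this
    exact sub_eq_zero.1 this
  · set d := b * (t ^ p - G.α) with hd
    set Y := aeval x (C t - X : K[X]) * y with hY
    have hYp : Y ^ p = algebraMap K B d := by
      rw [hY, twist_pow h.hxy, prod_sub_root G.hζ hp.pos, h.hy]
      simp only [map_sub, aeval_C, map_pow, aeval_X, hx]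
      rw [hd, mul_comm b, map_mul, map_sub, map_pow]
    have hY0 : Y ≠ 0 := by
      refine mul_ne_zero ?_ hy0
      rw [map_sub, aeval_C, aeval_X, sub_ne_zero]
      exact (hxK t).symm
    have hYx : Y * x = G.ζ • (x * Y) := by
      have : x * aeval x (C t - X : K[X]) = aeval x (C t - X : K[X]) * x := by
        rw [show aeval x (C t - X : K[X]) * x = aeval x ((C t - X) * X : K[X]) by simp,
          show x * aeval x (C t - X : K[X]) = aeval x (X * (C t - X) : K[X]) by simp, mul_comm]
      rw [hY, mul_assoc, h.hxy, mul_smul_comm, ← mul_assoc, ← this, mul_assoc]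
    have hdp := not_pow_of_div hp G.hζ hYp (not_scalar_of_comm hp G.hζ hx0 hY0 hYx)
    obtain ⟨q, g, hq⟩ := isN_swap hp G.hζ.pow_eq_one (div_ne_zero hl0 hα0) hdp ht
    have hxY : x⁻¹ * Y = G.ζ • (Y * x⁻¹) := by
      rw [inv_mul_eq_iff_eq_mul₀ hx0, mul_smul_comm, ← mul_assoc, ← smul_mul_assoc, ← hYx, mul_assoc,
        mul_inv_cancel₀ hx0, mul_one]
    have h1 := twist_pow hxY q p
    have h2 := congrArg (aeval Y) hq
    rw [map_sub, map_mul, map_sub, map_pow, aeval_X, aeval_C, aeval_C, hYp, sub_self, zero_mul] at h2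
    rw [sub_eq_zero.1 h2, inv_pow, hx, ← map_inv₀, ← map_mul] at h1
    refine ⟨(aeval Y q * x⁻¹)⁻¹, ?_⟩
    rw [inv_pow, h1, ← map_inv₀]
    congr 1
    field_simp

end

end Part4

section Part5
set_option linter.all false
open Polynomial Finset
open scoped TensorProduct

lemma embed_of_root {p : ℕ} {K : Type u} [Field K] (hp : p.Prime) {L : Type u} [Field L] [Algebra K L]
    (hL : Module.finrank K L = p) {l : K} (hl : ∀ r : K, r ^ p ≠ l) {θ : L}
    (hθ : θ ^ p = algebraMap K L l) {B : Type u} [DivisionRing B] [Algebra K B] {x : B}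
    (hx : x ^ p = algebraMap K B l) : Nonempty (L →ₐ[K] B) := by
  have hirr := X_pow_sub_C_irreducible_of_prime hp hl
  let I := Ideal.span {(X ^ p - C l : K[X])}
  haveI hmax : I.IsMaximal := PrincipalIdealRing.isMaximal_of_irreducible hirr
  letI : Field (K[X] ⧸ I) := Ideal.Quotient.field I
  let f : (K[X] ⧸ I) →ₐ[K] B := Ideal.Quotient.liftₐ I (aeval x) (by
    intro a ha
    obtain ⟨g, rfl⟩ := Ideal.mem_span_singleton.1 ha
    simp [hx])
  let g : (K[X] ⧸ I) →ₐ[K] L := Ideal.Quotient.liftₐ I (aeval θ) (by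
    intro a ha
    obtain ⟨g, rfl⟩ := Ideal.mem_span_singleton.1 ha
    simp [hθ])
  have hfr : Module.finrank K (K[X] ⧸ I) = p := by
    rw [finrank_quotient_span_eq_natDegree, natDegree_X_pow_sub_C]
  haveI : FiniteDimensional K (K[X] ⧸ I) :=
    Module.finite_of_finrank_pos (by rw [hfr]; exact hp.pos)
  haveI : FiniteDimensional K L :=
    Module.finite_of_finrank_pos (by rw [hL]; exact hp.pos)
  have hinj : Function.Injective g := g.toRingHom.injective
  have hsurj : Function.Surjective g :=
      (LinearMap.injective_iff_surjective_of_finrank_eq_finrank (f := g.toLinearMap)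
        (by rw [hfr, hL])).1 hinj
  exact ⟨f.comp (AlgEquiv.ofBijective g ⟨hinj, hsurj⟩).symm.toAlgHom⟩

lemma GoodK.data {p : ℕ} {K : Type u} [Field K] (G : GoodK p K) (hp : p.Prime) {L : Type u} [Field L]
    [Algebra K L] (hL : Module.finrank K L = p) : ∃ (θ : L) (l : K), θ ^ p = algebraMap K L l ∧
      (∀ r : K, r ^ p ≠ l) ∧ ∀ (B : Type u) [DivisionRing B] [Algebra K B],
        IsCentralDivisionOfDeg K B p → ∃ x : B, x ^ p = algebraMap K B l ∧
          ∀ r, x ≠ algebraMap K B r := by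
  obtain ⟨θ, l, hθ, hθK⟩ := G.K1 L hL
  have hl := not_pow_of_div hp G.hζ hθ hθK
  refine ⟨θ, l, hθ, hl, ?_⟩
  intro B _ _ hB
  haveI := hB.1
  obtain ⟨x, hx⟩ := G.root_all (B := B) hp hB.2.2 l hl
  refine ⟨x, hx, ?_⟩
  rintro r rfl
  rw [← map_pow] at hx
  exact hl r ((algebraMap K B).injective hx)

theorem GoodK.witness {p : ℕ} (hp : p.Prime) {K : Type u} [Field K] (G : GoodK p K) :
    Nonempty (CommonGenusWitness.{u} p) := by
  haveI := G.cz
  have hex : ∀ n : ℕ, ∃ (D : Type u) (_ : DivisionRing D) (_ : Algebra K D), Algebra.IsCentral K D ∧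
      FiniteDimensional K D ∧ Module.finrank K D = p ^ 2 ∧
      ∃ x y : D, SymRel p G.ζ G.α (G.b (n + 1)) x y := by
    intro n
    refine exists_div hp G.hζ G.hα (G.hb _) ?_
    have := G.hN (n + 1) 0 (by omega)
    rwa [G.hb0, div_one] at this
  choose D i1 i2 hc hfd hfr x y hxy using hex
  refine ⟨⟨K, D, fun n => ⟨hc n, hfd n, hfr n⟩, ?_, ?_, ?_⟩⟩
  · intro n m hnm
    refine ⟨fun e => ?_⟩
    refine G.hN (n + 1) (m + 1) (by omega) ?_
    refine isN_div hp G.hζ (hfr m) G.hα (G.hb _) (G.hb _) (hxy m) (x' := e (x n)) (y' := e (y n))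
      ⟨?_, ?_, ?_⟩
    · rw [← map_pow, (hxy n).hx, AlgEquiv.commutes]
    · rw [← map_pow, (hxy n).hy, AlgEquiv.commutes]
    · rw [← map_mul, (hxy n).hxy, map_smul, map_mul]
  · intro L _ _ hL B _ _ hB
    obtain ⟨θ, l, hθ, hl, h⟩ := G.data hp hL
    obtain ⟨x, hx, hxK⟩ := h B hB
    haveI := hB.1
    exact split_of_root hp G.hζ hB.2.2 hx hxK L hθ
  · intro B B' _ _ _ _ hB hB' L _ _ hL
    obtain ⟨θ, l, hθ, hl, h⟩ := G.data hp hL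
    obtain ⟨x, hx, -⟩ := h B hB
    obtain ⟨x', hx', -⟩ := h B' hB'
    exact ⟨fun _ => embed_of_root hp hL hl hθ hx', fun _ => embed_of_root hp hL hl hθ hx⟩

end Part5

section Part6
set_option linter.all false
open Polynomial Finset
open scoped TensorProduct

section NM
/-- product over iterates -/
def nm {N : Type*} [CommMonoid N] (p : ℕ) (σ : N → N) (x : N) : N := ∏ i ∈ range p, σ^[i] x

variable {N : Type*} [CommRing N] {p : ℕ}

lemma nm_mul (σ : N →+* N) (x y : N) : nm p σ (x * y) = nm p σ x * nm p σ y := by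
  unfold nm
  rw [← prod_mul_distrib]
  exact prod_congr rfl fun i _ => iterate_map_mul σ i x y

lemma nm_one (σ : N →+* N) : nm p σ 1 = 1 := by
  unfold nm
  exact prod_eq_one fun i _ => iterate_map_one σ i

lemma nm_pow (σ : N →+* N) (x : N) (n : ℕ) : nm p σ (x ^ n) = nm p σ x ^ n := by
  induction n with
  | zero => simp [nm_one]
  | succ n ih => rw [pow_succ, nm_mul, ih, pow_succ]

lemma nm_fix (σ : N →+* N) (x : N) (h : σ x = x) : nm p σ x = x ^ p := by
  unfold nm
  rw [prod_congr rfl fun i _ => Function.iterate_fixed h i]; simp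

lemma nm_map {N' : Type*} [CommRing N'] (σ : N →+* N) (σ' : N' →+* N') (f : N →+* N')
    (h : ∀ x, f (σ x) = σ' (f x)) (x : N) : f (nm p σ x) = nm p σ' (f x) := by
  unfold nm
  rw [map_prod]
  refine prod_congr rfl fun i _ => ?_
  exact (Function.Semiconj.iterate_right (f := f) (ga := σ) (gb := σ') h i) x

lemma nm_ne_zero [IsDomain N] (σ : N →+* N) (hσ : Function.Injective σ) {x : N} (hx : x ≠ 0) :
    nm p σ x ≠ 0 := by
  unfold nm
  rw [prod_ne_zero_iff]
  intro i _ h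
  apply hx
  apply hσ.iterate i
  rw [h, iterate_map_zero]

lemma nm_self (σ : N →+* N) (hσ : ∀ x, σ^[p] x = x) (hp : 0 < p) (x : N) :
    nm p σ (σ x) = nm p σ x := by
  unfold nm
  have h1 := prod_range_succ' (fun i => σ^[i] x) p
  rw [prod_range_succ, hσ] at h1
  simp only [Function.iterate_succ_apply, Function.iterate_zero, id] at h1
  have : ∀ i ∈ range p, σ^[i] (σ x) = σ (σ^[i] x) := fun i _ => by
    rw [← Function.iterate_succ_apply, Function.iterate_succ_apply']
  -- compare without cancellation
  obtain ⟨n, rfl⟩ : ∃ n, p = n + 1 := ⟨p - 1, by omega⟩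
  rw [prod_range_succ, prod_range_succ', ← Function.iterate_succ_apply, hσ]
  simp

lemma nm_iter (σ : N →+* N) (hσ : ∀ x, σ^[p] x = x) (hp : 0 < p) (x : N) (k : ℕ) :
    nm p σ (σ^[k] x) = nm p σ x := by
  induction k with
  | zero => rfl
  | succ k ih => rw [Function.iterate_succ_apply', nm_self σ hσ hp, ih]

lemma dvd_nm (σ : N →+* N) (hp : 0 < p) (x : N) : x ∣ nm p σ x := by
  unfold nm
  exact dvd_prod_of_mem (fun i => σ^[i] x) (mem_range.2 hp)

/-- Hilbert 90 -/
lemma hilbert90 {N : Type*} [Field N] [CharZero N] {p : ℕ} (hp : 0 < p) {ζ : N}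
    (hζ : IsPrimitiveRoot ζ p) (τ : N →+* N) (hτ : ∀ x, τ^[p] x = x) (hτζ : τ ζ = ζ) {lam : N}
    (hlam : lam ≠ 0) (hτlam : τ lam = ζ * lam) {m : N} (hm : nm p τ m = 1) :
    ∃ w, w ≠ 0 ∧ m * w = τ w := by
  let M : ℕ → N := fun i => ∏ k ∈ range i, τ^[k] m
  have hit : ∀ i, τ^[i] lam = ζ ^ i * lam := by
    intro i
    induction i with
    | zero => simp
    | succ i ih => rw [Function.iterate_succ_apply', ih, map_mul, map_pow, hτζ, hτlam]; ring
  obtain ⟨k, hk⟩ : ∃ k, ∑ i ∈ range p, M i * τ^[i] (lam ^ k) ≠ 0 := by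
    by_contra hcon
    push Not at hcon
    have h1 : ∀ k ∈ range p, ∑ i ∈ range p, M i * ζ ^ (i * k) = 0 := by
      intro k _
      have h2 := hcon k
      have h3 : ∑ i ∈ range p, M i * τ^[i] (lam ^ k) =
          (∑ i ∈ range p, M i * ζ ^ (i * k)) * lam ^ k := by
        rw [sum_mul]
        refine sum_congr rfl fun i _ => ?_
        rw [iterate_map_pow, hit, mul_pow, ← pow_mul, mul_assoc]
      rw [h3] at h2
      exact (mul_eq_zero.1 h2).resolve_right (pow_ne_zero _ hlam)
    have h2 := sum_eq_zero h1
    rw [sum_comm] at h2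
    simp_rw [← mul_sum, geom_zero hζ] at h2
    rw [sum_eq_single 0] at h2
    · simp [M] at h2
      exact hp.ne' h2
    · intro i hi h0
      rw [if_neg, mul_zero]
      exact fun h => h0 (Nat.eq_zero_of_dvd_of_lt h (mem_range.1 hi))
    · intro h; exact absurd (mem_range.2 hp) h
  set v := ∑ i ∈ range p, M i * τ^[i] (lam ^ k) with hv
  have hMs : ∀ i, m * τ (M i) = M (i + 1) := by
    intro i
    simp only [M]
    rw [prod_range_succ', map_prod, mul_comm]
    simp only [Function.iterate_succ_apply', Function.iterate_zero, id]
  have hmv : m * τ v = v := by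
    rw [hv, map_sum, mul_sum]
    have : ∀ i ∈ range p, m * τ (M i * τ^[i] (lam ^ k)) = M (i + 1) * τ^[i + 1] (lam ^ k) := by
      intro i _
      rw [map_mul, ← mul_assoc, hMs, Function.iterate_succ_apply']
    rw [sum_congr rfl this]
    have h1 := sum_range_succ' (fun i => M i * τ^[i] (lam ^ k)) p
    rw [sum_range_succ] at h1
    have h2 : M p * τ^[p] (lam ^ k) = M 0 * τ^[0] (lam ^ k) := by
      have : M p = 1 := hm
      rw [this, hτ]; simp [M]
    rw [h2] at h1
    exact (add_right_cancel h1).symm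
  have hτv : τ v ≠ 0 := fun h => hk (by rw [← hmv, h, mul_zero])
  refine ⟨v⁻¹, inv_ne_zero hk, ?_⟩
  rw [map_inv₀]
  field_simp
  exact hmv

/-- UFD step -/
lemma ufd_step {R : Type*} [CommRing R] [IsDomain R] [UniqueFactorizationMonoid R] {p : ℕ}
    (hp : 0 < p) (σ : R →+* R) (hσ : ∀ x, σ^[p] x = x) (A : R) :
    ∀ B : R, A ≠ 0 → B ≠ 0 → (∃ s, IsUnit s ∧ nm p σ A = s * nm p σ B) →
    ∃ g n, g ≠ 0 ∧ IsUnit n ∧ A * σ g = n * B * g := by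
  have hinj : Function.Injective σ := by
    intro a b hab
    rw [← hσ a, ← hσ b]
    obtain ⟨n, rfl⟩ : ∃ n, p = n + 1 := ⟨p - 1, by omega⟩
    rw [Function.iterate_succ_apply, hab, ← Function.iterate_succ_apply]
  induction A using UniqueFactorizationMonoid.induction_on_prime with
  | h₁ => intro B h; exact absurd rfl h
  | h₂ x hx =>
    rintro B h0 hB ⟨s, hs, hn⟩
    have h1 : IsUnit (nm p σ x) := by
      unfold nm
      have hit : ∀ i, IsUnit (σ^[i] x) := by
        intro i
        induction i with
        | zero => exact hx
        | succ i ih => rw [Function.iterate_succ_apply']; exact ih.map σ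
      rw [IsUnit.prod_iff]
      exact fun i _ => hit i
    rw [hn] at h1
    have hBu : IsUnit B := isUnit_of_dvd_unit ((dvd_nm σ hp B).mul_left s) h1
    obtain ⟨b, rfl⟩ := hBu
    refine ⟨1, x * b⁻¹, one_ne_zero, hx.mul (Units.isUnit _), ?_⟩
    simp
  | h₃ a π ha hπ ih =>
    rintro B h0 hB ⟨s, hs, hn⟩
    have h1 : π ∣ nm p σ B := by
      have : π ∣ s * nm p σ B := by
        rw [← hn, nm_mul]; exact (dvd_nm σ hp π).mul_right _
      exact (hs.dvd_mul_left).1 this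
    unfold nm at h1
    obtain ⟨i, hi, h2⟩ := hπ.exists_mem_finset_dvd h1
    have hi' := mem_range.1 hi
    obtain ⟨B', hB'⟩ : σ^[p - i] π ∣ B := by
      obtain ⟨w, hw⟩ := h2
      refine ⟨σ^[p - i] w, ?_⟩
      rw [← iterate_map_mul, ← hw, ← Function.iterate_add_apply, Nat.sub_add_cancel hi'.le, hσ]
    set k := p - i with hk
    have hB'0 : B' ≠ 0 := by rintro rfl; exact hB (by rw [hB', mul_zero])
    have hnm : nm p σ a = s * nm p σ B' := by
      rw [hB', nm_mul, nm_mul, nm_iter σ hσ hp] at hn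
      have hnz := nm_ne_zero (p := p) σ hinj hπ.ne_zero
      apply mul_left_cancel₀ hnz
      rw [hn]; ring
    obtain ⟨g, n, hg, hnu, hgn⟩ := ih B' ha hB'0 ⟨s, hs, hnm⟩
    have hprod : π * σ (∏ i ∈ range k, σ^[i] π) = σ^[k] π * ∏ i ∈ range k, σ^[i] π := by
      have h3 := prod_range_succ' (fun i => σ^[i] π) k
      rw [prod_range_succ] at h3
      rw [map_prod, mul_comm, mul_comm (σ^[k] π), h3]
      simp only [Function.iterate_succ_apply', Function.iterate_zero, id]
    refine ⟨g * ∏ i ∈ range k, σ^[i] π, n, ?_, hnu, ?_⟩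
    · refine mul_ne_zero hg (prod_ne_zero_iff.2 fun i _ h => hπ.ne_zero ?_)
      apply hinj.iterate i
      rw [h, iterate_map_zero]
    · rw [map_mul, hB']
      calc π * a * (σ g * σ (∏ i ∈ range k, σ^[i] π))
          = (a * σ g) * (π * σ (∏ i ∈ range k, σ^[i] π)) := by ring
        _ = _ := by rw [hgn, hprod]; ring

end NM

end Part6

section Part7
set_option linter.all false
open Polynomial Finset
open scoped TensorProduct

section U
variable {p : ℕ} [Fact p.Prime] {N : Type*} [Field N]

/-- the weights -/
def wgt (p : ℕ) (c : N) (j : ZMod p) : N := by classical exact if j = -1 then c else 1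

/-- twisted shift -/
noncomputable def shf (p : ℕ) (τ : N →+* N) (c : N) : MvPolynomial (ZMod p) N →+* MvPolynomial (ZMod p) N :=
  MvPolynomial.eval₂Hom (MvPolynomial.C.comp τ) (fun j => MvPolynomial.C (wgt p c j) * MvPolynomial.X (j + 1))

lemma shf_C (τ : N →+* N) (c a : N) : shf p τ c (MvPolynomial.C a) = MvPolynomial.C (τ a) := by
  simp [shf]
lemma shf_X (τ : N →+* N) (c : N) (j : ZMod p) : shf p τ c (MvPolynomial.X j) =
   MvPolynomial.C (wgt p c j) * MvPolynomial.X (j + 1) := by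
  simp [shf]

lemma wgt_fix (τ : N →+* N) (c : N) (hc : τ c = c) (j : ZMod p) : τ (wgt p c j) = wgt p c j := by
  unfold wgt; split_ifs <;> simp [hc]

lemma wgt_prod (c : N) (j : ZMod p) : ∏ l ∈ range p, wgt p c (j + l) = c := by
  have h1 : ∏ l ∈ range p, wgt p c (j + l) = ∏ a : ZMod p, wgt p c a := by
    refine prod_bij (fun l _ => j + (l : ZMod p)) (fun _ _ => mem_univ _) ?_ ?_ (fun _ _ => rfl)
    · intro a ha b hb hab
      have h2 := add_left_cancel hab
      rw [ZMod.natCast_eq_natCast_iff'] at h2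
      rwa [Nat.mod_eq_of_lt (mem_range.1 ha), Nat.mod_eq_of_lt (mem_range.1 hb)] at h2
    · intro a _
      refine ⟨(a - j).val, mem_range.2 (ZMod.val_lt _), ?_⟩
      simp
  rw [h1, prod_eq_single (-1)]
  · simp [wgt]
  · intro b _ hb; simp [wgt, hb]
  · simp

lemma shf_iter_C (τ : N →+* N) (c a : N) (i : ℕ) :
    (shf p τ c)^[i] (MvPolynomial.C a) = MvPolynomial.C (τ^[i] a) := by
  induction i with
  | zero => rfl
  | succ i ih => rw [Function.iterate_succ_apply', ih, shf_C, Function.iterate_succ_apply']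

lemma shf_iter_X (τ : N →+* N) (c : N) (hc : τ c = c) (j : ZMod p) (i : ℕ) :
    (shf p τ c)^[i] (MvPolynomial.X j) =
      MvPolynomial.C (∏ l ∈ range i, wgt p c (j + l)) * MvPolynomial.X (j + i) := by
  induction i with
  | zero => simp
  | succ i ih =>
    rw [Function.iterate_succ_apply', ih, map_mul, shf_C, shf_X, map_prod, prod_range_succ,
      prod_congr rfl fun l _ => wgt_fix τ c hc _, MvPolynomial.C_mul]
    push_cast
    rw [add_assoc]; ring

lemma shf_iter_p (τ : N →+* N) (hτ : ∀ x, τ^[p] x = x) (c : N) (hc : τ c = c)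
    (f : MvPolynomial (ZMod p) N) :
    (shf p τ c)^[p] f = MvPolynomial.aeval (fun j => MvPolynomial.C c * MvPolynomial.X j) f := by
  have h : ((shf p τ c) ^ p : MvPolynomial (ZMod p) N →+* _) =
      (MvPolynomial.aeval (fun j => MvPolynomial.C c * MvPolynomial.X j) :
        MvPolynomial (ZMod p) N →ₐ[N] MvPolynomial (ZMod p) N).toRingHom := by
    apply MvPolynomial.ringHom_ext
    · intro r
      rw [RingHom.coe_pow, shf_iter_C, hτ]
      simp [MvPolynomial.algebraMap_eq]
    · intro j
      rw [RingHom.coe_pow, shf_iter_X τ c hc, wgt_prod]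
      simp
  have := congrArg (fun g => g f) h
  simpa [RingHom.coe_pow] using this

lemma coeff_scale (c : N) (f : MvPolynomial (ZMod p) N) (m : ZMod p →₀ ℕ) :
    MvPolynomial.coeff m (MvPolynomial.aeval (fun j => MvPolynomial.C c * MvPolynomial.X j) f) =
      c ^ (m.degree) * MvPolynomial.coeff m f := by
  classical
  induction f using MvPolynomial.induction_on' with
  | monomial u a =>
    rw [MvPolynomial.aeval_monomial, MvPolynomial.algebraMap_eq]
    have : (u.prod fun i k => (MvPolynomial.C c * MvPolynomial.X i : MvPolynomial (ZMod p) N) ^ k) =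
        MvPolynomial.monomial u (c ^ u.degree) := by
      rw [MvPolynomial.monomial_eq]
      simp only [mul_pow, Finsupp.prod_mul]
      congr 1
      rw [Finsupp.degree, MvPolynomial.C_pow, Finsupp.prod]
      rw [prod_pow_eq_pow_sum]; rfl
    rw [this, MvPolynomial.C_mul_monomial, MvPolynomial.coeff_monomial, MvPolynomial.coeff_monomial]
    split_ifs with h
    · rw [h]; ring
    · simp
  | add f g hf hg => rw [map_add, MvPolynomial.coeff_add, MvPolynomial.coeff_add, hf, hg]; ring

lemma shf_deg (τ : N →+* N) (c : N) (f : MvPolynomial (ZMod p) N) :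
    (shf p τ c f).totalDegree ≤ f.totalDegree := by
  unfold shf
  rw [MvPolynomial.coe_eval₂Hom, MvPolynomial.eval₂_eq]
  refine MvPolynomial.totalDegree_finsetSum_le fun d hd => ?_
  refine (MvPolynomial.totalDegree_mul _ _).trans ?_
  rw [RingHom.comp_apply, MvPolynomial.totalDegree_C, zero_add]
  refine (MvPolynomial.totalDegree_finset_prod _ _).trans ?_
  refine le_trans ?_ (MvPolynomial.le_totalDegree hd)
  rw [Finsupp.sum]
  refine sum_le_sum fun i _ => ?_
  refine (MvPolynomial.totalDegree_pow _ _).trans ?_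
  have : (MvPolynomial.C (wgt p c i) * MvPolynomial.X (i + 1) : MvPolynomial (ZMod p) N).totalDegree ≤ 1 := by
    refine (MvPolynomial.totalDegree_mul _ _).trans ?_
    rw [MvPolynomial.totalDegree_C, MvPolynomial.totalDegree_X]
  nlinarith

lemma map_iter_p (σ : N →+* N) (hσ : ∀ x, σ^[p] x = x) (f : MvPolynomial (ZMod p) N) :
    (MvPolynomial.map σ)^[p] f = f := by
  have : ∀ i, ∀ m, MvPolynomial.coeff m ((MvPolynomial.map σ)^[i] f) = σ^[i] (MvPolynomial.coeff m f) := by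
    intro i m
    induction i with
    | zero => rfl
    | succ i ih => rw [Function.iterate_succ_apply', MvPolynomial.coeff_map, ih, Function.iterate_succ_apply']
  ext m
  rw [this, hσ]

lemma shf_comm (σ τ : N →+* N) (hcomm : ∀ x, σ (τ x) = τ (σ x)) (c : N) (hc : σ c = c)
    (f : MvPolynomial (ZMod p) N) :
    MvPolynomial.map σ (shf p τ c f) = shf p τ c (MvPolynomial.map σ f) := by
  have h : (MvPolynomial.map σ).comp (shf p τ c) = (shf p τ c).comp (MvPolynomial.map σ) := by
    apply MvPolynomial.ringHom_ext
    · intro r; simp [shf_C, hcomm]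
    · intro j; simp [shf_X, wgt_fix σ c hc]
  exact congrArg (fun g => g f) h

lemma iter_inj {R : Type*} [CommRing R] {p : ℕ} (hp : 0 < p) (σ : R →+* R) (hσ : ∀ x, σ^[p] x = x) :
    Function.Injective σ := by
  intro a b hab
  rw [← hσ a, ← hσ b]
  obtain ⟨n, rfl⟩ : ∃ n, p = n + 1 := ⟨p - 1, by omega⟩
  rw [Function.iterate_succ_apply, hab, ← Function.iterate_succ_apply]

/-- a solution dividing its image -/
lemma min_sol {R : Type*} [CommRing R] [IsDomain R] [UniqueFactorizationMonoid R] {p : ℕ}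
    (hp : 0 < p) (σ τ : R →+* R) (hσ : ∀ x, σ^[p] x = x) (hτ : Function.Injective τ)
    (hcomm : ∀ x, σ (τ x) = τ (σ x)) (A B : R) (hA : A ≠ 0) (hB : B ≠ 0)
    (hfix : τ A * B = A * τ B) (h : ∃ s, IsUnit s ∧ nm p σ A = s * nm p σ B) :
    ∃ g n, g ≠ 0 ∧ IsUnit n ∧ A * σ g = n * B * g ∧ g ∣ τ g := by
  have hσi := iter_inj hp σ hσ
  let S : Set R := {g | g ≠ 0 ∧ ∃ n, IsUnit n ∧ A * σ g = n * B * g}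
  have hS : S.Nonempty := by
    obtain ⟨g, n, h1, h2, h3⟩ := ufd_step hp σ hσ A B hA hB h
    exact ⟨g, h1, n, h2, h3⟩
  obtain ⟨g, ⟨hg, n, hn, hgn⟩, hmin⟩ := (IsWellFounded.wf (r := (DvdNotUnit : R → R → Prop))).has_min S hS
  have hτB : τ B ≠ 0 := fun h => hB (hτ (by rw [h, map_zero]))
  have hτg0 : τ g ≠ 0 := fun h => hg (hτ (by rw [h, map_zero]))
  have hτg : A * σ (τ g) = τ n * B * τ g := by
    apply mul_left_cancel₀ hτB
    have h1 := congrArg τ hgn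
    simp only [map_mul] at h1
    rw [hcomm]
    linear_combination B * h1 - τ (σ g) * hfix
  obtain ⟨a, b, d, hab, hda, hdb⟩ := UniqueFactorizationMonoid.exists_reduced_factors g hg (τ g)
  have hd0 : d ≠ 0 := by rintro rfl; simp at hda; exact hg hda.symm
  have ha0 : a ≠ 0 := by rintro rfl; simp at hda; exact hg hda.symm
  have hσd : σ d ≠ 0 := fun h => hd0 (hσi (by rw [h, map_zero]))
  have h1 : τ n * (σ a * b) = n * (a * σ b) := by
    have e1 := hgn
    have e2 := hτg
    rw [← hda, map_mul] at e1
    rw [← hdb, map_mul] at e2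
    have hne : A * B * d * σ d ≠ 0 := by simp [hA, hB, hd0, hσd]
    apply mul_left_cancel₀ hne
    linear_combination (τ n * B * d * b) * e1 - (n * B * d * a) * e2
  have h2 : a ∣ σ a := by
    have h3 : a ∣ τ n * (σ a * b) := by rw [h1]; exact (dvd_mul_right a _).mul_left _
    have h4 := ((hn.map τ).dvd_mul_left).1 h3
    exact hab.dvd_of_dvd_mul_right h4
  obtain ⟨v, hv⟩ := h2
  have hvu : IsUnit v := by
    have h3 := congrArg (nm p σ) hv
    rw [nm_self σ hσ hp, nm_mul] at h3
    have h4 : nm p σ v = 1 := by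
      apply mul_left_cancel₀ (nm_ne_zero (p := p) σ hσi ha0)
      rw [← h3, mul_one]
    exact isUnit_of_dvd_one (h4 ▸ dvd_nm σ hp v)
  have hdS : d ∈ S := by
    obtain ⟨v', rfl⟩ := hvu
    refine ⟨hd0, n * (v'⁻¹ : Rˣ), hn.mul (Units.isUnit _), ?_⟩
    have e1 := hgn
    rw [← hda, map_mul, hv] at e1
    apply mul_left_cancel₀ ha0
    have e3 : (v' : R) * (v'⁻¹ : Rˣ) = 1 := by simp
    linear_combination (v'⁻¹ : Rˣ) * e1 - (A * σ d * a) * e3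
  have hau : IsUnit a := by
    by_contra hau
    exact hmin d hdS ⟨hd0, a, hau, hda.symm⟩
  refine ⟨g, n, hg, hn, hgn, ?_⟩
  rw [← hda, mul_comm, hau.mul_left_dvd, mul_comm a, hda, ← hdb]
  exact dvd_mul_right _ _

lemma lemmaU [CharZero N] (σ τ : N →+* N) (hσ : ∀ x, σ^[p] x = x) (hτ : ∀ x, τ^[p] x = x)
    (hcomm : ∀ x, σ (τ x) = τ (σ x)) {ζ lam : N} (hζ : IsPrimitiveRoot ζ p) (hτζ : τ ζ = ζ)
    (hlam : lam ≠ 0) (hτlam : τ lam = ζ * lam) {c : N} (hc0 : c ≠ 0) (hσc : σ c = c) (hτc : τ c = c)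
    (hnot : ∀ z, nm p τ z ≠ c) (A B : MvPolynomial (ZMod p) N) (hA : A ≠ 0) (hB : B ≠ 0)
    (hfix : shf p τ c A * B = A * shf p τ c B) {s : N} (hs : s ≠ 0)
    (h : nm p (MvPolynomial.map σ) A = MvPolynomial.C s * nm p (MvPolynomial.map σ) B) :
    ∃ n : N, τ n = n ∧ nm p σ n = s := by
  have hp : p.Prime := Fact.out
  have hσi := iter_inj hp.pos σ hσ
  have hτi := iter_inj hp.pos τ hτ
  have hshi : Function.Injective (shf p τ c) := by
    have h1 : Function.Injective ((shf p τ c)^[p]) := by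
      intro f g hfg
      rw [shf_iter_p τ hτ c hτc, shf_iter_p τ hτ c hτc] at hfg
      ext m
      have h2 := congrArg (MvPolynomial.coeff m) hfg
      rw [coeff_scale, coeff_scale] at h2
      exact mul_left_cancel₀ (pow_ne_zero _ hc0) h2
    intro f g hfg
    apply h1
    obtain ⟨n, hn⟩ : ∃ n, p = n + 1 := ⟨p - 1, by have := hp.pos; omega⟩
    have : ∀ i, (shf p τ c)^[i + 1] f = (shf p τ c)^[i + 1] g := by
      intro i; rw [Function.iterate_succ_apply, hfg, ← Function.iterate_succ_apply]
    have h3 := this (p - 1)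
    rwa [Nat.sub_add_cancel hp.pos] at h3
  have hmi := map_iter_p σ hσ
  obtain ⟨g, n', hg, hnu, hgn, hgd⟩ := min_sol hp.pos (MvPolynomial.map σ) (shf p τ c) hmi hshi
    (shf_comm σ τ hcomm c hσc) A B hA hB hfix
    ⟨MvPolynomial.C s, (isUnit_iff_ne_zero.2 hs).map MvPolynomial.C, h⟩
  obtain ⟨n, hn, rfl⟩ := MvPolynomial.isUnit_iff_eq_C_of_isReduced.1 hnu
  obtain ⟨m', hm'⟩ := hgd
  have hτg0 : shf p τ c g ≠ 0 := fun h => hg (hshi (by rw [h, map_zero]))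
  have hm'0 : m' ≠ 0 := by rintro rfl; exact hτg0 (by rw [hm', mul_zero])
  obtain ⟨m, rfl⟩ : ∃ m, m' = MvPolynomial.C m := by
    have h1 := shf_deg τ c g
    rw [hm', MvPolynomial.totalDegree_mul_of_isDomain hg hm'0] at h1
    exact ⟨_, (MvPolynomial.totalDegree_eq_zero_iff_eq_C).1 (by omega)⟩
  have hm0 : m ≠ 0 := by rintro rfl; simp at hm'0
  -- norm of n
  have hnn : nm p σ n = s := by
    have h1 := congrArg (nm p (MvPolynomial.map σ)) hgn
    rw [nm_mul, nm_mul, nm_mul, nm_self _ hmi hp.pos, h,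
      ← nm_map σ (MvPolynomial.map σ) (MvPolynomial.C) (fun x => by simp)] at h1
    have h2 : MvPolynomial.C s = (MvPolynomial.C (nm p σ n) : MvPolynomial (ZMod p) N) := by
      have hi := iter_inj hp.pos (MvPolynomial.map σ) hmi
      exact mul_right_cancel₀ (nm_ne_zero (p := p) _ hi hB) (mul_right_cancel₀ (nm_ne_zero (p := p) _ hi hg) h1)
    exact (MvPolynomial.C_injective _ _ h2).symm
  have hn0 : n ≠ 0 := hn.ne_zero
  -- cocycle relation
  have hcoc : σ m * n = τ n * m := by
    have h1 := congrArg (shf p τ c) hgn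
    rw [map_mul, map_mul, map_mul, shf_C, ← shf_comm σ τ hcomm c hσc, hm', map_mul, MvPolynomial.map_C] at h1
    have hσg : MvPolynomial.map σ g ≠ 0 :=
      fun h => hg (iter_inj hp.pos (MvPolynomial.map σ) hmi (by rw [h, map_zero]))
    have hτB0 : shf p τ c B ≠ 0 := fun h => hB (hshi (by rw [h, map_zero]))
    have h2 : (MvPolynomial.C (σ m * n) : MvPolynomial (ZMod p) N) = MvPolynomial.C (τ n * m) := by
      rw [MvPolynomial.C_mul, MvPolynomial.C_mul]
      apply mul_left_cancel₀ (mul_ne_zero (mul_ne_zero hτB0 hB) hg)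
      linear_combination B * h1 - (MvPolynomial.map σ g * MvPolynomial.C (σ m)) * hfix -
        (shf p τ c B * MvPolynomial.C (σ m)) * hgn
    exact MvPolynomial.C_injective _ _ h2
  -- the degree relation
  obtain ⟨δ, hδ⟩ : ∃ δ : ℕ, c ^ δ = nm p τ m := by
    have hit : ∀ i, (shf p τ c)^[i] g = g * MvPolynomial.C (∏ k ∈ range i, τ^[k] m) := by
      intro i
      induction i with
      | zero => simp
      | succ i ih =>
        rw [Function.iterate_succ_apply', ih, map_mul, hm', shf_C, map_prod, prod_range_succ',
          MvPolynomial.C_mul]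
        simp only [Function.iterate_succ_apply', Function.iterate_zero, id]
        ring
    have h1 := hit p
    rw [shf_iter_p τ hτ c hτc] at h1
    obtain ⟨k, hk⟩ := MvPolynomial.ne_zero_iff.1 hg
    have h2 := congrArg (MvPolynomial.coeff k) h1
    rw [coeff_scale, mul_comm g, MvPolynomial.coeff_C_mul] at h2
    exact ⟨_, mul_right_cancel₀ hk h2⟩
  have hnc : nm p τ c = c ^ p := nm_fix τ c hτc
  by_cases hd : p ∣ δ
  · obtain ⟨e, rfl⟩ := hd
    have hce : τ (c ^ e) = c ^ e := by rw [map_pow, hτc]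
    have hce0 : c ^ e ≠ 0 := pow_ne_zero _ hc0
    have hcei : τ (c ^ e)⁻¹ = (c ^ e)⁻¹ := by rw [map_inv₀, hce]
    have h1 : nm p τ (m * (c ^ e)⁻¹) = 1 := by
      rw [nm_mul, ← hδ, nm_fix τ _ hcei]
      rw [inv_pow, ← pow_mul, mul_comm e p]
      exact mul_inv_cancel₀ (pow_ne_zero _ hc0)
    obtain ⟨w, hw0, hw⟩ := hilbert90 hp.pos hζ τ hτ hτζ hlam hτlam h1
    have hσw : σ w ≠ 0 := fun h => hw0 (hσi (by rw [h, map_zero]))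
    have hσm : σ m ≠ 0 := fun h => hm0 (hσi (by rw [h, map_zero]))
    have hσce : σ (c ^ e) = c ^ e := by rw [map_pow, hσc]
    refine ⟨n * (w * (σ w)⁻¹), ?_, ?_⟩
    · rw [map_mul, map_mul, map_inv₀, ← hcomm, ← hw, map_mul, map_mul, map_inv₀, hσce]
      field_simp
      linear_combination -hcoc
    · have h2 : nm p σ (w * (σ w)⁻¹) = 1 := by
        have h3 : nm p σ (w * (σ w)⁻¹) * nm p σ (σ w) = nm p σ w := by
          rw [← nm_mul, mul_assoc, inv_mul_cancel₀ hσw, mul_one]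
        rw [nm_self σ hσ hp.pos] at h3
        exact mul_right_cancel₀ (nm_ne_zero (p := p) σ hσi hw0) (by rw [h3, one_mul])
      rw [nm_mul, h2, hnn, mul_one]
  · exfalso
    obtain ⟨a, ha⟩ : ∃ a : ℕ, a * δ ≡ 1 [MOD p] := by
      have := (Nat.Prime.coprime_iff_not_dvd hp).2 hd
      obtain ⟨a, _, ha⟩ := Nat.exists_mul_mod_eq_one_of_coprime this.symm hp.one_lt
      exact ⟨a, by rw [mul_comm, Nat.ModEq, ha, Nat.mod_eq_of_lt hp.one_lt]⟩
    have h1 : a * δ = 1 + p * (a * δ / p) := by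
      have h2 := Nat.mod_add_div (a * δ) p
      rw [ha, Nat.mod_eq_of_lt hp.one_lt] at h2
      exact h2.symm
    set b := a * δ / p
    have hcb : τ (c ^ b)⁻¹ = (c ^ b)⁻¹ := by rw [map_inv₀, map_pow, hτc]
    apply hnot (m ^ a * (c ^ b)⁻¹)
    rw [nm_mul, nm_pow, ← hδ, nm_fix τ _ hcb, ← pow_mul, mul_comm δ a, h1, pow_add, pow_one, pow_mul,
      inv_pow, ← pow_mul, ← pow_mul, mul_comm b p, mul_assoc, mul_inv_cancel₀ (pow_ne_zero _ hc0), mul_one]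

end U

end Part7

section Part8
set_option linter.all false
open Polynomial Finset
open scoped TensorProduct

section VW
variable {p : ℕ} {Om : Type u} [Field Om]

/-- `c` is a norm from `F(x)` (formally) -/
def IsNm (p : ℕ) (ζ : Om) (F : Subfield Om) (x c : Om) : Prop :=
  ∃ q : F[X], ∏ i ∈ range p, aeval (ζ ^ i * x) q = c

/-- adjunction of a set -/
abbrev adj (F : Subfield Om) (S : Set Om) : Subfield Om := F ⊔ Subfield.closure S

lemma le_adj (F : Subfield Om) (S : Set Om) : F ≤ adj F S := le_sup_left
lemma mem_adj (F : Subfield Om) {S : Set Om} {x : Om} (h : x ∈ S) : x ∈ adj F S :=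
  (le_sup_right : _ ≤ adj F S) (Subfield.subset_closure h)
lemma adj_le {F G : Subfield Om} {S : Set Om} (h1 : F ≤ G) (h2 : S ⊆ G) : adj F S ≤ G :=
  sup_le h1 (Subfield.closure_le.2 h2)

lemma aeval_incl {F G : Subfield Om} (h : F ≤ G) (q : F[X]) (y : Om) :
    aeval y (q.map (Subfield.inclusion h)) = aeval y q := by
  rw [aeval_def, eval₂_map, aeval_def]; rfl

lemma IsNm.mono {ζ : Om} {F G : Subfield Om} (h : F ≤ G) {x c : Om} (hN : IsNm p ζ F x c) : IsNm p ζ G x c := by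
  obtain ⟨q, hq⟩ := hN
  exact ⟨q.map (Subfield.inclusion h), by simp_rw [aeval_incl h]; exact hq⟩

lemma exists_div_of_mem_adj (F : Subfield Om) (t : Om) {a : Om} (h : a ∈ adj F {t}) :
    ∃ r s : F[X], a = aeval t r / aeval t s := by
  rw [← IntermediateField.mem_adjoin_simple_iff]
  have : adj F {t} ≤ (IntermediateField.adjoin F {t}).toSubfield := by
    refine adj_le ?_ ?_
    · intro y hy
      exact (IntermediateField.adjoin F {t}).algebraMap_mem ⟨y, hy⟩
    · rintro y rfl
      exact IntermediateField.mem_adjoin_simple_self F y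
  exact this h

lemma clear_den (F : Subfield Om) (t : Om) (q : (adj F {t})[X]) :
    ∃ (Q : F[X][X]) (D : F[X]), aeval t D ≠ 0 ∧
      ∀ y : Om, aeval y q * aeval t D = (Q.map (aeval y : F[X] →ₐ[F] Om).toRingHom).eval t := by
  have hev : ∀ (r : F[X]) (y : Om), ((r.map C).map (aeval y : F[X] →ₐ[F] Om).toRingHom).eval t = aeval t r := by
    intro r y
    rw [Polynomial.map_map, eval_map, aeval_def]
    congr 1
    ext a; simp
  induction q using Polynomial.induction_on' with
  | add f g hf hg =>
    obtain ⟨Q1, D1, h1, h1'⟩ := hf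
    obtain ⟨Q2, D2, h2, h2'⟩ := hg
    refine ⟨Q1 * D2.map C + Q2 * D1.map C, D1 * D2, by rw [map_mul]; exact mul_ne_zero h1 h2, fun y => ?_⟩
    rw [Polynomial.map_add, Polynomial.map_mul, Polynomial.map_mul, eval_add, eval_mul, eval_mul, hev, hev,
      ← h1', ← h2', map_add, map_mul]
    ring
  | monomial n a =>
    obtain ⟨r, s, h⟩ := exists_div_of_mem_adj F t a.2
    by_cases hs : aeval t s = 0
    · refine ⟨0, 1, by simp, fun y => ?_⟩
      rw [hs, div_zero] at h
      have : a = 0 := Subtype.ext h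
      simp [this]
    · refine ⟨r.map C * C (X ^ n), s, hs, fun y => ?_⟩
      rw [Polynomial.map_mul, eval_mul, hev, aeval_monomial]
      have : algebraMap (adj F {t}) Om a = aeval t r / aeval t s := h
      rw [this]
      simp
      field_simp

variable {ζ : Om}

lemma conj_iff (hp : p.Prime) (hζ : IsPrimitiveRoot ζ p) {F : Subfield Om} (hζF : ζ ∈ F) {x : Om} (hxp : x ^ p ∈ F)
    (hx : x ∉ F) (q : F[X]) (i : ℕ) : aeval (ζ ^ i * x) q = 0 ↔ (X ^ p - C (⟨x ^ p, hxp⟩ : F)) ∣ q := by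
  have hζ' : IsPrimitiveRoot (⟨ζ, hζF⟩ : F) p := IsPrimitiveRoot.of_map_of_injective (f := F.subtype) hζ F.subtype_injective
  have h1 := not_pow_of_div (ℓ := (⟨x ^ p, hxp⟩ : F)) hp hζ' (x := x) rfl (fun r h => hx (h ▸ r.2))
  have h2 : (ζ ^ i * x) ^ p = algebraMap F Om ⟨x ^ p, hxp⟩ := by
    rw [mul_pow, ← pow_mul, mul_comm i, pow_mul, hζ.pow_eq_one, one_pow, one_mul]; rfl
  rw [← minpoly_eq_of_not_pow hp h2 h1, minpoly.dvd_iff]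

lemma ntd_prod {ι : Type*} (s : Finset ι) (f : ι → Om[X]) (hf : ∀ i ∈ s, f i ≠ 0) :
    (∏ i ∈ s, f i).natTrailingDegree = ∑ i ∈ s, (f i).natTrailingDegree ∧
    (∏ i ∈ s, f i).trailingCoeff = ∏ i ∈ s, (f i).trailingCoeff := by
  classical
  induction s using Finset.induction_on with
  | empty => simp [trailingCoeff]
  | insert a s ha ih =>
    obtain ⟨h1, h2⟩ := ih fun i hi => hf i (mem_insert_of_mem hi)
    rw [prod_insert ha, sum_insert ha, prod_insert ha, natTrailingDegree_mul (hf a (mem_insert_self a s))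
      (prod_ne_zero_iff.2 fun i hi => hf i (mem_insert_of_mem hi)), h1, trailingCoeff_mul, h2]
    exact ⟨rfl, rfl⟩

lemma transc_zero {A : Subfield Om} {t : Om} (ht : Transcendental A t) (P : Om[X]) (hP : P ∈ lifts A.subtype)
    (h : P.eval t = 0) : P = 0 := by
  obtain ⟨P', rfl⟩ := hP
  have : aeval t P' = 0 := by
    rw [← h]; simp [aeval_def, eval_map]; rfl
  rw [(transcendental_iff.1 ht) P' this]; simp

/-- main multiplicity lemma -/
lemma lemmaVW (hp : p.Prime) (hζ : IsPrimitiveRoot ζ p) {F A : Subfield Om} (hζF : ζ ∈ F) (hFA : F ≤ A) {x t : Om}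
    (hxp : x ^ p ∈ F) (hx : x ∉ F) (hxA : x ∈ A) (ht : Transcendental A t) {c : Om} (hN : IsNm p ζ (adj F {t}) x c)
    (G1 G2 : A[X]) (h1 : G1 ≠ 0) (hc : c * aeval t G2 = aeval t G1) :
    ∃ (n m : ℕ) (q : F[X]) (d : F), d ≠ 0 ∧ p * n + G2.natTrailingDegree = G1.natTrailingDegree + p * m ∧
      (∏ i ∈ range p, aeval (ζ ^ i * x) q) * G2.trailingCoeff = G1.trailingCoeff * d ^ p := by
  obtain ⟨q, hq⟩ := hN
  obtain ⟨Q, D, hD, hQ⟩ := clear_den F t q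
  set f : ℕ → Om[X] := fun i => Q.map (aeval (ζ ^ i * x) : F[X] →ₐ[F] Om).toRingHom with hf
  have hD0 : D ≠ 0 := by rintro rfl; simp at hD
  set D' := D.map (algebraMap F Om) with hD'
  have hD'0 : D' ≠ 0 := (Polynomial.map_ne_zero_iff (algebraMap F Om).injective).2 hD0
  set g1 := G1.map A.subtype with hg1
  set g2 := G2.map A.subtype with hg2
  have hg10 : g1 ≠ 0 := (Polynomial.map_ne_zero_iff A.subtype_injective).2 h1
  have hA : ∀ i, ∀ r : F[X], aeval (ζ ^ i * x) r ∈ A := by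
    intro i r
    rw [aeval_eq_sum_range]
    refine sum_mem fun k _ => ?_
    rw [Algebra.smul_def]
    exact mul_mem (hFA (r.coeff k).2) (pow_mem (mul_mem (pow_mem (hFA hζF) _) hxA) _)
  have key : (∏ i ∈ range p, f i) * g2 = g1 * D' ^ p := by
    rw [← sub_eq_zero]
    apply transc_zero ht
    · rw [lifts_iff_liftsRing]
      have hfl : ∀ i, f i ∈ liftsRing A.subtype := by
        intro i
        rw [← lifts_iff_liftsRing, lifts_iff_coeff_lifts]
        intro n
        rw [hf, coeff_map]
        exact ⟨⟨_, hA i _⟩, rfl⟩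
      have hDl : D' ∈ liftsRing A.subtype := by
        rw [← lifts_iff_liftsRing, lifts_iff_coeff_lifts]
        intro n
        rw [hD', coeff_map]
        exact ⟨⟨_, hFA (D.coeff n).2⟩, rfl⟩
      exact sub_mem (mul_mem (prod_mem fun i _ => hfl i) ⟨G2, rfl⟩) (mul_mem ⟨G1, rfl⟩ (pow_mem hDl _))
    · have e1 : g1.eval t = aeval t G1 := by rw [hg1, eval_map]; rfl
      have e2 : g2.eval t = aeval t G2 := by rw [hg2, eval_map]; rfl
      have e3 : D'.eval t = aeval t D := by rw [hD', eval_map]; rfl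
      have e4 : ∏ i ∈ range p, (f i).eval t = c * aeval t D ^ p := by
        rw [← hq, prod_congr rfl fun i _ => (hQ (ζ ^ i * x)).symm, prod_mul_distrib]; simp
      rw [eval_sub, eval_mul, eval_mul, eval_pow, eval_prod, e1, e2, e3, e4, ← hc]
      ring
  have hne : (∏ i ∈ range p, f i) * g2 ≠ 0 := by rw [key]; exact mul_ne_zero hg10 (pow_ne_zero _ hD'0)
  have hg20 : g2 ≠ 0 := right_ne_zero_of_mul hne
  have hfp := left_ne_zero_of_mul hne
  have hf0 : ∀ i ∈ range p, f i ≠ 0 := prod_ne_zero_iff.1 hfp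
  have hcz : ∀ i n, (f i).coeff n = 0 ↔ (X ^ p - C (⟨x ^ p, hxp⟩ : F)) ∣ Q.coeff n := by
    intro i n
    rw [hf, coeff_map]
    exact conj_iff hp hζ hζF hxp hx _ i
  obtain ⟨i0, hi0⟩ : ∃ i0, i0 = 0 := ⟨0, rfl⟩
  set n := (f 0).natTrailingDegree with hn
  have hnd : ∀ i ∈ range p, (f i).natTrailingDegree = n := by
    intro i hi
    apply le_antisymm
    · apply natTrailingDegree_le_of_ne_zero
      rw [Ne, hcz, ← hcz 0]
      exact fun h => hf0 0 (mem_range.2 hp.pos) (trailingCoeff_eq_zero.1 h)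
    · apply natTrailingDegree_le_of_ne_zero
      rw [Ne, hcz, ← hcz i]
      exact fun h => hf0 i hi (trailingCoeff_eq_zero.1 h)
  obtain ⟨k1, k2⟩ := ntd_prod (range p) f hf0
  have hDp := ntd_prod (range p) (fun _ => D') (fun _ _ => hD'0)
  simp only [prod_const, sum_const, card_range, smul_eq_mul] at hDp
  have t1 := congrArg natTrailingDegree key
  have t2 := congrArg trailingCoeff key
  rw [natTrailingDegree_mul hfp hg20, natTrailingDegree_mul hg10 (pow_ne_zero _ hD'0), hDp.1, k1, sum_congr rfl hnd] at t1
  rw [trailingCoeff_mul, trailingCoeff_mul, hDp.2, k2] at t2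
  have mapntd : ∀ G : A[X], (G.map A.subtype).natTrailingDegree = G.natTrailingDegree := by
    intro G
    by_cases hG : G = 0
    · simp [hG]
    apply le_antisymm
    · apply natTrailingDegree_le_of_ne_zero
      rw [coeff_map, _root_.map_ne_zero]
      exact fun h => hG (trailingCoeff_eq_zero.1 h)
    · apply natTrailingDegree_le_of_ne_zero
      have : (G.map A.subtype).coeff (G.map A.subtype).natTrailingDegree ≠ 0 := 
        fun h => ((Polynomial.map_ne_zero_iff A.subtype_injective).2 hG) (trailingCoeff_eq_zero.1 h)
      rw [coeff_map] at this
      exact fun h => this (by rw [h, map_zero])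
  refine ⟨n, D'.natTrailingDegree, Q.coeff n, D.coeff D'.natTrailingDegree, ?_, ?_, ?_⟩
  · intro h
    apply hD'0
    rw [← trailingCoeff_eq_zero, trailingCoeff, hD', coeff_map, ← hD', h, map_zero]
  · rw [hg1, hg2, mapntd, mapntd] at t1
    simpa using t1
  · have e1 : g1.trailingCoeff = G1.trailingCoeff := by rw [trailingCoeff, hg1, mapntd, coeff_map]; rfl
    have e2 : g2.trailingCoeff = G2.trailingCoeff := by rw [trailingCoeff, hg2, mapntd, coeff_map]; rfl
    rw [e1, e2] at t2
    have e3 : D'.trailingCoeff = (D.coeff D'.natTrailingDegree : Om) := by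
      rw [trailingCoeff, hD', coeff_map]; rfl
    rw [← e3, ← t2]
    congr 1
    refine prod_congr rfl fun i hi => ?_
    rw [trailingCoeff, hnd i hi, hf, coeff_map]
    rfl

/-- norms from purely transcendental extensions -/
lemma lemmaV (hp : p.Prime) (hζ : IsPrimitiveRoot ζ p) {F A : Subfield Om} (hζF : ζ ∈ F) (hFA : F ≤ A) {x t : Om}
    (hxp : x ^ p ∈ F) (hx : x ∉ F) (hxA : x ∈ A) (ht : Transcendental A t) {c : Om} (hcF : c ∈ F)
    (hN : IsNm p ζ (adj F {t}) x c) : IsNm p ζ F x c := by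
  by_cases hc0 : c = 0
  · refine ⟨0, ?_⟩
    rw [prod_eq_zero (mem_range.2 hp.pos) (by simp), hc0]
  obtain ⟨n, m, q, d, hd, h1, h2⟩ := lemmaVW hp hζ hζF hFA hxp hx hxA ht hN (C ⟨c, hFA hcF⟩) 1
    (by rw [Ne, C_eq_zero]; exact fun h => hc0 (congrArg Subtype.val h)) (by simp; rfl)
  refine ⟨C d⁻¹ * q, ?_⟩
  simp only [map_mul, aeval_C, prod_mul_distrib, prod_const, card_range]
  have e1 : (C (⟨c, hFA hcF⟩ : A)).trailingCoeff = ⟨c, hFA hcF⟩ := by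
    rw [trailingCoeff, natTrailingDegree_C, coeff_C_zero]
  have e2 : (1 : A[X]).trailingCoeff = 1 := by
    rw [trailingCoeff, natTrailingDegree_one, coeff_one_zero]
  rw [e1, e2] at h2
  have hd' : (d : Om) ≠ 0 := fun h => hd (Subtype.ext h)
  have h3 : (∏ i ∈ range p, aeval (ζ ^ i * x) q) = c * d ^ p := by simpa using h2
  rw [h3, map_inv₀]
  change ((d : Om)⁻¹) ^ p * (c * d ^ p) = c
  rw [inv_pow, mul_comm, mul_assoc, mul_inv_cancel₀ (pow_ne_zero _ hd'), mul_one]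

end VW

end Part8

section Part9
set_option linter.all false
open Polynomial Finset
open scoped TensorProduct

/-- biquadratic-like Kummer tower -/
structure KTower (p : ℕ) (K : Type u) [Field K] (ζ α ℓ : K) where
  N : Type u
  [fN : Field N]
  [aN : Algebra K N]
  m : N
  l : N
  σ : N →ₐ[K] N
  τ : N →ₐ[K] N
  fr : Module.finrank K N = p ^ 2
  hm : m ^ p = algebraMap K N α
  hl : l ^ p = algebraMap K N ℓ
  σm : σ m = algebraMap K N ζ * m
  σl : σ l = l
  τm : τ m = m
  τl : τ l = algebraMap K N ζ * l
  span : Algebra.adjoin K {m, l} = ⊤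
  lift : ∀ (E : Type u) [Field E] [Algebra K E] (x y : E), x ^ p = algebraMap K E α →
    y ^ p = algebraMap K E ℓ → ∃ ι : N →ₐ[K] E, ι m = x ∧ ι l = y

attribute [instance] KTower.fN KTower.aN

section
variable {p : ℕ} {K : Type u} [Field K] {ζ α ℓ : K}

lemma exists_KTower (hp : p.Prime) (hζ : IsPrimitiveRoot ζ p) (hα : ∀ r : K, r ^ p ≠ α)
    (hℓ : ∀ r : AdjoinRoot (X ^ p - C α), r ^ p ≠ AdjoinRoot.of _ ℓ) : Nonempty (KTower p K ζ α ℓ) := by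
  haveI i1 : Fact (Irreducible (X ^ p - C α)) := ⟨X_pow_sub_C_irreducible_of_prime hp hα⟩
  let M := AdjoinRoot (X ^ p - C α)
  let ℓM : M := AdjoinRoot.of _ ℓ
  haveI i2 : Fact (Irreducible (X ^ p - C ℓM)) := ⟨X_pow_sub_C_irreducible_of_prime hp hℓ⟩
  let N := AdjoinRoot (X ^ p - C ℓM)
  let m0 : M := AdjoinRoot.root _
  have hm0 : m0 ^ p = AdjoinRoot.of _ α := by
    have := AdjoinRoot.eval₂_root (X ^ p - C α)
    rwa [eval₂_sub, eval₂_X_pow, eval₂_C, sub_eq_zero] at this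
  let l : N := AdjoinRoot.root _
  have hl : l ^ p = AdjoinRoot.of _ ℓM := by
    have := AdjoinRoot.eval₂_root (X ^ p - C ℓM)
    rwa [eval₂_sub, eval₂_X_pow, eval₂_C, sub_eq_zero] at this
  let m : N := AdjoinRoot.of _ m0
  have kM : ∀ r : K, AdjoinRoot.of (X ^ p - C α) r = algebraMap K M r := fun r => rfl
  have kN : ∀ r : K, AdjoinRoot.of (X ^ p - C ℓM) (algebraMap K M r) = algebraMap K N r := fun r => rfl
  have hm : m ^ p = algebraMap K N α := by
    rw [← kN, ← kM, ← hm0, map_pow]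
  have hl' : l ^ p = algebraMap K N ℓ := by rw [hl]; rfl
  have hζM : ∀ (E : Type u) [Field E] [Algebra K E], (algebraMap K E ζ) ^ p = 1 := by
    intro E _ _
    rw [← map_pow, hζ.pow_eq_one, map_one]
  let σM : M →ₐ[K] M := AdjoinRoot.liftAlgHom _ (Algebra.ofId K M) (algebraMap K M ζ * m0) (by
    rw [eval₂_sub, eval₂_X_pow, eval₂_C, mul_pow, hζM, one_mul, hm0, kM, sub_eq_zero]; rfl)
  let jM : M →ₐ[K] N := AdjoinRoot.ofAlgHom K _
  have hjM : ∀ x, jM x = AdjoinRoot.of _ x := fun x => rfl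
  let σ : N →ₐ[K] N := AdjoinRoot.liftAlgHom _ (jM.comp σM) l (by
    rw [eval₂_sub, eval₂_X_pow, eval₂_C, hl', sub_eq_zero]
    change _ = (jM.comp σM) (algebraMap K M ℓ)
    rw [AlgHom.commutes])
  let τ : N →ₐ[K] N := AdjoinRoot.liftAlgHom _ jM (algebraMap K N ζ * l) (by
    rw [eval₂_sub, eval₂_X_pow, eval₂_C, mul_pow, hζM, one_mul, hl', sub_eq_zero]
    change _ = jM (algebraMap K M ℓ)
    rw [AlgHom.commutes])
  have hof : ∀ x : M, AdjoinRoot.of (X ^ p - C ℓM) x ∈ Algebra.adjoin K {m, l} := by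
    intro x
    induction x using AdjoinRoot.induction_on with
    | ih q =>
      have : AdjoinRoot.of (X ^ p - C ℓM) (AdjoinRoot.mk _ q) = aeval m q := by
        have e1 : AdjoinRoot.mk (X ^ p - C α) q = aeval m0 q := (AdjoinRoot.aeval_eq q).symm
        rw [e1, ← hjM, ← aeval_algHom_apply]; rfl
      rw [this]
      exact aeval_mem_adjoin_singleton K m |> fun h => Algebra.adjoin_mono (by simp) h
  refine ⟨{ N := N, m := m, l := l, σ := σ, τ := τ, fr := ?_, hm := hm, hl := hl', σm := ?_, σl := ?_, τm := ?_, τl := ?_, span := ?_, lift := ?_ }⟩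
  · have f1 : Module.finrank K M = p := by
      rw [(AdjoinRoot.powerBasis' (monic_X_pow_sub_C α hp.ne_zero)).finrank, AdjoinRoot.powerBasis'_dim,
        natDegree_X_pow_sub_C]
    have f2 : Module.finrank M N = p := by
      rw [(AdjoinRoot.powerBasis' (monic_X_pow_sub_C ℓM hp.ne_zero)).finrank, AdjoinRoot.powerBasis'_dim,
        natDegree_X_pow_sub_C]
    rw [← Module.finrank_mul_finrank K M N, f1, f2, sq]
  · change σ (AdjoinRoot.of _ m0) = _
    rw [AdjoinRoot.liftAlgHom_of, AlgHom.comp_apply, AdjoinRoot.liftAlgHom_root, map_mul, AlgHom.commutes]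
    rfl
  · exact AdjoinRoot.liftAlgHom_root ..
  · exact AdjoinRoot.liftAlgHom_of ..
  · exact AdjoinRoot.liftAlgHom_root ..
  · rw [eq_top_iff]
    rintro x -
    induction x using AdjoinRoot.induction_on with
    | ih q =>
      induction q using Polynomial.induction_on' with
      | add f g hf hg => rw [map_add]; exact add_mem hf hg
      | monomial n a =>
        rw [← C_mul_X_pow_eq_monomial, map_mul, map_pow, AdjoinRoot.mk_C, AdjoinRoot.mk_X]
        exact mul_mem (hof a) (pow_mem (Algebra.subset_adjoin (by simp [l])) _)
  · intro E _ _ x y hx hy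
    let f : M →ₐ[K] E := AdjoinRoot.liftAlgHom _ (Algebra.ofId K E) x (by
      rw [eval₂_sub, eval₂_X_pow, eval₂_C, hx, sub_eq_zero]; rfl)
    let g : N →ₐ[K] E := AdjoinRoot.liftAlgHom _ f y (by
      rw [eval₂_sub, eval₂_X_pow, eval₂_C, hy, sub_eq_zero]
      change _ = f (algebraMap K M ℓ)
      rw [AlgHom.commutes])
    refine ⟨g, ?_, ?_⟩
    · change g (AdjoinRoot.of _ m0) = x
      rw [AdjoinRoot.liftAlgHom_of]
      exact AdjoinRoot.liftAlgHom_root ..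
    · exact AdjoinRoot.liftAlgHom_root ..

namespace KTower
variable (T : KTower p K ζ α ℓ)

lemma σ_it_m (i : ℕ) : T.σ^[i] T.m = algebraMap K T.N (ζ ^ i) * T.m := by
  induction i with
  | zero => simp
  | succ i ih => rw [Function.iterate_succ_apply', ih, map_mul, AlgHom.commutes, T.σm, pow_succ, map_mul]; ring

lemma τ_it_l (i : ℕ) : T.τ^[i] T.l = algebraMap K T.N (ζ ^ i) * T.l := by
  induction i with
  | zero => simp
  | succ i ih => rw [Function.iterate_succ_apply', ih, map_mul, AlgHom.commutes, T.τl, pow_succ, map_mul]; ring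

lemma ext2 {E : Type*} [Ring E] [Algebra K E] {f g : T.N →ₐ[K] E} (h1 : f T.m = g T.m) (h2 : f T.l = g T.l) : f = g := by
  apply AlgHom.ext_of_adjoin_eq_top T.span
  rintro x (rfl | rfl)
  · exact h1
  · exact h2

lemma coe_pow_apply (f : T.N →ₐ[K] T.N) (i : ℕ) (x : T.N) : (f ^ i) x = f^[i] x := by
  rw [AlgHom.coe_pow]

lemma σp (hζ : IsPrimitiveRoot ζ p) (x : T.N) : T.σ^[p] x = x := by
  rw [← coe_pow_apply]
  have : T.σ ^ p = AlgHom.id K T.N := by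
    apply T.ext2
    · rw [coe_pow_apply, σ_it_m, hζ.pow_eq_one]; simp
    · rw [coe_pow_apply, Function.iterate_fixed T.σl]; simp
  rw [this]; rfl

lemma τp (hζ : IsPrimitiveRoot ζ p) (x : T.N) : T.τ^[p] x = x := by
  rw [← coe_pow_apply]
  have : T.τ ^ p = AlgHom.id K T.N := by
    apply T.ext2
    · rw [coe_pow_apply, Function.iterate_fixed T.τm]; simp
    · rw [coe_pow_apply, τ_it_l, hζ.pow_eq_one]; simp
  rw [this]; rfl

lemma comm (x : T.N) : T.σ (T.τ x) = T.τ (T.σ x) := by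
  have : T.σ.comp T.τ = T.τ.comp T.σ := by
    apply T.ext2
    · simp [T.τm, T.σm]
    · simp [T.τl, T.σl]
  exact congrArg (fun f => f x) this

lemma exists_poly (x : T.N) : ∃ q : K[X][X], x = q.eval₂ (aeval T.m : K[X] →ₐ[K] T.N).toRingHom T.l := by
  have hx : x ∈ Algebra.adjoin K {T.m, T.l} := by rw [T.span]; trivial
  induction hx using Algebra.adjoin_induction with
  | mem x hx =>
    rcases hx with rfl | rfl
    · exact ⟨C X, by simp⟩
    · exact ⟨X, by simp⟩
  | algebraMap r => exact ⟨C (C r), by simp⟩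
  | add x y _ _ hx hy =>
    obtain ⟨q, hq⟩ := hx
    obtain ⟨r, hr⟩ := hy
    exact ⟨q + r, by rw [eval₂_add, ← hq, ← hr]⟩
  | mul x y _ _ hx hy =>
    obtain ⟨q, hq⟩ := hx
    obtain ⟨r, hr⟩ := hy
    exact ⟨q * r, by rw [eval₂_mul, ← hq, ← hr]⟩

lemma τ_aeval (q : K[X]) : T.τ (aeval T.m q) = aeval T.m q := by
  rw [← aeval_algHom_apply, T.τm]

lemma τ_fixed [CharZero K] (hp : 0 < p) (hζ : IsPrimitiveRoot ζ p) {x : T.N} (hx : T.τ x = x) :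
    ∃ q : K[X], x = aeval T.m q := by
  have h1 : ∀ q : K[X][X], ∃ r : K[X],
      ∑ j ∈ range p, T.τ^[j] (q.eval₂ (aeval T.m : K[X] →ₐ[K] T.N).toRingHom T.l) = aeval T.m r := by
    intro q
    induction q using Polynomial.induction_on' with
    | add f g hf hg =>
      obtain ⟨r, hr⟩ := hf
      obtain ⟨s, hs⟩ := hg
      refine ⟨r + s, ?_⟩
      simp_rw [eval₂_add, iterate_map_add]
      rw [sum_add_distrib, hr, hs, map_add]
    | monomial k a =>
      have h2 : ∀ j ∈ range p, T.τ^[j] ((monomial k a).eval₂ (aeval T.m : K[X] →ₐ[K] T.N).toRingHom T.l) =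
          aeval T.m a * algebraMap K T.N (ζ ^ (k * j)) * T.l ^ k := by
        intro j _
        rw [eval₂_monomial, iterate_map_mul, iterate_map_pow, τ_it_l]
        have : T.τ^[j] (aeval T.m a) = aeval T.m a := Function.iterate_fixed (T.τ_aeval a) j
        rw [mul_pow, ← map_pow, ← pow_mul, mul_comm j k]
        simp [this]; ring
      rw [sum_congr rfl h2, ← sum_mul, ← mul_sum, ← map_sum, geom_zero hζ]
      split_ifs with h
      · obtain ⟨e, rfl⟩ := h
        refine ⟨a * C (p * ℓ ^ e), ?_⟩
        rw [pow_mul, T.hl, map_mul, aeval_C, map_mul, map_pow]; ring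
      · exact ⟨0, by simp⟩
  obtain ⟨q, hq⟩ := T.exists_poly x
  obtain ⟨r, hr⟩ := h1 q
  rw [← hq, sum_congr rfl (fun j _ => Function.iterate_fixed hx j)] at hr
  refine ⟨C (p : K)⁻¹ * r, ?_⟩
  rw [map_mul, ← hr, aeval_C, map_inv₀]
  have : ((p : K)) ≠ 0 := Nat.cast_ne_zero.2 hp.ne'
  have h3 : (algebraMap K T.N (p : K)) ≠ 0 := (_root_.map_ne_zero _).2 this
  rw [sum_const, card_range, nsmul_eq_mul, ← map_natCast (algebraMap K T.N), inv_mul_cancel_left₀ h3]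

end KTower
end

end Part9

section Part10
set_option linter.all false
open Polynomial Finset
open scoped TensorProduct

section
variable {p : ℕ} {Om : Type u} [Field Om] {ζ : Om}

lemma aeval_mem_sub {F A : Subfield Om} (hFA : F ≤ A) {x : Om} (hx : x ∈ A) (q : F[X]) : aeval x q ∈ A := by
  rw [aeval_eq_sum_range]
  refine sum_mem fun k _ => ?_
  rw [Algebra.smul_def]
  exact mul_mem (hFA (q.coeff k).2) (pow_mem hx _)

lemma eq_zeta_mul (hp : p.Prime) (hζ : IsPrimitiveRoot ζ p) {x y : Om} (h : x ^ p = y ^ p) : ∃ i, x = ζ ^ i * y := by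
  by_cases hy : y = 0
  · refine ⟨0, ?_⟩
    rw [hy, zero_pow hp.ne_zero] at h
    rw [hy, mul_zero]; exact pow_eq_zero_iff hp.ne_zero |>.1 h
  · haveI : NeZero p := ⟨hp.ne_zero⟩
    obtain ⟨i, -, hi⟩ := hζ.eq_pow_of_pow_eq_one (ξ := x / y) (by rw [div_pow, h, div_self (pow_ne_zero _ hy)])
    exact ⟨i, by rw [hi, div_mul_cancel₀ _ hy]⟩

lemma zeta_sub (hζ : IsPrimitiveRoot ζ p) {F : Subfield Om} (hζF : ζ ∈ F) : IsPrimitiveRoot (⟨ζ, hζF⟩ : F) p :=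
  IsPrimitiveRoot.of_map_of_injective (f := F.subtype) hζ F.subtype_injective

lemma not_pow_sub (hp : p.Prime) (hζ : IsPrimitiveRoot ζ p) {F : Subfield Om} (hζF : ζ ∈ F) {x : Om} (hxp : x ^ p ∈ F)
    (hx : x ∉ F) (r : F) : r ^ p ≠ ⟨x ^ p, hxp⟩ :=
  not_pow_of_div (ℓ := (⟨x ^ p, hxp⟩ : F)) hp (zeta_sub hζ hζF) (x := x) rfl (fun r h => hx (h ▸ r.2)) r

lemma tower_of (hp : p.Prime) (hζ : IsPrimitiveRoot ζ p) {F : Subfield Om} (hζF : ζ ∈ F) {μ lam : Om}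
    (hμp : μ ^ p ∈ F) (hμ : μ ∉ F) (hlp : lam ^ p ∈ F) (hl : lam ∉ adj F {μ}) :
    Nonempty (KTower p F ⟨ζ, hζF⟩ ⟨μ ^ p, hμp⟩ ⟨lam ^ p, hlp⟩) := by
  refine exists_KTower hp (zeta_sub hζ hζF) (not_pow_sub hp hζ hζF hμp hμ) ?_
  intro r hr
  have hg : eval₂ ((Algebra.ofId F Om : F →ₐ[F] Om) : F →+* Om) μ (X ^ p - C (⟨μ ^ p, hμp⟩ : F)) = 0 := by
    rw [eval₂_sub, eval₂_X_pow, eval₂_C, sub_eq_zero]; rfl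
  let g : AdjoinRoot (X ^ p - C (⟨μ ^ p, hμp⟩ : F)) →ₐ[F] Om := AdjoinRoot.liftAlgHom _ (Algebra.ofId F Om) μ hg
  have h1 : g r ∈ adj F {μ} := by
    induction r using AdjoinRoot.induction_on with
    | ih q =>
      have : g (AdjoinRoot.mk _ q) = aeval μ q := AdjoinRoot.lift_mk hg q
      rw [this]
      exact aeval_mem_sub (le_adj F {μ}) (mem_adj F (Set.mem_singleton μ)) q
  have h2 : lam ^ p = (g r) ^ p := by
    rw [← map_pow, hr]
    exact (AdjoinRoot.liftAlgHom_of _ (Algebra.ofId F Om) μ hg ⟨lam ^ p, hlp⟩).symm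
  obtain ⟨i, hi⟩ := eq_zeta_mul hp hζ h2
  apply hl
  rw [hi]
  exact mul_mem (pow_mem (le_adj _ _ hζF) _) h1

/-- lifting a polynomial expression -/
lemma lift_expr {E : Type*} [Field E] (θ : E →+* E) (S : Subfield E) (hS : ∀ e ∈ S, θ e = e) {x z : E}
    (hz : θ z = z) (hx : θ x = z * x) (j : E →+* Om) (G : Subfield Om) (hG : G ≤ S.map j) (q : G[X]) :
    ∃ e : E, (∀ θ' : E →+* E, (∀ e ∈ S, θ' e = e) → θ' x = x → θ' e = e) ∧
      ∀ i, j (θ^[i] e) = aeval (j z ^ i * j x) q := by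
  let g : S →+* Om := j.comp S.subtype
  have h1 : q.map G.subtype ∈ lifts g := by
    rw [lifts_iff_coeff_lifts]
    intro n
    rw [coeff_map]
    obtain ⟨e, he, h2⟩ := hG (q.coeff n).2
    exact ⟨⟨e, he⟩, h2⟩
  obtain ⟨q1, hq1⟩ := h1
  have hq1 : q1.map g = q.map G.subtype := hq1
  have hev : ∀ θ' : E →+* E, (∀ e ∈ S, θ' e = e) → ∀ y, θ' (eval₂ S.subtype y q1) = eval₂ S.subtype (θ' y) q1 := by
    intro θ' h y
    rw [hom_eval₂]
    congr 1
    ext e; exact h _ e.2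
  have hit : ∀ i, θ^[i] (eval₂ S.subtype x q1) = eval₂ S.subtype (z ^ i * x) q1 := by
    intro i
    induction i with
    | zero => simp
    | succ i ih =>
      rw [Function.iterate_succ_apply', ih, hev θ hS, map_mul, map_pow, hz, hx, pow_succ, mul_assoc]
  refine ⟨eval₂ S.subtype x q1, ?_, ?_⟩
  · intro θ' h h'
    rw [hev θ' h, h']
  · intro i
    rw [hit, hom_eval₂, map_mul, map_pow, ← eval_map]
    change eval _ (q1.map g) = _
    rw [hq1, eval_map]; rfl

lemma map_nm {E : Type*} [Field E] (θ : E →+* E) (j : E →+* Om) (e : E) :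
    j (nm p θ e) = ∏ i ∈ range p, j (θ^[i] e) := by
  unfold nm; rw [map_prod]

lemma tower_iota {F : Subfield Om} {ζF : F} {μ lam : Om}
    {hμp : μ ^ p ∈ F} {hlp : lam ^ p ∈ F} (T : KTower p F ζF ⟨μ ^ p, hμp⟩ ⟨lam ^ p, hlp⟩) :
    ∃ ι : T.N →ₐ[F] Om, ι T.m = μ ∧ ι T.l = lam := T.lift Om μ lam rfl rfl

lemma norm_of_isNm {F : Subfield Om} {hζF : ζ ∈ F} {μ lam : Om}
    {hμp : μ ^ p ∈ F} {hlp : lam ^ p ∈ F} (T : KTower p F ⟨ζ, hζF⟩ ⟨μ ^ p, hμp⟩ ⟨lam ^ p, hlp⟩) (c : F)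
    (h : IsNm p ζ (adj F {μ}) lam c) : ∃ z, nm p T.τ z = algebraMap F T.N c := by
  obtain ⟨ι, hι1, hι2⟩ := tower_iota T
  obtain ⟨q, hq⟩ := h
  obtain ⟨e, -, he⟩ := lift_expr (T.τ : T.N →+* T.N) (RingHom.eqLocusField (T.τ : T.N →+* T.N) (RingHom.id _))
    (fun e he => he) (x := T.l) (z := algebraMap F T.N ⟨ζ, hζF⟩) (T.τ.commutes _) T.τl (ι : T.N →+* Om) (adj F {μ})
    (adj_le (fun x hx => ⟨algebraMap F T.N ⟨x, hx⟩, T.τ.commutes _, ι.commutes _⟩) (by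
      rintro x rfl
      exact ⟨T.m, T.τm, hι1⟩)) q
  refine ⟨e, (ι : T.N →+* Om).injective ?_⟩
  have h1 := map_nm (p := p) (T.τ : T.N →+* T.N) (ι : T.N →+* Om) e
  rw [prod_congr rfl fun i _ => he i] at h1
  have h2 : (ι : T.N →+* Om) (algebraMap F T.N ⟨ζ, hζF⟩) = ζ := ι.commutes _
  have h3 : (ι : T.N →+* Om) T.l = lam := hι2
  rw [h2, h3, hq] at h1
  exact h1.trans (ι.commutes c).symm

lemma isNm_of_norm {F : Subfield Om} {hζF : ζ ∈ F} {μ lam : Om}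
    {hμp : μ ^ p ∈ F} {hlp : lam ^ p ∈ F} (T : KTower p F ⟨ζ, hζF⟩ ⟨μ ^ p, hμp⟩ ⟨lam ^ p, hlp⟩) (c : F)
    (h : ∃ z, nm p T.τ z = algebraMap F T.N c) : IsNm p ζ (adj F {μ}) lam c := by
  obtain ⟨ι, hι1, hι2⟩ := tower_iota T
  obtain ⟨z, hz⟩ := h
  obtain ⟨q, rfl⟩ := T.exists_poly z
  let f : F[X] →+* adj F {μ} := (aeval μ : F[X] →ₐ[F] Om).toRingHom.codRestrict (adj F {μ})
    (fun q => aeval_mem_sub (le_adj F {μ}) (mem_adj F (Set.mem_singleton μ)) q)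
  refine ⟨q.map f, ?_⟩
  have h2 : ∀ i, ι (T.τ^[i] (q.eval₂ (aeval T.m : F[X] →ₐ[F] T.N).toRingHom T.l)) = aeval (ζ ^ i * lam) (q.map f) := by
    intro i
    have e1 : T.τ^[i] (q.eval₂ (aeval T.m : F[X] →ₐ[F] T.N).toRingHom T.l) =
        q.eval₂ (aeval T.m : F[X] →ₐ[F] T.N).toRingHom (algebraMap F T.N (⟨ζ, hζF⟩ ^ i) * T.l) := by
      rw [← T.τ_it_l, ← T.coe_pow_apply, ← T.coe_pow_apply]
      change ((T.τ ^ i : T.N →ₐ[F] T.N) : T.N →+* T.N) _ = _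
      rw [hom_eval₂]
      congr 1
      apply RingHom.ext
      intro r
      change (T.τ ^ i) (aeval T.m r) = aeval T.m r
      rw [T.coe_pow_apply]
      exact Function.iterate_fixed (T.τ_aeval r) i
    rw [e1]
    change (ι : T.N →+* Om) _ = _
    rw [hom_eval₂, aeval_def, eval₂_map]
    have e2 : (ι : T.N →+* Om) (algebraMap F T.N (⟨ζ, hζF⟩ ^ i) * T.l) = ζ ^ i * lam := by
      change ι _ = _
      rw [map_mul, ι.commutes, hι2]; rfl
    rw [e2]
    congr 1
    apply RingHom.ext
    intro r
    change ι (aeval T.m r) = aeval μ r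
    rw [← aeval_algHom_apply, hι1]
  rw [← prod_congr rfl fun i _ => h2 i]
  have h3 := congrArg ι hz
  unfold nm at h3
  rw [map_prod, ι.commutes] at h3
  exact h3

end

end Part10

section Part11
set_option linter.all false
open Polynomial Finset
open scoped TensorProduct

section
variable {p : ℕ}

lemma trace_lemma {E : Type*} [Field E] [CharZero E] (hp : 0 < p) (θ : E →+* E) {z0 l z : E}
    (hζ : IsPrimitiveRoot z0 p) (hz0 : θ z0 = z0) (hl0 : l ≠ 0) (hl : θ l = z0 * l) (hz : θ^[p] z = z) :
    ∃ y : ℕ → E, (∀ k, θ (y k) = y k) ∧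
      (∀ θ' : E →+* E, (∀ e, θ' (θ e) = θ (θ' e)) → θ' z = z → θ' l = l → ∀ k, θ' (y k) = y k) ∧
      ∀ i, θ^[i] z = ∑ k ∈ range p, y k * (z0 ^ i * l) ^ k := by
  have hlit : ∀ i, θ^[i] l = z0 ^ i * l := by
    intro i
    induction i with
    | zero => simp
    | succ i ih => rw [Function.iterate_succ_apply', ih, map_mul, map_pow, hz0, hl]; ring
  have hp0 : (p : E) ≠ 0 := Nat.cast_ne_zero.2 hp.ne'
  have hyfix : ∀ k, θ ((p : E)⁻¹ * ∑ j ∈ range p, θ^[j] (z * (l ^ k)⁻¹)) =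
      (p : E)⁻¹ * ∑ j ∈ range p, θ^[j] (z * (l ^ k)⁻¹) := by
    intro k
    rw [map_mul, map_inv₀, map_natCast, map_sum]
    congr 1
    have h1 := sum_range_succ' (fun j => θ^[j] (z * (l ^ k)⁻¹)) p
    rw [sum_range_succ] at h1
    have h2 : θ^[p] (z * (l ^ k)⁻¹) = z * (l ^ k)⁻¹ := by
      rw [iterate_map_mul, hz, ← RingHom.coe_pow, map_inv₀, map_pow, RingHom.coe_pow, hlit, hζ.pow_eq_one, one_mul]
    rw [h2] at h1
    simp only [Function.iterate_succ_apply', Function.iterate_zero, id] at h1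
    exact (add_right_cancel h1).symm
  refine ⟨fun k => (p : E)⁻¹ * ∑ j ∈ range p, θ^[j] (z * (l ^ k)⁻¹), hyfix, ?_, ?_⟩
  · intro θ' hcomm h1 h2 k
    rw [map_mul, map_inv₀, map_natCast, map_sum]
    congr 1
    refine sum_congr rfl fun j _ => ?_
    have h3 : ∀ e, θ' (θ^[j] e) = θ^[j] (θ' e) := fun e =>
      (Function.Commute.iterate_right (f := θ') (g := θ) hcomm j) e
    rw [h3, map_mul, map_inv₀, map_pow, h1, h2]
  · have hbase : z = ∑ k ∈ range p, ((p : E)⁻¹ * ∑ j ∈ range p, θ^[j] (z * (l ^ k)⁻¹)) * l ^ k := by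
      have e1 : ∀ k ∈ range p, ((p : E)⁻¹ * ∑ j ∈ range p, θ^[j] (z * (l ^ k)⁻¹)) * l ^ k =
          ∑ j ∈ range p, (p : E)⁻¹ * θ^[j] z * (z0⁻¹) ^ (j * k) := by
        intro k _
        rw [mul_sum, sum_mul]
        refine sum_congr rfl fun j _ => ?_
        rw [iterate_map_mul, ← RingHom.coe_pow, map_inv₀, map_pow, RingHom.coe_pow, hlit, mul_pow, ← pow_mul, mul_inv,
          inv_pow]
        have := pow_ne_zero k hl0
        field_simp
      rw [sum_congr rfl e1, sum_comm]
      simp_rw [← mul_sum, geom_zero hζ.inv]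
      rw [sum_eq_single 0]
      · simp [hp0]
        field_simp
      · intro j hj h0
        rw [if_neg, mul_zero]
        exact fun h => h0 (Nat.eq_zero_of_dvd_of_lt h (mem_range.1 hj))
      · intro h; exact absurd (mem_range.2 hp) h
    intro i
    conv_lhs => rw [hbase]
    rw [← RingHom.coe_pow, map_sum]
    refine sum_congr rfl fun k _ => ?_
    rw [map_mul, map_pow, RingHom.coe_pow, hlit, Function.iterate_fixed (hyfix k)]

lemma frac_ext {R : Type*} [CommRing R] [IsDomain R] (θ : R →+* R) (hθ : Function.Injective θ) :
    ∃ θE : FractionRing R →+* FractionRing R, ∀ a, θE (algebraMap R _ a) = algebraMap R _ (θ a) := by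
  have hinj : Function.Injective ((algebraMap R (FractionRing R)).comp θ) :=
    (IsFractionRing.injective R (FractionRing R)).comp hθ
  refine ⟨IsFractionRing.lift hinj, fun a => ?_⟩
  rw [IsFractionRing.lift_algebraMap]; rfl

lemma frac_comm {R : Type*} [CommRing R] [IsDomain R] (θ η : R →+* R) (h : ∀ a, θ (η a) = η (θ a))
    (θE ηE : FractionRing R →+* FractionRing R) (h1 : ∀ a, θE (algebraMap R _ a) = algebraMap R _ (θ a))
    (h2 : ∀ a, ηE (algebraMap R _ a) = algebraMap R _ (η a)) (e : FractionRing R) : θE (ηE e) = ηE (θE e) := by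
  obtain ⟨a, b, hb, rfl⟩ := IsFractionRing.div_surjective (A := R) e
  simp only [map_div₀, h1, h2, h]

variable {Om : Type u} [Field Om] {ζ : Om} [CharZero Om]

set_option maxHeartbeats 1000000 in
lemma move2 [Fact p.Prime] (hζ : IsPrimitiveRoot ζ p) {F A : Subfield Om} (hζF : ζ ∈ F) (hFA : F ≤ A) {μ lam : Om}
    (hμp : μ ^ p ∈ F) (hμ : μ ∉ F) (hμA : μ ∈ A) (hlp : lam ^ p ∈ F) (hl : lam ∉ adj F {μ}) (hlA : lam ∈ A)
    {v : ZMod p → Om} (hv : AlgebraicIndependent A v) {c : Om} (hcF : c ∈ F) (hc0 : c ≠ 0)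
    (hnot : ¬ IsNm p ζ (adj F {μ}) lam c) :
    ∃ F' : Subfield Om, F ≤ F' ∧ F' ≤ adj A (Set.range v) ∧ IsNm p ζ F' lam c ∧
      ∀ s ∈ F, IsNm p ζ F' μ s → IsNm p ζ F μ s := by
  have hp : p.Prime := Fact.out
  obtain ⟨T⟩ := tower_of hp hζ hζF hμp hμ hlp hl
  obtain ⟨ι, hι1, hι2⟩ := tower_iota T
  have hζ' := zeta_sub hζ hζF
  set ζN : T.N := algebraMap F T.N ⟨ζ, hζF⟩ with hζN
  have hζN' : IsPrimitiveRoot ζN p := hζ'.map_of_injective (algebraMap F T.N).injective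
  set cN : T.N := algebraMap F T.N ⟨c, hcF⟩ with hcN
  have hιA : ∀ n, ι n ∈ A := by
    intro n
    obtain ⟨q, rfl⟩ := T.exists_poly n
    change (ι : T.N →+* Om) _ ∈ A
    rw [hom_eval₂, eval₂_eq_sum_range]
    refine sum_mem fun k _ => mul_mem ?_ (pow_mem ?_ _)
    · change ι (aeval T.m _) ∈ A
      rw [← aeval_algHom_apply, hι1]
      exact aeval_mem_sub hFA hμA _
    · change ι T.l ∈ A
      rw [hι2]; exact hlA
  haveI : CharZero T.N := charZero_of_injective_algebraMap (algebraMap F T.N).injective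
  let σ : T.N →+* T.N := T.σ
  let τ : T.N →+* T.N := T.τ
  have hσp : ∀ x, σ^[p] x = x := T.σp hζ'
  have hτp : ∀ x, τ^[p] x = x := T.τp hζ'
  have hcomm : ∀ x, σ (τ x) = τ (σ x) := T.comm
  have hσF : ∀ a : F, σ (algebraMap F T.N a) = algebraMap F T.N a := T.σ.commutes
  have hτF : ∀ a : F, τ (algebraMap F T.N a) = algebraMap F T.N a := T.τ.commutes
  have hcN0 : cN ≠ 0 := by
    rw [hcN, _root_.map_ne_zero]
    exact fun h => hc0 (congrArg Subtype.val h)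
  have hlam0 : T.l ≠ 0 := by
    intro h
    apply hl
    rw [← hι2, h, map_zero]; exact zero_mem _
  have hnotN : ∀ z, nm p τ z ≠ cN := by
    intro z hz
    exact hnot (isNm_of_norm T ⟨c, hcF⟩ ⟨z, hz⟩)
  let R := MvPolynomial (ZMod p) T.N
  let ιA : T.N →+* A := (ι : T.N →+* Om).codRestrict A hιA
  let j0 : R →+* Om := ((MvPolynomial.aeval v : MvPolynomial (ZMod p) A →ₐ[A] Om) : _ →+* Om).comp (MvPolynomial.map ιA)
  have hj0 : Function.Injective j0 := by
    have h1 : Function.Injective (MvPolynomial.aeval v : MvPolynomial (ZMod p) A →ₐ[A] Om) := hv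
    exact h1.comp (MvPolynomial.map_injective _ ιA.injective)
  have hj0C : ∀ n, j0 (MvPolynomial.C n) = ι n := by
    intro n
    have h1 : MvPolynomial.map ιA (MvPolynomial.C n : MvPolynomial (ZMod p) T.N) = MvPolynomial.C (ιA n) := MvPolynomial.map_C _ _
    have h2 := MvPolynomial.aeval_C (R := A) v (ιA n)
    exact (congrArg (MvPolynomial.aeval v : MvPolynomial (ZMod p) A →ₐ[A] Om) h1).trans h2
  have hj0X : ∀ k, j0 (MvPolynomial.X k) = v k := by
    intro k
    have h1 : MvPolynomial.map ιA (MvPolynomial.X k : MvPolynomial (ZMod p) T.N) = MvPolynomial.X k := MvPolynomial.map_X _ _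
    have h2 := MvPolynomial.aeval_X (R := A) v k
    exact (congrArg (MvPolynomial.aeval v : MvPolynomial (ZMod p) A →ₐ[A] Om) h1).trans h2
  let E := FractionRing R
  let j : E →+* Om := IsFractionRing.lift hj0
  have hj : ∀ a : R, j (algebraMap R E a) = j0 a := fun a => IsFractionRing.lift_algebraMap hj0 a
  have hRE : Function.Injective (algebraMap R E) := IsFractionRing.injective R E
  let κ : T.N →+* E := (algebraMap R E).comp MvPolynomial.C
  have hjκ : ∀ n, j (κ n) = ι n := fun n => (hj _).trans (hj0C n)
  haveI : CharZero E := charZero_of_injective_ringHom κ.injective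
  have hshi : Function.Injective (shf p τ cN) := by
    have hiter : ∀ i : ℕ, Function.Injective ((shf p τ cN)^[p]) := by
      intro i f g hfg
      rw [shf_iter_p τ hτp cN (hτF _), shf_iter_p τ hτp cN (hτF _)] at hfg
      ext m
      have h2 := congrArg (MvPolynomial.coeff m) hfg
      rw [coeff_scale, coeff_scale] at h2
      exact mul_left_cancel₀ (pow_ne_zero _ hcN0) h2
    intro f g hfg
    apply hiter 0
    have : ∀ i, (shf p τ cN)^[i + 1] f = (shf p τ cN)^[i + 1] g := by
      intro i; rw [Function.iterate_succ_apply, hfg, ← Function.iterate_succ_apply]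
    have h3 := this (p - 1)
    rwa [Nat.sub_add_cancel hp.pos] at h3
  have hmi := map_iter_p (p := p) σ hσp
  obtain ⟨σE, hσE⟩ := frac_ext (MvPolynomial.map σ : R →+* R) (iter_inj hp.pos _ hmi)
  obtain ⟨τE, hτE⟩ := frac_ext (shf p τ cN) hshi
  have hcommE : ∀ e, σE (τE e) = τE (σE e) := frac_comm _ _ (shf_comm σ τ hcomm cN (hσF _)) σE τE hσE hτE
  have hσκ : ∀ n, σE (κ n) = κ (σ n) := fun n =>
    (hσE (MvPolynomial.C n)).trans (congrArg (algebraMap R E) (MvPolynomial.map_C σ n))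
  have hτκ : ∀ n, τE (κ n) = κ (τ n) := fun n =>
    (hτE (MvPolynomial.C n)).trans (congrArg (algebraMap R E) (shf_C τ cN n))
  let S : Subfield E := RingHom.eqLocusField σE (RingHom.id E) ⊓ RingHom.eqLocusField τE (RingHom.id E)
  have hSσ : ∀ e ∈ S, σE e = e := fun e he => he.1
  have hSτ : ∀ e ∈ S, τE e = e := fun e he => he.2
  let F' := S.map j
  -- the generic norm element
  let u0 : E := algebraMap R E (MvPolynomial.X 0)
  have hu0 : u0 ≠ 0 := by
    intro h
    have : (MvPolynomial.X 0 : R) = 0 := hRE (by rw [map_zero]; exact h)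
    exact MvPolynomial.X_ne_zero _ this
  have hσu0 : σE u0 = u0 := (hσE _).trans (by rw [MvPolynomial.map_X])
  have hτit : ∀ i (a : R), τE^[i] (algebraMap R E a) = algebraMap R E ((shf p τ cN)^[i] a) := by
    intro i a
    exact (Function.Semiconj.iterate_right (f := algebraMap R E) (ga := shf p τ cN) (gb := τE)
      (fun a => (hτE a).symm) i a).symm
  have hσit : ∀ i (a : R), σE^[i] (algebraMap R E a) = algebraMap R E ((MvPolynomial.map σ)^[i] a) := by
    intro i a
    exact (Function.Semiconj.iterate_right (f := algebraMap R E) (ga := MvPolynomial.map σ) (gb := σE)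
      (fun a => (hσE a).symm) i a).symm
  have hτu0 : τE^[p] u0 = κ cN * u0 := by
    rw [hτit, shf_iter_X τ cN (hτF _), wgt_prod]
    simp [κ, u0]
  have hτEi : ∀ i, τE^[i] u0 ≠ 0 := by
    intro i h
    exact hu0 (τE.injective.iterate i (by rw [h, iterate_map_zero]))
  let z : E := τE u0 / u0
  have hzit : ∀ i, τE^[i] z = τE^[i + 1] u0 / τE^[i] u0 := by
    intro i
    rw [← RingHom.coe_pow, map_div₀, RingHom.coe_pow, ← Function.iterate_succ_apply]
  have hzp : τE^[p] z = z := by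
    rw [hzit, Function.iterate_succ_apply', hτu0, map_mul, hτκ]
    have : τ cN = cN := hτF _
    rw [this]
    have h3 : κ cN ≠ 0 := (_root_.map_ne_zero _).2 hcN0
    change _ = τE u0 / u0
    field_simp
  have hznm : ∏ i ∈ range p, τE^[i] z = κ cN := by
    have : ∀ i, ∏ k ∈ range i, τE^[k] z = τE^[i] u0 / u0 := by
      intro i
      induction i with
      | zero => simp [hu0]
      | succ i ih =>
        rw [prod_range_succ, ih, hzit]
        have := hτEi i
        field_simp
    rw [this, hτu0, mul_div_assoc, div_self hu0, mul_one]
  have hσz : σE z = z := by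
    change σE (τE u0 / u0) = τE u0 / u0
    rw [map_div₀, hcommE, hσu0]
  obtain ⟨y, hy1, hy2, hy3⟩ := trace_lemma hp.pos τE (z0 := κ ζN) (l := κ T.l) (z := z)
    (hζN'.map_of_injective κ.injective) ((hτκ _).trans (congrArg κ (hτF _))) ((_root_.map_ne_zero _).2 hlam0)
    ((hτκ _).trans (by rw [← map_mul]; exact congrArg κ T.τl)) hzp
  have hyS : ∀ k, y k ∈ S := fun k => ⟨hy2 σE hcommE hσz ((hσκ _).trans (congrArg κ T.σl)) k, hy1 k⟩
  refine ⟨F', ?_, ?_, ?_, ?_⟩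
  · intro a ha
    refine ⟨κ (algebraMap F T.N ⟨a, ha⟩), ⟨?_, ?_⟩, ?_⟩
    · exact (hσκ _).trans (congrArg κ (hσF _))
    · exact (hτκ _).trans (congrArg κ (hτF _))
    · exact (hjκ _).trans (ι.commutes _)
  · rintro _ ⟨e, -, rfl⟩
    obtain ⟨a, b, hb, rfl⟩ := IsFractionRing.div_surjective (A := R) e
    have hmem : ∀ a : R, j0 a ∈ adj A (Set.range v) := by
      intro a
      induction a using MvPolynomial.induction_on with
      | C n => rw [hj0C]; exact le_adj _ _ (hιA n)
      | add f g hf hg => rw [map_add]; exact add_mem hf hg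
      | mul_X f k hf => rw [map_mul, hj0X]; exact mul_mem hf (mem_adj _ ⟨k, rfl⟩)
    rw [map_div₀, hj, hj]
    exact div_mem (hmem a) (hmem b)
  · have hjy : ∀ k, j (y k) ∈ F' := fun k => ⟨y k, hyS k, rfl⟩
    refine ⟨∑ k ∈ range p, C (⟨j (y k), hjy k⟩ : F') * X ^ k, ?_⟩
    have h1 : ∀ i, aeval (ζ ^ i * lam) (∑ k ∈ range p, C (⟨j (y k), hjy k⟩ : F') * X ^ k) = j (τE^[i] z) := by
      intro i
      rw [hy3, map_sum, map_sum]
      refine sum_congr rfl fun k _ => ?_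
      rw [map_mul, aeval_C, map_pow, aeval_X, map_mul, map_pow, map_mul, map_pow, hjκ, hjκ, hι2, hζN, ι.commutes]
      rfl
    rw [prod_congr rfl fun i _ => h1 i, ← map_prod, hznm, hjκ, hcN, ι.commutes]
    rfl
  · rintro s hs ⟨q, hq⟩
    by_cases hs0 : s = 0
    · refine ⟨0, ?_⟩
      rw [prod_eq_zero (mem_range.2 hp.pos) (by simp), hs0]
    obtain ⟨f, hf1, hf2⟩ := lift_expr σE S hSσ (x := κ T.m) (z := κ ζN) ((hσκ _).trans (congrArg κ (hσF _)))
      ((hσκ _).trans (by rw [← map_mul]; exact congrArg κ T.σm)) j F' le_rfl q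
    have hτf : τE f = f := hf1 τE hSτ ((hτκ _).trans (congrArg κ T.τm))
    have hjm : j (κ T.m) = μ := (hjκ _).trans hι1
    have hjz : j (κ ζN) = ζ := (hjκ _).trans (ι.commutes _)
    set sN : T.N := algebraMap F T.N ⟨s, hs⟩ with hsN
    have hsN0 : sN ≠ 0 := by
      rw [hsN, _root_.map_ne_zero]
      exact fun h => hs0 (congrArg Subtype.val h)
    have hfn : nm p σE f = κ sN := by
      apply j.injective
      rw [map_nm, prod_congr rfl fun i _ => hf2 i, hjm, hjz, hq, hjκ, hsN, ι.commutes]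
      rfl
    obtain ⟨a, b, hb, rfl⟩ := IsFractionRing.div_surjective (A := R) f
    have hb0 : b ≠ 0 := nonZeroDivisors.ne_zero hb
    have hbE : algebraMap R E b ≠ 0 := fun h => hb0 (hRE (by rw [h, map_zero]))
    have ha0 : a ≠ 0 := by
      rintro rfl
      rw [map_zero, zero_div] at hfn
      unfold nm at hfn
      rw [prod_eq_zero (mem_range.2 hp.pos) rfl] at hfn
      exact hsN0 (κ.injective (by rw [← hfn, map_zero]))
    have hτb : τE (algebraMap R E b) ≠ 0 := (_root_.map_ne_zero _).2 hbE
    have k1 : shf p τ cN a * b = a * shf p τ cN b := by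
      apply hRE
      rw [map_mul, map_mul, ← hτE, ← hτE]
      rw [map_div₀, div_eq_div_iff hτb hbE] at hτf
      exact hτf
    have hmapnm : ∀ a : R, algebraMap R E (nm p (MvPolynomial.map σ) a) = nm p σE (algebraMap R E a) := fun a =>
      nm_map (MvPolynomial.map σ) σE (algebraMap R E) (fun x => (hσE x).symm) a
    have k2 : nm p (MvPolynomial.map σ) a = MvPolynomial.C sN * nm p (MvPolynomial.map σ) b := by
      apply hRE
      rw [map_mul, hmapnm, hmapnm]
      change _ = κ sN * _
      rw [← hfn, ← nm_mul, div_mul_cancel₀ _ hbE]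
    obtain ⟨n, hn1, hn2⟩ := lemmaU σ τ hσp hτp hcomm hζN' (hτF _) hlam0 T.τl hcN0 (hσF _) (hτF _) hnotN a b ha0 hb0 k1
      hsN0 k2
    obtain ⟨r, hr⟩ := T.τ_fixed hp.pos hζ' hn1
    refine ⟨r, ?_⟩
    have h3 : ∀ i, aeval (ζ ^ i * μ) r = ι (σ^[i] n) := by
      intro i
      rw [hr]
      change _ = ι (T.σ^[i] _)
      rw [← T.coe_pow_apply, ← aeval_algHom_apply, T.coe_pow_apply, T.σ_it_m, ← aeval_algHom_apply, map_mul,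
        ι.commutes, hι1]
      rfl
    rw [prod_congr rfl fun i _ => h3 i]
    have h4 := map_nm (p := p) σ (ι : T.N →+* Om) n
    rw [hn2] at h4
    refine h4.symm.trans ?_
    exact ι.commutes _

end

end Part11

section Part12
set_option linter.all false
open Polynomial Finset
open scoped TensorProduct

section
variable {p : ℕ} {Om : Type u} [Field Om] {ζ : Om}

lemma isNm_of_mem [CharZero Om] (hp : p.Prime) (hζ : IsPrimitiveRoot ζ p) {F : Subfield Om} {x s : Om}
    (hx : x ∈ F) (hx0 : x ≠ 0) (hs : s ∈ F) : IsNm p ζ F x s := by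
  have hp0 : (p : Om) ≠ 0 := Nat.cast_ne_zero.2 hp.ne_zero
  refine ⟨1 + C ((⟨s, hs⟩ - 1) / (p : F)) * ∑ k ∈ range p, (C ((⟨x, hx⟩ : F)⁻¹) * X) ^ k, ?_⟩
  have h1 : ∀ i, aeval (ζ ^ i * x) (1 + C ((⟨s, hs⟩ - 1) / (p : F)) * ∑ k ∈ range p, (C ((⟨x, hx⟩ : F)⁻¹) * X) ^ k)
      = if p ∣ i then s else 1 := by
    intro i
    have e1 : ∀ k, (x⁻¹ * (ζ ^ i * x)) ^ k = ζ ^ (i * k) := by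
      intro k
      rw [mul_comm (ζ ^ i), ← mul_assoc, inv_mul_cancel₀ hx0, one_mul, ← pow_mul]
    have e2 : algebraMap F Om ((⟨s, hs⟩ - 1) / (p : F)) = (s - 1) / p := by
      rw [map_div₀, map_sub, map_one, map_natCast]; rfl
    have e3 : algebraMap F Om ((⟨x, hx⟩ : F)⁻¹) = x⁻¹ := by rw [map_inv₀]; rfl
    rw [map_add, map_one, map_mul, aeval_C, map_sum, e2]
    simp_rw [map_pow, map_mul, aeval_C, aeval_X, e3, e1]
    rw [geom_zero hζ]
    split_ifs
    · field_simp; ring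
    · simp
  rw [prod_congr rfl fun i _ => h1 i]
  rw [prod_eq_single 0]
  · simp
  · intro i hi hi0
    rw [if_neg]
    exact fun h => absurd (Nat.le_of_dvd (Nat.pos_of_ne_zero hi0) h) (not_le.2 (mem_range.1 hi))
  · intro h; exact absurd (mem_range.2 hp.pos) h

lemma adj_shift (F : Subfield Om) {t t' : Om} (h : t - t' ∈ F) : adj F {t} = adj F {t'} := by
  apply le_antisymm
  · refine adj_le (le_adj _ _) ?_
    rintro y hy
    rw [Set.mem_singleton_iff.1 hy]
    have := add_mem (le_adj F {t'} h) (mem_adj F (Set.mem_singleton t'))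
    rwa [sub_add_cancel] at this
  · refine adj_le (le_adj _ _) ?_
    rintro y hy
    rw [Set.mem_singleton_iff.1 hy]
    have := sub_mem (mem_adj F (Set.mem_singleton t)) (le_adj F {t} h)
    rwa [sub_sub_cancel] at this

lemma adj_comm (F : Subfield Om) (s t : Set Om) : adj (adj F s) t = adj (adj F t) s := sup_right_comm _ _ _

/-- the constants -/
noncomputable def bsq (β : Om) (n : ℕ) : Om := if n = 0 then 1 else β + n

def PP (p : ℕ) (ζ μ β : Om) (F : Subfield Om) : Prop := ∀ n m, n ≠ m → ¬ IsNm p ζ F μ (bsq β n / bsq β m)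

lemma bsq_mem {F : Subfield Om} {β : Om} (h : β ∈ F) (n : ℕ) : bsq β n ∈ F := by
  unfold bsq; split_ifs
  · exact one_mem _
  · exact add_mem h (natCast_mem _ _)

lemma PP.not_mem [CharZero Om] (hp : p.Prime) (hζ : IsPrimitiveRoot ζ p) {F : Subfield Om} {μ β : Om} (hμ0 : μ ≠ 0)
    (hβ : β ∈ F) (h : PP p ζ μ β F) : μ ∉ F := fun hm =>
  h 0 1 (by norm_num) (isNm_of_mem hp hζ hm hμ0 (div_mem (bsq_mem hβ _) (bsq_mem hβ _)))

lemma transc_ne {A : Subfield Om} {t : Om} (ht : Transcendental A t) {a : Om} (ha : a ∈ A) : t ≠ a := by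
  rintro rfl
  exact ht (isAlgebraic_algebraMap (⟨t, ha⟩ : A))

lemma transc_sub {A : Subfield Om} {t : Om} (ht : Transcendental A t) {a : Om} (ha : a ∈ A) : Transcendental A (t + a) := by
  intro h
  have := h.sub (isAlgebraic_algebraMap (⟨a, ha⟩ : A))
  apply ht
  have e : t + a - algebraMap A Om ⟨a, ha⟩ = t := add_sub_cancel_right _ _
  rwa [e] at this

lemma not_mem_pow (hp : p.Prime) {k : Subfield Om} {μ : Om} (hμ : Transcendental k μ) : μ ∉ adj k {μ ^ p} := by
  intro h
  obtain ⟨r, s, hrs⟩ := exists_div_of_mem_adj k _ h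
  have hμ0 : μ ≠ 0 := transc_ne hμ (zero_mem k)
  have hs : aeval (μ ^ p) s ≠ 0 := by
    intro h0; rw [h0, div_zero] at hrs; exact hμ0 hrs
  have h1 : μ * aeval (μ ^ p) s = aeval (μ ^ p) r := (eq_div_iff hs).1 hrs
  have h2 : X * expand k p s = expand k p r := by
    have hinj := transcendental_iff_injective.1 hμ
    apply hinj
    rw [map_mul, aeval_X, expand_aeval, expand_aeval, h1]
  have hs0 : s ≠ 0 := by rintro rfl; simp at hs
  have h3 := congrArg natDegree h2
  rw [natDegree_mul X_ne_zero (by rwa [Ne, expand_eq_zero hp.pos]), natDegree_X, natDegree_expand, natDegree_expand] at h3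
  have h4 : p ∣ 1 := (Nat.dvd_add_left (Dvd.intro_left _ rfl)).1 (h3 ▸ Dvd.intro_left _ rfl)
  exact hp.one_lt.ne' (Nat.dvd_one.1 h4)

lemma PP_base [CharZero Om] (hp : p.Prime) (hζ : IsPrimitiveRoot ζ p) {k : Subfield Om} (hζk : ζ ∈ k) {μ β : Om}
    (hμ : Transcendental k μ) (hβ : Transcendental (adj k {μ}) β) : PP p ζ μ β (adj (adj k {μ ^ p}) {β}) := by
  have hx := not_mem_pow hp hμ
  have hle : adj k {μ ^ p} ≤ adj k {μ} := by
    refine adj_le (le_adj _ _) ?_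
    rintro y hy
    rw [Set.mem_singleton_iff.1 hy]
    exact pow_mem (mem_adj k (Set.mem_singleton μ)) _
  have hxp : μ ^ p ∈ adj k {μ ^ p} := mem_adj k (Set.mem_singleton _)
  have hxA : μ ∈ adj k {μ} := mem_adj k (Set.mem_singleton _)
  have hζF : ζ ∈ adj k {μ ^ p} := le_adj _ _ hζk
  have hp1 : ¬ p ∣ 1 := fun h => hp.one_lt.ne' (Nat.dvd_one.1 h)
  have key : ∀ n : ℕ, Transcendental (adj k {μ}) (β + n) ∧ adj (adj k {μ ^ p}) {β} = adj (adj k {μ ^ p}) {β + (n : Om)} :=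
    fun n => ⟨transc_sub hβ (natCast_mem _ _), (adj_shift _ (by rw [add_sub_cancel_left]; exact natCast_mem _ _)).symm⟩
  intro n m hnm hN
  by_cases hn : n = 0
  · have hm : m ≠ 0 := fun h => hnm (hn.trans h.symm)
    obtain ⟨k1, k2⟩ := key m
    rw [k2] at hN
    have ht0 := transc_ne k1 (zero_mem _)
    obtain ⟨a, b, -, -, -, h1, -⟩ := lemmaVW hp hζ hζF hle hxp hx hxA k1 hN 1 X one_ne_zero
      (by simp [bsq, hn, hm, ht0])
    simp at h1
    exact hp1 ((Nat.dvd_add_right (Dvd.intro _ rfl)).1 (h1 ▸ Dvd.intro _ rfl))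
  · obtain ⟨k1, k2⟩ := key n
    rw [k2] at hN
    have ht0 := transc_ne k1 (zero_mem _)
    by_cases hm : m = 0
    · obtain ⟨a, b, -, -, -, h1, -⟩ := lemmaVW hp hζ hζF hle hxp hx hxA k1 hN X 1 X_ne_zero
        (by simp [bsq, hn, hm])
      simp at h1
      exact hp1 ((Nat.dvd_add_left (Dvd.intro _ rfl)).1 (h1 ▸ Dvd.intro _ rfl))
    · have hd : ((m : adj k {μ}) - n) ≠ 0 := by
        rw [sub_ne_zero]; exact fun h => hnm (Nat.cast_injective h).symm
      obtain ⟨a, b, -, -, -, h1, -⟩ := lemmaVW hp hζ hζF hle hxp hx hxA k1 hN X (X + C ((m : adj k {μ}) - n)) X_ne_zero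
        (by
          have h0 := transc_ne (key m).1 (zero_mem _)
          simp only [bsq, hn, hm, if_false, map_add, aeval_X, aeval_C, map_sub, map_natCast]
          rw [show β + (n : Om) + (m - n) = β + m by ring, div_mul_cancel₀ _ h0])
      have e : (X + C ((m : adj k {μ}) - n)).natTrailingDegree = 0 := by
        rw [natTrailingDegree_eq_zero]; right; simpa using hd
      rw [e, natTrailingDegree_X, add_zero] at h1
      exact hp1 ((Nat.dvd_add_left (Dvd.intro _ rfl)).1 (h1 ▸ Dvd.intro _ rfl))

/-- one step -/
lemma step [CharZero Om] [Fact p.Prime] (hζ : IsPrimitiveRoot ζ p) {F A : Subfield Om} (hζF : ζ ∈ F) (hFA : F ≤ A) {μ β lam : Om}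
    (hμp : μ ^ p ∈ F) (hμ0 : μ ≠ 0) (hμA : μ ∈ A) (hβ : β ∈ F) (hP : PP p ζ μ β F) (hlp : lam ^ p ∈ F) (hl0 : lam ≠ 0) (hlA : lam ∈ A)
    {t : Om} (ht : Transcendental A t) {A1 : Subfield Om} (hA1 : adj A {t} ≤ A1)
    {v : ZMod p → Om} (hv : AlgebraicIndependent A1 v) {c : Om} (hcF : c ∈ adj F {t}) (hc0 : c ≠ 0)
    (hnot : ¬ IsNm p ζ (adj (adj F {t}) {μ}) lam c) :
    ∃ F' : Subfield Om, F ≤ F' ∧ t ∈ F' ∧ F' ≤ adj A1 (Set.range v) ∧ IsNm p ζ F' lam c ∧ PP p ζ μ β F' := by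
  have hp : p.Prime := Fact.out
  have hμ := hP.not_mem hp hζ hμ0 hβ
  have hP1 : PP p ζ μ β (adj F {t}) := fun n m hnm hN =>
    hP n m hnm (lemmaV hp hζ hζF hFA hμp hμ hμA ht (div_mem (bsq_mem hβ _) (bsq_mem hβ _)) hN)
  have hle := le_adj F {t}
  have hle' : adj F {t} ≤ A1 := (sup_le_sup_right hFA _).trans hA1
  have hAA : A ≤ A1 := (le_adj _ _).trans hA1
  have hl : lam ∉ adj (adj F {t}) {μ} := fun h => hnot (isNm_of_mem hp hζ h hl0 (le_adj _ _ hcF))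
  obtain ⟨F', h1, h2, h3, h4⟩ := move2 hζ (hle hζF) hle' (hle hμp) (hP1.not_mem hp hζ hμ0 (hle hβ)) (hAA hμA) (hle hlp) hl (hAA hlA)
    hv hcF hc0 hnot
  refine ⟨F', hle.trans h1, h1 (mem_adj F (Set.mem_singleton t)), h2, h3, fun n m hnm hN => hP1 n m hnm (h4 _ ?_ hN)⟩
  exact hle (div_mem (bsq_mem hβ _) (bsq_mem hβ _))

lemma not_const [CharZero Om] (hp : p.Prime) (hζ : IsPrimitiveRoot ζ p) {F A : Subfield Om} (hζF : ζ ∈ F) (hFA : F ≤ A) {μ lam : Om}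
    (hμA : μ ∈ A) (hlp : lam ^ p ∈ F) (hl0 : lam ≠ 0) (hlA : lam ∈ A) {t : Om} (ht : Transcendental A t) {c : Om} (hcF : c ∈ F)
    (hnot : ¬ IsNm p ζ (adj F {μ}) lam c) : ¬ IsNm p ζ (adj (adj F {t}) {μ}) lam c := by
  intro hN
  rw [adj_comm] at hN
  have hle := le_adj F {μ}
  have hl : lam ∉ adj F {μ} := fun h => hnot (isNm_of_mem hp hζ h hl0 (hle hcF))
  exact hnot (lemmaV hp hζ (hle hζF) (adj_le hFA (by simpa using hμA)) (hle hlp) hl hlA ht (hle hcF) hN)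

lemma not_lin [CharZero Om] (hp : p.Prime) (hζ : IsPrimitiveRoot ζ p) {F A : Subfield Om} (hζF : ζ ∈ F) (hFA : F ≤ A) {μ lam : Om}
    (hμA : μ ∈ A) (hμ0 : μ ≠ 0) (hlp : lam ^ p ∈ F) (hlA : lam ∈ A) (hl : lam ∉ adj F {μ}) {t : Om} (ht : Transcendental A t)
    {b : Om} (hbF : b ∈ F) (hb0 : b ≠ 0) : ¬ IsNm p ζ (adj (adj F {t}) {μ}) lam (b * (t ^ p - μ ^ p)) := by
  intro hN
  have hle := le_adj F {μ}
  have hμ' : -μ ∈ adj F {μ} := neg_mem (mem_adj F (Set.mem_singleton μ))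
  rw [adj_comm, adj_shift (t := t) (t' := t + -μ) _ (by rw [sub_add_cancel_left]; simpa using hμ')] at hN
  let m : A := ⟨μ, hμA⟩
  have hm0 : m ≠ 0 := fun h => hμ0 (congrArg Subtype.val h)
  set G : A[X] := C ⟨b, hFA hbF⟩ * ((X + C m) ^ p - C (m ^ p)) with hG
  have hbA : (⟨b, hFA hbF⟩ : A) ≠ 0 := fun h => hb0 (congrArg Subtype.val h)
  have hc1 : G.coeff 1 = ⟨b, hFA hbF⟩ * (p * m ^ (p - 1)) := by
    rw [hG, coeff_C_mul, coeff_sub, coeff_X_add_C_pow, coeff_C_succ (n := 0)]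
    rw [Nat.choose_one_right, sub_zero, mul_comm (p : A)]
  have hc1' : G.coeff 1 ≠ 0 := by
    rw [hc1]
    exact mul_ne_zero hbA (mul_ne_zero (Nat.cast_ne_zero.2 hp.ne_zero) (pow_ne_zero _ hm0))
  have hc0 : G.coeff 0 = 0 := by
    rw [hG, coeff_C_mul, coeff_sub, coeff_X_add_C_pow, coeff_C_zero, Nat.choose_zero_right, Nat.sub_zero, Nat.cast_one, mul_one, sub_self, mul_zero]
  have hG0 : G ≠ 0 := by intro h; rw [h] at hc1'; simp at hc1'
  have htd : G.natTrailingDegree = 1 := by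
    apply le_antisymm (natTrailingDegree_le_of_ne_zero hc1')
    rw [Nat.one_le_iff_ne_zero, Ne, natTrailingDegree_eq_zero]
    rintro (h | h)
    · exact hG0 h
    · exact h hc0
  obtain ⟨n, m', -, -, -, h1, -⟩ := lemmaVW hp hζ (hle hζF) (adj_le hFA (by simpa using hμA)) (hle hlp) hl hlA
    (transc_sub ht (neg_mem hμA)) hN G 1 hG0 (by
      rw [hG, map_one, mul_one, map_mul, aeval_C, map_sub, map_pow, map_add, aeval_X, aeval_C, aeval_C, map_pow]
      change _ = b * ((t + -μ + μ) ^ p - μ ^ p)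
      rw [neg_add_cancel_right])
  rw [htd] at h1
  simp at h1
  exact hp.one_lt.ne' (Nat.dvd_one.1 ((Nat.dvd_add_left (Dvd.intro _ rfl)).1 (h1 ▸ Dvd.intro _ rfl)))
end

end Part12

section Part13
set_option linter.all false
open Polynomial Finset
open scoped TensorProduct

section
variable {Om : Type u} [Field Om] [CharZero Om]

/-- relative algebraic closure of the field generated by a set -/
noncomputable def Acl (T : Set Om) : Subfield Om where
  carrier := {y | IsAlgebraic (Algebra.adjoin ℚ T) y}
  mul_mem' := fun ha hb => IsAlgebraic.mul ha hb
  one_mem' := isAlgebraic_one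
  add_mem' := fun ha hb => IsAlgebraic.add ha hb
  zero_mem' := isAlgebraic_zero
  neg_mem' := fun ha => IsAlgebraic.neg ha
  inv_mem' := fun x hx => IsAlgebraic.inv hx

lemma mem_Acl {T : Set Om} {y : Om} : y ∈ Acl T ↔ IsAlgebraic (Algebra.adjoin ℚ T) y := Iff.rfl

lemma subset_Acl {T : Set Om} {y : Om} (h : y ∈ T) : y ∈ Acl T :=
  isAlgebraic_algebraMap (⟨y, Algebra.subset_adjoin h⟩ : Algebra.adjoin ℚ T)

lemma Acl_mono {S T : Set Om} (h : S ⊆ T) : Acl S ≤ Acl T := by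
  intro y hy
  rw [mem_Acl] at hy ⊢
  obtain ⟨q, h0, hq⟩ := hy
  have hi := Algebra.adjoin_mono (R := ℚ) h
  refine ⟨q.map (Subalgebra.inclusion hi).toRingHom, ?_, ?_⟩
  · rwa [Ne, Polynomial.map_eq_zero_iff (Subalgebra.inclusion_injective hi)]
  · rw [← hq, aeval_def, eval₂_map]; rfl

noncomputable instance Acl_algebra (T : Set Om) : Algebra (Algebra.adjoin ℚ T) (Acl T) :=
  RingHom.toAlgebra ((algebraMap (Algebra.adjoin ℚ T) Om).codRestrict (Acl T) fun x => isAlgebraic_algebraMap x)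

instance Acl_tower (T : Set Om) : IsScalarTower (Algebra.adjoin ℚ T) (Acl T) Om := .of_algebraMap_eq fun _ => rfl

instance Acl_alg (T : Set Om) : Algebra.IsAlgebraic (Algebra.adjoin ℚ T) (Acl T) := ⟨fun y => by
  rw [← isAlgebraic_algHom_iff (IsScalarTower.toAlgHom (Algebra.adjoin ℚ T) (Acl T) Om) Subtype.val_injective]
  exact y.2⟩

lemma Acl_of_alg {T : Set Om} {F : Subfield Om} (hF : F ≤ Acl T) {y : Om} (hy : IsAlgebraic F y) : y ∈ Acl T := by
  rw [mem_Acl]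
  have h2 : IsAlgebraic (Acl T) y := by
    obtain ⟨q, h0, hq⟩ := hy
    exact ⟨q.map (Subfield.inclusion hF), by rwa [Polynomial.map_ne_zero_iff (Subfield.inclusion hF).injective], by
      rw [aeval_incl]; exact hq⟩
  exact h2.restrictScalars (Algebra.adjoin ℚ T)

lemma Acl_of_pow {T : Set Om} {p : ℕ} (hp : 0 < p) {y : Om} (hy : y ^ p ∈ Acl T) : y ∈ Acl T :=
  Acl_of_alg le_rfl ⟨X ^ p - C ⟨y ^ p, hy⟩, X_pow_sub_C_ne_zero hp _, by
    rw [map_sub, map_pow, aeval_X, aeval_C]; exact sub_self _⟩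

lemma Acl_indep {I : Type*} {x : I → Om} (hx : AlgebraicIndependent ℚ x) {J : Type*} (f : J → I) (hf : Function.Injective f)
    (S : Set I) (hS : ∀ j, f j ∉ S) : AlgebraicIndependent (Acl (x '' S)) (fun j => x (f j)) := by
  have h1 := hx.adjoin_of_disjoint (s := S) (t := Sᶜ) disjoint_compl_right
  have h2 := h1.comp (fun j => (⟨f j, hS j⟩ : (Sᶜ : Set I))) (fun a b h => hf (congrArg Subtype.val h))
  exact h2.extendScalars (Acl (x '' S))

lemma Acl_transc {I : Type*} {x : I → Om} (hx : AlgebraicIndependent ℚ x) (i : I)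
    (S : Set I) (hS : i ∉ S) : Transcendental (Acl (x '' S)) (x i) := 
  (Acl_indep hx (fun _ : Unit => i) (fun _ _ _ => rfl) S (fun _ => hS)).transcendental ()

/-- directed sup -/
lemma isNm_sSup {p : ℕ} {ζ : Om} {S : Set (Subfield Om)} (hS : S.Nonempty) (hd : DirectedOn (· ≤ ·) S) {x c : Om}
    (h : IsNm p ζ (sSup S) x c) : ∃ F ∈ S, IsNm p ζ F x c := by
  obtain ⟨q, hq⟩ := h
  have key : ∀ s : Finset ℕ, ∃ F ∈ S, ∀ k ∈ s, (q.coeff k).1 ∈ F := by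
    intro s
    induction s using Finset.induction_on with
    | empty => obtain ⟨F, hF⟩ := hS; exact ⟨F, hF, by simp⟩
    | insert a s ha ih =>
      obtain ⟨F, hF, h1⟩ := ih
      obtain ⟨G, hG, h2⟩ := (Subfield.mem_sSup_of_directedOn hS hd).1 (q.coeff a).2
      obtain ⟨H, hH, h3, h4⟩ := hd F hF G hG
      refine ⟨H, hH, fun k hk => ?_⟩
      rcases mem_insert.1 hk with rfl | hk
      · exact h4 h2
      · exact h3 (h1 k hk)
  obtain ⟨F, hF, h1⟩ := key q.support
  refine ⟨F, hF, ?_⟩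
  have hle : F ≤ sSup S := le_sSup hF
  have : q ∈ lifts (Subfield.inclusion hle) := by
    rw [lifts_iff_coeff_lifts]
    intro n
    by_cases hn : n ∈ q.support
    · exact ⟨⟨_, h1 n hn⟩, rfl⟩
    · rw [notMem_support_iff.1 hn]; exact ⟨0, map_zero _⟩
  obtain ⟨q', rfl⟩ := (mem_lifts _).1 this
  refine ⟨q', ?_⟩
  rw [← hq]
  exact prod_congr rfl fun i _ => (aeval_incl hle _ _).symm

end

section
open Cardinal
lemma exists_indep (p : ℕ) [NeZero p] {Om : Type u} [Field Om] [CharZero Om] [IsAlgClosed Om] (hOm : ℵ₀ < #Om) :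
    ∃ x : ((Om × Om[X]) × Option (ZMod p)) ⊕ Bool → Om, AlgebraicIndependent ℚ x := by
  obtain ⟨s, hs⟩ := exists_isTranscendenceBasis ℚ Om
  have h1 := IsAlgClosed.cardinal_eq_cardinal_transcendence_basis_of_aleph0_lt _ hs (by simp) hOm
  have hle : ℵ₀ ≤ #Om := hOm.le
  have hX : #(Om[X]) ≤ #Om := by
    refine (Polynomial.cardinalMk_le_max).trans (max_le le_rfl hle)
  have hfin : ∀ (B : Type) [Finite B], Cardinal.lift.{u} #B ≤ #Om := fun B _ => by
    refine le_trans ?_ hle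
    rw [Cardinal.lift_le_aleph0]
    exact Cardinal.mk_le_aleph0
  have h2 : #(((Om × Om[X]) × Option (ZMod p)) ⊕ Bool) ≤ #Om := by
    rw [mk_sum, mk_prod, mk_prod, Cardinal.lift_id, Cardinal.lift_id, Cardinal.lift_uzero, Cardinal.lift_uzero]
    exact add_le_of_le hle (mul_le_of_le hle (mul_le_of_le hle le_rfl hX) (hfin _)) (hfin _)
  rw [Cardinal.lift_id, Cardinal.lift_id] at h1
  rw [h1] at h2
  obtain ⟨f⟩ := h2
  exact ⟨_, hs.1.comp f f.injective⟩
end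

end Part13

section Part14
set_option linter.all false
open Polynomial Finset
open scoped TensorProduct

section
variable {p : ℕ} {Om : Type u} [Field Om] [CharZero Om] {ζ : Om}

lemma IsNm.conj (hp : p.Prime) (hζ : IsPrimitiveRoot ζ p) {F : Subfield Om} (hζF : ζ ∈ F) {x y c : Om} (h : IsNm p ζ F x c)
    (hxy : x ^ p = y ^ p) : IsNm p ζ F y c := by
  obtain ⟨i, rfl⟩ := eq_zeta_mul hp hζ hxy
  obtain ⟨q, hq⟩ := h
  refine ⟨q.comp (C ((⟨ζ, hζF⟩ : F) ^ i) * X), ?_⟩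
  rw [← hq]
  refine prod_congr rfl fun k _ => ?_
  rw [aeval_comp, map_mul, aeval_C, aeval_X, map_pow]
  congr 2
  change ζ ^ i * _ = _
  ring

lemma transc_mono {F A : Subfield Om} (h : F ≤ A) {t : Om} (ht : Transcendental A t) : Transcendental F t := by
  rintro ⟨q, h0, hq⟩
  exact ht ⟨q.map (Subfield.inclusion h), by rwa [Polynomial.map_ne_zero_iff (Subfield.inclusion h).injective], by
      rw [aeval_incl]; exact hq⟩

abbrev Idx (p : ℕ) (Om : Type u) [Field Om] := ((Om × Om[X]) × Option (ZMod p)) ⊕ Bool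

def vars (p : ℕ) (J : Set (Om × Om[X])) : Set (Idx p Om) := {i | (∃ t ∈ J, ∃ o, i = Sum.inl (t, o)) ∨ ∃ b, i = Sum.inr b}

lemma vars_mono {J J' : Set (Om × Om[X])} (h : J ⊆ J') : vars p J ⊆ vars p J' := by
  rintro i (⟨t, ht, o, rfl⟩ | hb)
  · exact Or.inl ⟨t, h ht, o, rfl⟩
  · exact Or.inr hb

structure Valid (p : ℕ) (ζ : Om) (x : Idx p Om → Om) (J : Set (Om × Om[X])) (F : Subfield Om) : Prop where
  hζ : ζ ∈ F
  hμ : x (Sum.inr false) ^ p ∈ F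
  hβ : x (Sum.inr true) ∈ F
  hA : F ≤ Acl (x '' vars p J)
  hP : PP p ζ (x (Sum.inr false)) (x (Sum.inr true)) F
  hD : ∀ t ∈ J, ∃ lam t0, lam ^ p = t.1 ∧ t0 ∈ F ∧ IsNm p ζ F lam (t.2.eval t0)

lemma Valid.base (hp : p.Prime) (hζ : IsPrimitiveRoot ζ p) {x : Idx p Om → Om} (hx : AlgebraicIndependent ℚ x) :
    ∃ F, Valid p ζ x ∅ F := by
  have hζk : ζ ∈ Acl (x '' ∅) := Acl_of_pow hp.pos (by rw [hζ.pow_eq_one]; exact one_mem _)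
  set k := Acl (x '' ∅)
  set μ := x (Sum.inr false) with hμ
  set β := x (Sum.inr true) with hβ
  have hβt : Transcendental (adj k {μ}) β := by
    refine transc_mono ?_ (Acl_transc hx (Sum.inr true) {Sum.inr false} (by simp))
    refine adj_le (Acl_mono (Set.image_mono (Set.empty_subset _))) ?_
    rintro y hy
    rw [Set.mem_singleton_iff.1 hy]
    exact subset_Acl ⟨_, rfl, rfl⟩
  refine ⟨adj (adj k {μ ^ p}) {β}, ⟨le_adj _ _ (le_adj _ _ hζk), le_adj _ _ (mem_adj k (Set.mem_singleton (μ ^ p))),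
    mem_adj (adj k {μ ^ p}) (Set.mem_singleton β), ?_, PP_base hp hζ hζk (Acl_transc hx _ _ (by simp)) hβt, by simp⟩⟩
  refine adj_le (adj_le (Acl_mono (Set.image_mono (Set.empty_subset _))) ?_) ?_
  · rintro y hy
    rw [Set.mem_singleton_iff.1 hy]
    exact pow_mem (show μ ∈ Acl (x '' vars p ∅) from subset_Acl ⟨_, Or.inr ⟨false, rfl⟩, rfl⟩) _
  · rintro y hy
    rw [Set.mem_singleton_iff.1 hy]
    exact subset_Acl ⟨_, Or.inr ⟨true, rfl⟩, rfl⟩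

lemma Valid.step [Fact p.Prime] (hζ : IsPrimitiveRoot ζ p) {x : Idx p Om → Om} (hx : AlgebraicIndependent ℚ x)
    {J : Set (Om × Om[X])} {F : Subfield Om} (V : Valid p ζ x J F) (lam : Om) (hlp : lam ^ p ∈ F) (hl0 : lam ≠ 0) (d : Om[X])
    (hJ : (lam ^ p, d) ∉ J)
    (H : ∀ t, Transcendental (Acl (x '' vars p J)) t → lam ∈ Acl (x '' vars p J) → d.eval t ∈ adj F {t} ∧ d.eval t ≠ 0 ∧
      ¬ IsNm p ζ (adj (adj F {t}) {x (Sum.inr false)}) lam (d.eval t)) :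
    ∃ F', F ≤ F' ∧ Valid p ζ x (insert (lam ^ p, d) J) F' := by
  have hp : p.Prime := Fact.out
  set A := Acl (x '' vars p J) with hA
  set tk : Om × Om[X] := (lam ^ p, d) with htk
  set t := x (Sum.inl (tk, none)) with ht
  set v : ZMod p → Om := fun j => x (Sum.inl (tk, some j)) with hv
  have hnot : ∀ o, Sum.inl (tk, o) ∉ vars p J := by
    rintro o (⟨t, h1, o', h⟩ | ⟨b, h⟩)
    · rw [Sum.inl.injEq, Prod.mk.injEq] at h
      exact hJ (h.1 ▸ h1)
    · exact absurd h (by simp)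
  have htt : Transcendental A t := Acl_transc hx _ _ (hnot none)
  set S1 := insert (Sum.inl (tk, none)) (vars p J)
  set A1 := Acl (x '' S1)
  have hA1 : adj A {t} ≤ A1 := by
    refine adj_le (Acl_mono (Set.image_mono (Set.subset_insert _ _))) ?_
    rintro y hy
    rw [Set.mem_singleton_iff.1 hy]
    exact subset_Acl ⟨_, Set.mem_insert _ _, rfl⟩
  have hvi : AlgebraicIndependent A1 v := by
    refine Acl_indep hx (fun j => Sum.inl (tk, some j)) ?_ S1 ?_
    · intro a b h; simpa using h
    · rintro j (h | h)
      · simp at h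
      · exact hnot _ h
  have hlA : lam ∈ A := Acl_of_pow hp.pos (V.hA hlp)
  obtain ⟨c1, c2, c3⟩ := H t htt hlA
  have hμA : x (Sum.inr false) ∈ A := subset_Acl ⟨_, Or.inr ⟨false, rfl⟩, rfl⟩
  have hμ0 : x (Sum.inr false) ≠ 0 := hx.ne_zero _
  obtain ⟨F', h1, h2, h3, h4, h5⟩ := _root_.step hζ V.hζ V.hA V.hμ hμ0 hμA V.hβ V.hP hlp hl0 hlA htt hA1 hvi c1 c2 c3
  refine ⟨F', h1, ⟨h1 V.hζ, h1 V.hμ, h1 V.hβ, h3.trans ?_, h5, ?_⟩⟩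
  · have hin : ∀ o, Sum.inl (tk, o) ∈ vars p (insert tk J) := fun o => Or.inl ⟨tk, Set.mem_insert _ _, o, rfl⟩
    refine adj_le (Acl_mono (Set.image_mono ?_)) ?_
    · rintro i (rfl | h)
      · exact hin _
      · exact vars_mono (Set.subset_insert _ _) h
    · rintro y ⟨j, rfl⟩
      exact subset_Acl ⟨_, hin _, rfl⟩
  · rintro t' (rfl | h)
    · exact ⟨lam, t, rfl, h2, h4⟩
    · obtain ⟨l, t0, e1, e2, e3⟩ := V.hD _ h
      exact ⟨l, t0, e1, h1 e2, e3.mono h1⟩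

lemma exists_max (hp : p.Prime) (hζ : IsPrimitiveRoot ζ p) {x : Idx p Om → Om} (hx : AlgebraicIndependent ℚ x) :
    ∃ J F, Valid p ζ x J F ∧ ∀ J' F', Valid p ζ x J' F' → J ⊆ J' → F ≤ F' → J' ⊆ J ∧ F' ≤ F := by
  obtain ⟨F0, h0⟩ := Valid.base hp hζ hx
  have hz : ∀ c ⊆ {a : Set (Om × Om[X]) × Subfield Om | Valid p ζ x a.1 a.2}, IsChain (· ≤ ·) c → ∀ y ∈ c,
      ∃ ub ∈ {a : Set (Om × Om[X]) × Subfield Om | Valid p ζ x a.1 a.2}, ∀ z ∈ c, z ≤ ub := by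
    intro c hc hch y hy
    set S := Prod.snd '' c with hS
    have hSn : S.Nonempty := ⟨_, y, hy, rfl⟩
    have hd : DirectedOn (· ≤ ·) S := by
      rintro _ ⟨a, ha, rfl⟩ _ ⟨b, hb, rfl⟩
      rcases hch.total ha hb with h | h
      · exact ⟨b.2, ⟨b, hb, rfl⟩, h.2, le_rfl⟩
      · exact ⟨a.2, ⟨a, ha, rfl⟩, le_rfl, h.2⟩
    have hle : ∀ a ∈ c, a.2 ≤ sSup S := fun a ha => le_sSup ⟨a, ha, rfl⟩
    have hJle : ∀ a ∈ c, a.1 ⊆ ⋃ a ∈ c, a.1 := fun a ha => Set.subset_biUnion_of_mem (u := fun a => a.1) ha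
    refine ⟨(⋃ a ∈ c, a.1, sSup S), ?_, fun z hz => ⟨hJle z hz, hle z hz⟩⟩
    have Vy := hc hy
    refine ⟨hle y hy Vy.hζ, hle y hy Vy.hμ, hle y hy Vy.hβ, ?_, ?_, ?_⟩
    · refine sSup_le ?_
      rintro _ ⟨a, ha, rfl⟩
      exact (hc ha).hA.trans (Acl_mono (Set.image_mono (vars_mono (hJle a ha))))
    · intro n m hnm hN
      obtain ⟨F, ⟨a, ha, rfl⟩, hF⟩ := isNm_sSup hSn hd hN
      exact (hc ha).hP n m hnm hF
    · intro t ht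
      obtain ⟨a, ha, hta⟩ := Set.mem_iUnion₂.1 ht
      obtain ⟨l, t0, e1, e2, e3⟩ := (hc ha).hD _ hta
      exact ⟨l, t0, e1, hle a ha e2, e3.mono (hle a ha)⟩
  obtain ⟨m, -, hm⟩ := zorn_le_nonempty₀ _ hz (∅, F0) h0
  refine ⟨m.1, m.2, hm.prop, fun J' F' h h1 h2 => ?_⟩
  have := hm.le_of_ge (y := (J', F')) h ⟨h1, h2⟩
  exact ⟨this.1, this.2⟩

structure MaxF (p : ℕ) (ζ μ β : Om) (F : Subfield Om) : Prop where
  hζ : ζ ∈ F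
  hμ : μ ^ p ∈ F
  hμ0 : μ ≠ 0
  hβ : β ∈ F
  hb : ∀ n, bsq β n ≠ 0
  hP : PP p ζ μ β F
  hc : ∀ lam c, lam ^ p ∈ F → lam ≠ 0 → c ∈ F → c ≠ 0 → ¬ IsNm p ζ (adj F {μ}) lam c → IsNm p ζ F lam c
  hlin : ∀ lam b, lam ^ p ∈ F → lam ∉ adj F {μ} → b ∈ F → b ≠ 0 → ∃ t ∈ F, IsNm p ζ F lam (b * (t ^ p - μ ^ p))
  hext : ∀ E : Subfield Om, F ≤ E → (∀ y ∈ E, IsAlgebraic F y) → PP p ζ μ β E → E ≤ F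

lemma exists_MaxF [Fact p.Prime] (hζ : IsPrimitiveRoot ζ p) {x : Idx p Om → Om} (hx : AlgebraicIndependent ℚ x) :
    ∃ μ β F, MaxF p ζ μ β F := by
  have hp : p.Prime := Fact.out
  obtain ⟨J, F, V, hmax⟩ := exists_max hp hζ hx
  have hstep : ∀ (lam : Om) (hlp : lam ^ p ∈ F) (hl0 : lam ≠ 0) (d : Om[X])
    (H : ∀ t, Transcendental (Acl (x '' vars p J)) t → lam ∈ Acl (x '' vars p J) → d.eval t ∈ adj F {t} ∧ d.eval t ≠ 0 ∧
      ¬ IsNm p ζ (adj (adj F {t}) {x (Sum.inr false)}) lam (d.eval t)), ∃ t ∈ F, IsNm p ζ F lam (d.eval t) := by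
    intro lam hlp hl0 d H
    have hJ : (lam ^ p, d) ∈ J := by
      by_contra hJ
      obtain ⟨F', h1, V'⟩ := V.step hζ hx lam hlp hl0 d hJ H
      exact hJ ((hmax _ _ V' (Set.subset_insert _ _) h1).1 (Set.mem_insert _ _))
    obtain ⟨l, t0, e1, e2, e3⟩ := V.hD _ hJ
    exact ⟨t0, e2, e3.conj hp hζ V.hζ e1⟩
  have hμA : x (Sum.inr false) ∈ Acl (x '' vars p J) := subset_Acl ⟨_, Or.inr ⟨false, rfl⟩, rfl⟩
  have hμ0 : x (Sum.inr false) ≠ 0 := hx.ne_zero _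
  refine ⟨x (Sum.inr false), x (Sum.inr true), F, ⟨V.hζ, V.hμ, hμ0, V.hβ, ?_, V.hP, ?_, ?_, ?_⟩⟩
  · intro n
    unfold bsq
    split_ifs
    · exact one_ne_zero
    · intro h
      refine transc_ne (Acl_transc hx (Sum.inr true) ∅ (by simp)) (a := -n) (neg_mem (natCast_mem _ _)) ?_
      exact eq_neg_of_add_eq_zero_left h
  · intro lam c hlp hl0 hc hc0 hN
    obtain ⟨t, ht, h⟩ := hstep lam hlp hl0 (C c) (fun t ht hlA => by
      rw [eval_C]
      exact ⟨le_adj _ _ hc, hc0, not_const hp hζ V.hζ V.hA hμA hlp hl0 hlA ht hc hN⟩)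
    rwa [eval_C] at h
  · intro lam b hlp hl hb hb0
    have hl0 : lam ≠ 0 := by rintro rfl; exact hl (zero_mem _)
    have e : ∀ t, (C b * (X ^ p - C (x (Sum.inr false) ^ p))).eval t = b * (t ^ p - x (Sum.inr false) ^ p) := by
      intro t; simp
    obtain ⟨t, ht, h⟩ := hstep lam hlp hl0 (C b * (X ^ p - C (x (Sum.inr false) ^ p))) (fun t ht hlA => by
      rw [e]
      have htm : t ∈ adj F {t} := mem_adj F (Set.mem_singleton t)
      refine ⟨mul_mem (le_adj _ _ hb) (sub_mem (pow_mem htm _) (le_adj _ _ V.hμ)), mul_ne_zero hb0 (sub_ne_zero.2 ?_),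
        not_lin hp hζ V.hζ V.hA hμA hμ0 hlp hlA hl ht hb hb0⟩
      intro h
      exact transc_ne ht (Acl_of_pow hp.pos (by rw [h]; exact V.hA V.hμ)) rfl)
    rw [e] at h
    exact ⟨t, ht, h⟩
  · intro E hE halg hP
    refine (hmax J E ⟨hE V.hζ, hE V.hμ, hE V.hβ, fun y hy => Acl_of_alg V.hA (halg y hy), hP, fun t ht => ?_⟩ le_rfl hE).2
    obtain ⟨l, t0, e1, e2, e3⟩ := V.hD _ ht
    exact ⟨l, t0, e1, hE e2, e3.mono hE⟩
end

end Part14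

section Part15
set_option linter.all false
open Polynomial Finset
open scoped TensorProduct

section
variable {p : ℕ} {Om : Type u} [Field Om] [CharZero Om] {ζ : Om}

lemma norm_down {F : Subfield Om} (hζF : ζ ∈ F) {μ : Om} (hμp : μ ^ p ∈ F) (E : IntermediateField F Om) [FiniteDimensional F E]
    (s : F) (q : E[X])
    (h : (X ^ p - C (algebraMap F E ⟨μ ^ p, hμp⟩)) ∣ (∏ i ∈ range p, q.comp (C (algebraMap F E ⟨ζ, hζF⟩ ^ i) * X)) - C (algebraMap F E s)) :
    IsNm p ζ F μ ((s : Om) ^ Module.finrank F E) := by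
  let n := Module.finrank F E
  let b := Module.finBasis F E
  let ρ := Algebra.leftMulMatrix b
  let f : E →+* Matrix (Fin n) (Fin n) Om := (algebraMap F Om).mapMatrix.comp (ρ : E →+* Matrix (Fin n) (Fin n) F)
  have hfF : ∀ a : F, f (algebraMap F E a) = Matrix.scalar _ (a : Om) := by
    intro a
    change (algebraMap F Om).mapMatrix (ρ (algebraMap F E a)) = _
    rw [AlgHom.commutes, Matrix.algebraMap_eq_diagonal]
    ext i j
    change algebraMap F Om (Matrix.diagonal _ i j) = Matrix.diagonal _ i j
    rw [Matrix.diagonal_apply, Matrix.diagonal_apply]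
    split_ifs
    · rfl
    · exact map_zero _
  have hcomm : ∀ (y : Om) (a : E), Commute (f a) (Matrix.scalar (Fin n) y) := fun y a =>
    (Matrix.scalar_commute y (fun r => Commute.all _ _) _).symm
  let Φ : Om → E[X] →+* Matrix (Fin n) (Fin n) Om := fun y => eval₂RingHom' f (Matrix.scalar _ y) (hcomm y)
  have hΦC : ∀ y a, Φ y (C a) = f a := fun y a => eval₂_C _ _
  have hΦX : ∀ y, Φ y X = Matrix.scalar _ y := fun y => eval₂_X _ _
  have hcomp : ∀ i (q : E[X]), Φ μ (q.comp (C (algebraMap F E ⟨ζ, hζF⟩ ^ i) * X)) = Φ (ζ ^ i * μ) q := by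
    intro i q
    have : (Φ μ).comp (compRingHom (C (algebraMap F E ⟨ζ, hζF⟩ ^ i) * X)) = Φ (ζ ^ i * μ) := by
      apply Polynomial.ringHom_ext
      · intro a
        change Φ μ ((C a).comp _) = _
        rw [C_comp, hΦC, hΦC]
      · change Φ μ (X.comp _) = _
        rw [X_comp, map_mul, hΦX, hΦX, hΦC, ← map_pow, hfF, ← map_mul]; rfl
    exact congrFun (congrArg DFunLike.coe this) q
  let Q : F[X] := Matrix.det (Matrix.of fun i j => ∑ k ∈ range (q.natDegree + 1), C (ρ (q.coeff k) i j) * X ^ k)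
  have hQ : ∀ y, aeval y Q = (Φ y q).det := by
    intro y
    rw [AlgHom.map_det]
    congr 1
    ext i j
    change aeval y (∑ k ∈ range (q.natDegree + 1), C (ρ (q.coeff k) i j) * X ^ k) = (eval₂ f (Matrix.scalar _ y) q) i j
    rw [eval₂_eq_sum_range, Matrix.sum_apply, map_sum]
    refine sum_congr rfl fun k _ => ?_
    rw [map_mul, aeval_C, map_pow, aeval_X, ← map_pow, Matrix.scalar_apply, Matrix.mul_diagonal]
    rfl
  refine ⟨Q, ?_⟩
  obtain ⟨g, hg⟩ := h
  have h1 := congrArg (Φ μ) hg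
  have h2 : Φ μ (X ^ p - C (algebraMap F E ⟨μ ^ p, hμp⟩)) = 0 := by
    rw [map_sub, map_pow, hΦX, hΦC, hfF, ← map_pow, sub_self]
  rw [map_mul, h2, zero_mul, map_sub, sub_eq_zero, hΦC, hfF] at h1
  let Ψ : E[X] →* Om := Matrix.detMonoidHom.comp (Φ μ : E[X] →* Matrix (Fin n) (Fin n) Om)
  have h3 : Ψ (∏ i ∈ range p, q.comp (C (algebraMap F E ⟨ζ, hζF⟩ ^ i) * X)) = (s : Om) ^ n := by
    change Matrix.det (Φ μ _) = _
    rw [h1, Matrix.scalar_apply, Matrix.det_diagonal, prod_const, card_univ, Fintype.card_fin]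
  rw [map_prod] at h3
  rw [← h3]
  refine prod_congr rfl fun i _ => ?_
  rw [hQ]
  change _ = Matrix.det (Φ μ _)
  rw [hcomp]

lemma norm_coprime (hp : p.Prime) (hζ : IsPrimitiveRoot ζ p) {F : Subfield Om} (hζF : ζ ∈ F) {μ : Om} (hμp : μ ^ p ∈ F) (hμ : μ ∉ F)
    (E : IntermediateField F Om) [FiniteDimensional F E] (hE : (Module.finrank F E).Coprime p) {s : Om} (hs : s ∈ F) (hs0 : s ≠ 0)
    (h : IsNm p ζ E.toSubfield μ s) : IsNm p ζ F μ s := by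
  have hμE : μ ∉ E := by
    intro hm
    have h1 : Module.finrank F (IntermediateField.adjoin F {μ}) = p := by
      rw [IntermediateField.adjoin.finrank, minpoly_eq_of_not_pow hp (ℓ := (⟨μ ^ p, hμp⟩ : F)) (x := μ) rfl (not_pow_sub hp hζ hζF hμp hμ),
        natDegree_X_pow_sub_C]
      exact ⟨X ^ p - C ⟨μ ^ p, hμp⟩, monic_X_pow_sub_C _ hp.ne_zero, by simp; exact sub_self _⟩
    have h2 : IntermediateField.adjoin F {μ} ≤ E := by
      rw [IntermediateField.adjoin_simple_le_iff]; exact hm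
    have h3 := IntermediateField.finrank_dvd_of_le_right h2
    rw [h1] at h3
    exact hp.one_lt.ne' (Nat.eq_one_of_dvd_coprimes hE h3 dvd_rfl)
  obtain ⟨q, hq⟩ := h
  have hN := norm_down hζF hμp E ⟨s, hs⟩ q (by
    have hζ' : IsPrimitiveRoot (algebraMap F E ⟨ζ, hζF⟩) p := (zeta_sub hζ hζF).map_of_injective (algebraMap F E).injective
    have hx : μ ^ p = algebraMap E Om (algebraMap F E ⟨μ ^ p, hμp⟩) := rfl
    have hnp := not_pow_of_div hp hζ' (x := μ) hx (fun r h => hμE (h ▸ r.2))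
    rw [← minpoly_eq_of_not_pow hp hx hnp]
    apply minpoly.dvd
    rw [map_sub, map_prod, sub_eq_zero, aeval_C]
    refine Eq.trans ?_ hq
    refine prod_congr rfl fun i _ => ?_
    rw [aeval_comp, map_mul, aeval_C, aeval_X, map_pow]
    rfl)
  obtain ⟨Q, hQ⟩ := hN
  set n := Module.finrank F E
  obtain ⟨a, b, hab⟩ : ∃ a b : ℕ, n * a = 1 + p * b := by
    obtain ⟨m, hm⟩ := Nat.exists_mul_mod_eq_one_of_coprime hE hp.one_lt
    exact ⟨m, n * m / p, by have := Nat.mod_add_div (n * m) p; omega⟩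
  refine ⟨Q ^ a * C ((⟨s, hs⟩ : F) ^ b)⁻¹, ?_⟩
  simp_rw [map_mul, map_pow, aeval_C]
  rw [prod_mul_distrib, prod_pow, hQ, prod_const, card_range, ← pow_mul, hab, map_inv₀, map_pow]
  change s ^ (1 + p * b) * ((s ^ b)⁻¹) ^ p = s
  rw [pow_add, pow_one, inv_pow, ← pow_mul, mul_comm b, mul_assoc, mul_inv_cancel₀ (pow_ne_zero _ hs0), mul_one]

lemma MaxF.coprime (hp : p.Prime) (hζ : IsPrimitiveRoot ζ p) {F : Subfield Om} {μ β : Om} (M : MaxF p ζ μ β F)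
    (E : IntermediateField F Om) [FiniteDimensional F E] (hE : (Module.finrank F E).Coprime p) : E = ⊥ := by
  have hμ := M.hP.not_mem hp hζ M.hμ0 M.hβ
  have hFE : F ≤ E.toSubfield := fun y hy => E.algebraMap_mem ⟨y, hy⟩
  have h := M.hext E.toSubfield hFE (fun y hy => by
    have := Algebra.IsAlgebraic.isAlgebraic (R := F) (⟨y, hy⟩ : E)
    exact this.algHom E.val) (fun n m hnm hN => M.hP n m hnm
      (norm_coprime hp hζ M.hζ M.hμ hμ E hE (div_mem (bsq_mem M.hβ _) (bsq_mem M.hβ _)) (div_ne_zero (M.hb _) (M.hb _)) hN))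
  rw [eq_bot_iff]
  intro y hy
  exact IntermediateField.mem_bot.2 ⟨⟨y, h hy⟩, rfl⟩
end

end Part15

section Part16
set_option linter.all false
open Polynomial Finset
open scoped TensorProduct

section
open Module
lemma kummer_of {p : ℕ} [Fact p.Prime] {K Om L : Type u} [Field K] [Field Om] [Field L] [Algebra K Om] [IsAlgClosed Om] [Algebra K L]
    [CharZero K] {ζ : K} (hζ : IsPrimitiveRoot ζ p)
    (H : ∀ E : IntermediateField K Om, FiniteDimensional K E → (finrank K E).Coprime p → E = ⊥)
    (hL : finrank K L = p) : ∃ (θ : L) (l : K), θ ^ p = algebraMap K L l ∧ ∀ r, θ ≠ algebraMap K L r := by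
  have hp : p.Prime := Fact.out
  haveI : FiniteDimensional K L := FiniteDimensional.of_finrank_pos (by rw [hL]; exact hp.pos)
  let N := IntermediateField.normalClosure K L (AlgebraicClosure L)
  haveI : IsGalois K N := IsGalois.normalClosure K L (AlgebraicClosure L)
  haveI : FiniteDimensional K N := by infer_instance
  let P : Sylow p Gal(N/K) := default
  let M : IntermediateField K N := IntermediateField.fixedField (P : Subgroup Gal(N/K))
  have hM : finrank K M = (P : Subgroup Gal(N/K)).index := by
    rw [IntermediateField.finrank_eq_fixingSubgroup_index, IntermediateField.fixingSubgroup_fixedField]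
  have hMp : (finrank K M).Coprime p := by
    rw [hM, Nat.coprime_comm, hp.coprime_iff_not_dvd]
    exact P.not_dvd_index
  let φ : M →ₐ[K] Om := IsAlgClosed.lift
  have hfr : finrank K φ.fieldRange = finrank K M :=
    (AlgEquiv.ofInjectiveField φ).toLinearEquiv.finrank_eq.symm
  haveI : FiniteDimensional K φ.fieldRange := (AlgEquiv.ofInjectiveField φ).toLinearEquiv.finiteDimensional
  have hbot := H φ.fieldRange inferInstance (by rw [hfr]; exact hMp)
  have hone : (P : Subgroup Gal(N/K)).index = 1 := by
    rw [← hM, ← hfr, hbot, IntermediateField.finrank_bot]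
  obtain ⟨k, hk⟩ := (IsPGroup.iff_card).1 P.2
  have hcard : Nat.card Gal(N/K) = p ^ k := by
    rw [← (P : Subgroup Gal(N/K)).card_mul_index, hone, mul_one]; exact hk
  let ψ : L →ₐ[K] N := IsScalarTower.toAlgHom K L N
  let L' := ψ.fieldRange
  let e : L ≃ₐ[K] L' := AlgEquiv.ofInjectiveField ψ
  have hL' : finrank K L' = p := by rw [← hL]; exact e.toLinearEquiv.finrank_eq.symm
  have hidx : L'.fixingSubgroup.index = p := by rw [← IntermediateField.finrank_eq_fixingSubgroup_index, hL']
  have hk0 : k ≠ 0 := by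
    rintro rfl
    have := L'.fixingSubgroup.index_dvd_card
    rw [hidx, hcard, pow_zero] at this
    exact hp.one_lt.ne' (Nat.dvd_one.1 this)
  have hnorm : L'.fixingSubgroup.Normal := by
    apply Subgroup.normal_of_index_eq_minFac_card
    rw [hidx, hcard, hp.pow_minFac hk0]
  haveI : IsGalois K L' := (InfiniteGalois.normal_iff_isGalois L').1 hnorm
  haveI : IsGalois K L := IsGalois.of_algEquiv e.symm
  haveI : IsCyclic Gal(L/K) := isCyclic_of_prime_card (p := p) (by rw [IsGalois.card_aut_eq_finrank, hL])
  obtain ⟨α, ⟨l, hl⟩, hα⟩ := exists_root_adjoin_eq_top_of_isCyclic K L ⟨ζ, by rw [hL]; exact (mem_primitiveRoots hp.pos).2 hζ⟩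
  rw [hL] at hl
  refine ⟨α, l, hl.symm, ?_⟩
  rintro r rfl
  have : IntermediateField.adjoin K {algebraMap K L r} = ⊥ := IntermediateField.adjoin_simple_eq_bot_iff.2 (IntermediateField.mem_bot.2 ⟨r, rfl⟩)
  rw [this] at hα
  have h2 := IntermediateField.finrank_bot (F := K) (E := L)
  rw [hα, IntermediateField.finrank_top', hL] at h2
  exact hp.one_lt.ne' h2
end

end Part16

section Part17
set_option linter.all false
open Polynomial Finset
open scoped TensorProduct

section
variable {p : ℕ} {Om : Type u} [Field Om] [CharZero Om] {ζ : Om}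

lemma integral_of_pow (hp : p.Prime) {F : Subfield Om} {x : Om} (hxp : x ^ p ∈ F) : IsIntegral F x :=
  ⟨X ^ p - C ⟨x ^ p, hxp⟩, monic_X_pow_sub_C _ hp.ne_zero, by simp; exact sub_self _⟩

lemma adj_le_adjoin (F : Subfield Om) (x : Om) : adj F {x} ≤ (IntermediateField.adjoin F {x}).toSubfield := by
  refine adj_le (fun y hy => (IntermediateField.adjoin F {x}).algebraMap_mem ⟨y, hy⟩) ?_
  rintro y hy
  rw [Set.mem_singleton_iff.1 hy]
  exact IntermediateField.mem_adjoin_simple_self F x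

lemma exists_poly_adj (hp : p.Prime) {F : Subfield Om} {x y : Om} (hxp : x ^ p ∈ F) (hy : y ∈ IntermediateField.adjoin F {x}) :
    ∃ r : F[X], aeval x r = y := by
  rw [← IntermediateField.mem_toSubalgebra, IntermediateField.adjoin_simple_toSubalgebra_of_isAlgebraic
    (integral_of_pow hp hxp).isAlgebraic, Algebra.adjoin_singleton_eq_range_aeval] at hy
  exact hy

lemma finrank_adj (hp : p.Prime) (hζ : IsPrimitiveRoot ζ p) {F : Subfield Om} (hζF : ζ ∈ F) {μ : Om} (hμp : μ ^ p ∈ F) (hμ : μ ∉ F) :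
    Module.finrank F (IntermediateField.adjoin F {μ}) = p := by
  rw [IntermediateField.adjoin.finrank, minpoly_eq_of_not_pow hp (ℓ := (⟨μ ^ p, hμp⟩ : F)) (x := μ) rfl (not_pow_sub hp hζ hζF hμp hμ),
    natDegree_X_pow_sub_C]
  exact integral_of_pow hp hμp

lemma swap_adj (hp : p.Prime) (hζ : IsPrimitiveRoot ζ p) {F : Subfield Om} (hζF : ζ ∈ F) {μ lam : Om} (hμp : μ ^ p ∈ F) (hμ : μ ∉ F)
    (hlp : lam ^ p ∈ F) (hl : lam ∉ F) (h : lam ∈ adj F {μ}) : μ ∈ IntermediateField.adjoin F {lam} := by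
  have h1 := finrank_adj hp hζ hζF hμp hμ
  have h2 := finrank_adj hp hζ hζF hlp hl
  have hle : IntermediateField.adjoin F {lam} ≤ IntermediateField.adjoin F {μ} := by
    rw [IntermediateField.adjoin_simple_le_iff]; exact adj_le_adjoin F μ h
  haveI : FiniteDimensional F (IntermediateField.adjoin F {μ}) := IntermediateField.adjoin.finiteDimensional (integral_of_pow hp hμp)
  rw [IntermediateField.eq_of_le_of_finrank_eq hle (h2.trans h1.symm)]
  exact IntermediateField.mem_adjoin_simple_self F μ

lemma isNm_iff_isN (hp : p.Prime) (hζ : IsPrimitiveRoot ζ p) {F : Subfield Om} (hζF : ζ ∈ F) {x : Om} (hxp : x ^ p ∈ F) (hx : x ∉ F)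
    (c : F) : IsNm p ζ F x c ↔ IsN p (⟨ζ, hζF⟩ : F) ⟨x ^ p, hxp⟩ c := by
  have key : ∀ q : F[X], ∏ i ∈ range p, aeval (ζ ^ i * x) q = c ↔
      (X ^ p - C (⟨x ^ p, hxp⟩ : F)) ∣ (∏ i ∈ range p, q.comp (C ((⟨ζ, hζF⟩ : F) ^ i) * X)) - C c := by
    intro q
    rw [← conj_iff hp hζ hζF hxp hx _ 0, map_sub, sub_eq_zero, map_prod, aeval_C, pow_zero, one_mul]
    have : ∀ i, aeval x (q.comp (C ((⟨ζ, hζF⟩ : F) ^ i) * X)) = aeval (ζ ^ i * x) q := by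
      intro i
      rw [aeval_comp, map_mul, aeval_C, aeval_X, map_pow]; rfl
    rw [prod_congr rfl fun i _ => this i]; rfl
  exact exists_congr key

lemma dvd_of_root (hp : p.Prime) (hζ : IsPrimitiveRoot ζ p) {F : Subfield Om} (hζF : ζ ∈ F) {x : Om} (hxp : x ^ p ∈ F) (hx : x ∉ F)
    {y : Om} {l : F} (hy : y ^ p = l) (h : y ∈ IntermediateField.adjoin F {x}) :
    ∃ r : F[X], X ^ p - C (⟨x ^ p, hxp⟩ : F) ∣ r ^ p - C l := by
  obtain ⟨r, hr⟩ := exists_poly_adj hp hxp h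
  refine ⟨r, ?_⟩
  rw [← conj_iff hp hζ hζF hxp hx _ 0, pow_zero, one_mul, map_sub, map_pow, hr, aeval_C, hy]
  exact sub_self _


noncomputable def MaxF.good [IsAlgClosed Om] [Fact p.Prime] (hζ : IsPrimitiveRoot ζ p) {F : Subfield Om} {μ β : Om} (M : MaxF p ζ μ β F) :
    GoodK p F :=
  have hp : p.Prime := Fact.out
  have hμ := M.hP.not_mem hp hζ M.hμ0 M.hβ
  { cz := inferInstance
    ζ := ⟨ζ, M.hζ⟩
    hζ := zeta_sub hζ M.hζ
    α := ⟨μ ^ p, M.hμ⟩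
    b := fun n => ⟨bsq β n, bsq_mem M.hβ n⟩
    hb := fun n h => M.hb n (congrArg Subtype.val h)
    hb0 := Subtype.ext (by simp [bsq])
    hα := not_pow_sub hp hζ M.hζ M.hμ hμ
    hN := fun n m hnm h => M.hP n m hnm ((isNm_iff_isN hp hζ M.hζ M.hμ hμ _).2 h)
    K1 := fun L _ _ hL => kummer_of (Om := Om) (zeta_sub hζ M.hζ) (fun E _ hE => M.coprime hp hζ E hE) hL
    K2 := by
      rintro ⟨ℓ, hℓ⟩ ⟨c, hc⟩ hnp hc0
      obtain ⟨lam, rfl⟩ := IsAlgClosed.exists_pow_nat_eq ℓ hp.pos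
      have hl : lam ∉ F := fun h => hnp ⟨lam, h⟩ rfl
      have hl0 : lam ≠ 0 := by rintro rfl; exact hl (zero_mem _)
      have hc0' : c ≠ 0 := fun h => hc0 (Subtype.ext h)
      by_cases h1 : lam ∈ adj F {μ}
      · right; left
        exact dvd_of_root hp hζ M.hζ hℓ hl rfl (swap_adj hp hζ M.hζ M.hμ hμ hℓ hl h1)
      by_cases h2 : IsNm p ζ (adj F {μ}) lam c
      · right; right
        obtain ⟨T⟩ := tower_of hp hζ M.hζ M.hμ hμ hℓ h1
        obtain ⟨z, hz⟩ := norm_of_isNm T ⟨c, hc⟩ h2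
        refine ⟨T.N, T.fN, T.aN, T.m, T.l, z, T.τ, T.fr, T.hm, T.hl, T.τm, ?_, ?_, ?_⟩
        · rw [T.τl, Algebra.smul_def]
        · intro v
          rw [T.coe_pow_apply]; exact T.τp (zeta_sub hζ M.hζ) v
        · rw [← hz]
          exact prod_congr rfl fun i _ => T.coe_pow_apply _ _ _
      · left
        exact (isNm_iff_isN hp hζ M.hζ hℓ hl _).1 (M.hc lam c hℓ hl0 hc hc0' h2)
    K3 := by
      rintro ⟨l, hl⟩ ⟨b, hb⟩ hnp hb0
      have hb0' : b ≠ 0 := fun h => hb0 (Subtype.ext h)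
      obtain ⟨lam, hlam⟩ := IsAlgClosed.exists_pow_nat_eq (l / μ ^ p) hp.pos
      have hlp : lam ^ p ∈ F := by rw [hlam]; exact div_mem hl M.hμ
      by_cases h1 : lam ∈ adj F {μ}
      · left
        refine dvd_of_root hp hζ M.hζ M.hμ hμ (y := lam * μ) ?_ (mul_mem (adj_le_adjoin F μ h1) (IntermediateField.mem_adjoin_simple_self F μ))
        rw [mul_pow, hlam, div_mul_cancel₀ _ (pow_ne_zero _ M.hμ0)]
      · right
        obtain ⟨t, ht, h⟩ := M.hlin lam b hlp h1 hb hb0'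
        refine ⟨⟨t, ht⟩, ?_⟩
        have h3 := (isNm_iff_isN hp hζ M.hζ hlp (fun h => h1 (le_adj _ _ h))
          (⟨b, hb⟩ * ((⟨t, ht⟩ : F) ^ p - ⟨μ ^ p, M.hμ⟩))).1 h
        have e : (⟨lam ^ p, hlp⟩ : F) = ⟨l, hl⟩ / ⟨μ ^ p, M.hμ⟩ := Subtype.ext hlam
        rwa [e] at h3 }

theorem final_thm (p : ℕ) (hp : p.Prime) : Nonempty (CommonGenusWitness.{u} p) := by
  haveI : Fact p.Prime := ⟨hp⟩
  haveI : NeZero p := ⟨hp.ne_zero⟩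
  let Om := ULift.{u} ℂ
  haveI : IsAlgClosed Om := by
    apply IsAlgClosed.of_exists_root
    intro q hq hi
    let e : Om ≃+* ℂ := ULift.ringEquiv
    obtain ⟨z, hz⟩ := IsAlgClosed.exists_root (q.map (e : Om →+* ℂ)) (by
      rw [degree_map]; exact hi.degree_pos.ne')
    refine ⟨e.symm z, ?_⟩
    apply e.injective
    have h2 := eval₂_at_apply (p := q) (e : Om →+* ℂ) (e.symm z)
    rw [IsRoot, eval_map] at hz
    have h3 : (e : Om →+* ℂ) (e.symm z) = z := e.apply_symm_apply z
    rw [h3, hz] at h2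
    rw [map_zero]
    exact h2.symm
  haveI : CharZero Om := charZero_of_injective_ringHom (f := ((ULift.ringEquiv.symm : ℂ ≃+* Om) : ℂ →+* Om)) (ULift.ringEquiv.symm : ℂ ≃+* Om).injective
  have hcard : Cardinal.aleph0 < Cardinal.mk Om := by
    rw [Cardinal.mk_uLift, Cardinal.aleph0_lt_lift, Cardinal.mk_complex]
    exact Cardinal.aleph0_lt_continuum
  obtain ⟨x, hx⟩ := exists_indep p hcard
  obtain ⟨ζ, hζ⟩ : ∃ ζ : Om, IsPrimitiveRoot ζ p :=
    ⟨_, (Complex.isPrimitiveRoot_exp p hp.ne_zero).map_of_injective (f := (ULift.ringEquiv.symm : ℂ ≃+* Om)) (ULift.ringEquiv.symm : ℂ ≃+* Om).injective⟩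
  obtain ⟨μ, β, F, M⟩ := exists_MaxF hζ hx
  exact (M.good hζ).witness hp
end

end Part17

/-- for any prime `p` there is a field `K` with infinitely many pairwise
nonisomorphic central division algebras of degree `p`, every degree-`p` extension of `K`
splitting all of them; hence all of them share the same genus. -/
theorem exists_field_with_common_genus (p : ℕ) (hp : p.Prime) :
    Nonempty (CommonGenusWitness.{u} p) := by
  exact final_thm p hp
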